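/- (Regret decomposition.) Fix δ ∈ (0,1) and suppose the constant c_b > 0 in the Q-EarlySettled-Advantage algorithm is sufficiently large. Then with probability at least 1 − δ: Σ_{k=1}^{K} ( V_1^k(s_1^k) − V_1^{π^k}(s_1^k) ) ≤ R_1 + R_2 + R_3, where R_1 = Σ_{h=1}^{H} (1+1/H)^{h−1} ( H·S·A + 8·c_b·H²·(SA)^{3/4}·K^{1/4}·log(SAT/δ) + Σ_{k=1}^{K} (P_{h,s_h^k,a_h^k} − P_h^k)(V_{h+1}^* − V_{h+1}^{π^k}) ); R_2 = Σ_{h=1}^{H} (1+1/H)^{h−1} Σ_{k=1}^{K} B_h^{R,k}(s_h^k, a_h^k); R_3 = Σ_{h=1}^{H} Σ_{k=1}^{K} λ_h^k · ( (P_h^k − P_{h,s_h^k,a_h^k})(V_{h+1}^* − V_{h+1}^{R,k}) + (1/N_h^k(s_h^k,a_h^k)) · Σ_{i=1}^{N_h^k(s_h^k,a_h^k)} ( V_{h+1}^{R,k_h^i(s_h^k,a_h^k)}(s_{h+1}^{k_h^i(s_h^k,a_h^k)}) − P_{h,s_h^k,a_h^k} V_{h+1}^{R,k} ) ); and λ_h^k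 = (1+1/H)^{h−1} · Σ_{n=N_h^k(s_h^k,a_h^k)}^{N_h^{K−1}(s_h^k,a_h^k)} η_{N_h^k(s_h^k,a_h^k)}^{n}. -/

import Mathlib

open MeasureTheory Finset

/-- A finite-horizon MDP with horizon `H`, non-stationary transition kernels `P h s a ·`,
and deterministic rewards `r h s a ∈ [0,1]`. -/
structure MDP (S A : Type) [Fintype S] [Fintype A] where
  H : ℕ
  P : ℕ → S → A → S → ℝ
  r : ℕ → S → A → ℝ
  H_pos : 1 ≤ H
  P_nonneg : ∀ h s a s', 0 ≤ P h s a s'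
  P_sum_one : ∀ h s a, ∑ s', P h s a s' = 1
  r_nonneg : ∀ h s a, 0 ≤ r h s a
  r_le_one : ∀ h s a, r h s a ≤ 1

namespace MDP

variable {S A : Type} [Fintype S] [Fintype A] [Nonempty S] [Nonempty A]

/-- Optimal Q-function, defined by backward induction on the remaining number of steps
(`Qstar` below instantiates the fuel as `H + 1 - h`, so that values at step `H + 1`
vanish and the Bellman optimality equation holds for `1 ≤ h ≤ H`). -/
noncomputable def QstarAux (M : MDP S A) : ℕ → ℕ → S → A → ℝ
  | 0, _, _, _ => 0
  | (fuel + 1), h, s, a =>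
      M.r h s a + ∑ s' : S, M.P h s a s' *
        (Finset.univ.sup' Finset.univ_nonempty fun a' => QstarAux M fuel (h + 1) s' a')

/-- The optimal Q-function `Q_h^⋆`. -/
noncomputable def Qstar (M : MDP S A) (h : ℕ) (s : S) (a : A) : ℝ :=
  QstarAux M (M.H + 1 - h) h s a

/-- The optimal value function `V_h^⋆`. -/
noncomputable def Vstar (M : MDP S A) (h : ℕ) (s : S) : ℝ :=
  Finset.univ.sup' Finset.univ_nonempty fun a => M.Qstar h s a

/-- Value function `V_h^π` of a deterministic policy `π`, by backward induction. -/
noncomputable def VpolAux (M : MDP S A) (π : ℕ → S → A) : ℕ → ℕ → S → ℝ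
  | 0, _, _ => 0
  | (fuel + 1), h, s =>
      M.r h s (π h s) + ∑ s' : S, M.P h s (π h s) s' * VpolAux M π fuel (h + 1) s'

/-- The value function `V_h^π` of a deterministic policy `π`. -/
noncomputable def Vpol (M : MDP S A) (π : ℕ → S → A) (h : ℕ) (s : S) : ℝ :=
  VpolAux M π (M.H + 1 - h) h s

/-- Conditional variance `Var_{h,s,a}(V) = P_{h,s,a}(V²) - (P_{h,s,a} V)²`. -/
noncomputable def varP (M : MDP S A) (h : ℕ) (s : S) (a : A) (V : S → ℝ) : ℝ :=
  (∑ s' : S, M.P h s a s' * (V s') ^ 2) - (∑ s' : S, M.P h s a s' * V s') ^ 2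

end MDP

/-- The Q-learning rate `η_n = (H+1)/(H+n)`. -/
noncomputable def lr (H n : ℕ) : ℝ := (H + 1 : ℝ) / (H + n)

/-- `η_n^N`: equal to `η_n ∏_{i=n+1}^N (1 - η_i)` for `1 ≤ n ≤ N` (hence `η_n` for `N = n`),
`0` for `N < n`, and `η_0^N = ∏_{i=1}^N (1 - η_i)` (which is `1` if `N = 0` and `0` otherwise,
since `1 - η_1 = 0`). -/
noncomputable def lrProd (H n N : ℕ) : ℝ :=
  if N < n then 0
  else (if n = 0 then 1 else lr H n) * ∏ i ∈ Finset.Icc (n + 1) N, (1 - lr H i)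

/-- The log factor `log(SAT/δ)` with `T = KH`. -/
noncomputable def iota (S A : Type) [Fintype S] [Fintype A] (K H : ℕ) (δ : ℝ) : ℝ :=
  Real.log ((Fintype.card S : ℝ) * (Fintype.card A) * (K * H) / δ)

/-- The trajectory `(s_h^k, a_h^k)` is generated by online interaction with the MDP `M`:
states and actions are adapted to the filtration `𝓕` (with time index `(k-1)H + h`
corresponding to step `h` of episode `k`), and conditionally on the history,
`s_{h+1}^k ∼ P_h(· | s_h^k, a_h^k)`. -/
def IsMDPTrajectory {S A : Type} [Fintype S] [Fintype A] [DecidableEq S]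
    [MeasurableSpace S] [MeasurableSpace A]
    {Ω : Type} [m0 : MeasurableSpace Ω] (μ : Measure Ω)
    (M : MDP S A) (K : ℕ) (𝓕 : Filtration ℕ m0)
    (st : ℕ → ℕ → Ω → S) (ac : ℕ → ℕ → Ω → A) : Prop :=
  (∀ k ∈ Finset.Icc 1 K, ∀ h ∈ Finset.Icc 1 (M.H + 1),
      Measurable[𝓕 ((k - 1) * M.H + h)] (st k h)) ∧
  (∀ k ∈ Finset.Icc 1 K, ∀ h ∈ Finset.Icc 1 M.H,
      Measurable[𝓕 ((k - 1) * M.H + h)] (ac k h)) ∧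
  (∀ k ∈ Finset.Icc 1 K, ∀ h ∈ Finset.Icc 1 M.H, ∀ s' : S,
      μ[(fun ω => if st k (h + 1) ω = s' then (1 : ℝ) else 0) | 𝓕 ((k - 1) * M.H + h)]
        =ᵐ[μ] fun ω => M.P h (st k h ω) (ac k h ω) s')

/-- The **Q-EarlySettled-Advantage** algorithm (Algorithms 1–2 of the paper), run for `K`
episodes on the MDP `M` with bonus constant `cb` and failure probability `δ`.
The fields record the trajectory `(s_h^k, a_h^k)`, the greedy policies `π^k`, the visit
counters, all Q/value estimates and auxiliary statistics, together with the initialization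
and update equations defining the algorithm.  A quantity carrying episode index `k`
denotes its value at the *beginning* of episode `k` (`N k` is the counter at the *end*
of episode `k`, with `N 0 = 0`); `kvis n h s a` is the episode of the `n`-th visit of
`(s,a)` at step `h`. -/
structure QLAlg {S A : Type} [Fintype S] [Fintype A] [Nonempty S] [Nonempty A]
    [DecidableEq S] [DecidableEq A] (M : MDP S A) (K : ℕ) (cb δ : ℝ) where
  /-- `s_h^k` : the state visited at step `h` of episode `k` -/
  st : ℕ → ℕ → S
  /-- `a_h^k` : the action taken at step `h` of episode `k` -/
  ac : ℕ → ℕ → A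
  /-- `π^k` : the greedy policy executed during episode `k` -/
  pol : ℕ → ℕ → S → A
  /-- `N_h^k(s,a)` : number of visits of `(s,a)` at step `h` by the end of episode `k` -/
  N : ℕ → ℕ → S → A → ℕ
  /-- the combined Q-estimate `Q_h^k` -/
  Q : ℕ → ℕ → S → A → ℝ
  /-- the Hoeffding-bonus optimistic estimate `Q_h^{UCB,k}` -/
  QUCB : ℕ → ℕ → S → A → ℝ
  /-- the pessimistic estimate `Q_h^{LCB,k}` -/
  QLCB : ℕ → ℕ → S → A → ℝ
  /-- the reference-advantage estimate `Q_h^{R,k}` -/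
  QR : ℕ → ℕ → S → A → ℝ
  /-- `V_h^k` -/
  V : ℕ → ℕ → S → ℝ
  /-- `V_h^{LCB,k}` -/
  VLCB : ℕ → ℕ → S → ℝ
  /-- the reference value `V_h^{R,k}` -/
  VR : ℕ → ℕ → S → ℝ
  /-- the flag `u_ref^k` governing the final reference update -/
  uref : ℕ → ℕ → S → Prop
  /-- running mean `μ_h^{ref,k}` of the reference -/
  muRef : ℕ → ℕ → S → A → ℝ
  /-- running second moment `σ_h^{ref,k}` of the reference -/
  sigRef : ℕ → ℕ → S → A → ℝ
  /-- running weighted mean `μ_h^{adv,k}` of the advantage -/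
  muAdv : ℕ → ℕ → S → A → ℝ
  /-- running weighted second moment `σ_h^{adv,k}` of the advantage -/
  sigAdv : ℕ → ℕ → S → A → ℝ
  /-- the aggregated bonus `B_h^{R,k}` -/
  BR : ℕ → ℕ → S → A → ℝ
  /-- the bonus difference `δ_h^{R,k}` -/
  dR : ℕ → ℕ → S → A → ℝ
  /-- `bR k h` : the exploration bonus `b_h^R` computed at step `h` of episode `k` -/
  bR : ℕ → ℕ → ℝ
  /-- `kvis n h s a = k_h^n(s,a)` : the episode of the `n`-th visit of `(s,a)` at step `h` -/
  kvis : ℕ → ℕ → S → A → ℕ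
  greedy : ∀ k h s a, Q k h s a ≤ Q k h s (pol k h s)
  act_eq : ∀ k h, ac k h = pol k h (st k h)
  N_init : ∀ h s a, N 0 h s a = 0
  N_upd : ∀ k ∈ Icc 1 K, ∀ h ∈ Icc 1 M.H, ∀ s a,
    N k h s a = N (k - 1) h s a + (if s = st k h ∧ a = ac k h then 1 else 0)
  Q_init : ∀ h ∈ Icc 1 M.H, ∀ s a, Q 1 h s a = M.H
  QUCB_init : ∀ h ∈ Icc 1 M.H, ∀ s a, QUCB 1 h s a = M.H
  QR_init : ∀ h ∈ Icc 1 M.H, ∀ s a, QR 1 h s a = M.H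
  QLCB_init : ∀ h ∈ Icc 1 M.H, ∀ s a, QLCB 1 h s a = 0
  V_init : ∀ h ∈ Icc 1 M.H, ∀ s, V 1 h s = M.H
  VR_init : ∀ h ∈ Icc 1 M.H, ∀ s, VR 1 h s = M.H
  VLCB_init : ∀ h ∈ Icc 1 M.H, ∀ s, VLCB 1 h s = 0
  uref_init : ∀ h s, uref 1 h s
  mom_init : ∀ h s a, muRef 1 h s a = 0 ∧ sigRef 1 h s a = 0 ∧ muAdv 1 h s a = 0 ∧
    sigAdv 1 h s a = 0 ∧ BR 1 h s a = 0 ∧ dR 1 h s a = 0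
  V_terminal : ∀ k s, V k (M.H + 1) s = 0 ∧ VR k (M.H + 1) s = 0 ∧ VLCB k (M.H + 1) s = 0
  QUCB_upd : ∀ k ∈ Icc 1 K, ∀ h ∈ Icc 1 M.H, ∀ s a,
    QUCB (k + 1) h s a =
      if s = st k h ∧ a = ac k h then
        (1 - lr M.H (N k h s a)) * QUCB k h s a
          + lr M.H (N k h s a) *
            (M.r h s a + V k (h + 1) (st k (h + 1))
              + cb * Real.sqrt ((M.H : ℝ) ^ 3 * iota S A K M.H δ / (N k h s a)))
      else QUCB k h s a
  QLCB_upd : ∀ k ∈ Icc 1 K, ∀ h ∈ Icc 1 M.H, ∀ s a,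
    QLCB (k + 1) h s a =
      if s = st k h ∧ a = ac k h then
        (1 - lr M.H (N k h s a)) * QLCB k h s a
          + lr M.H (N k h s a) *
            (M.r h s a + VLCB k (h + 1) (st k (h + 1))
              - cb * Real.sqrt ((M.H : ℝ) ^ 3 * iota S A K M.H δ / (N k h s a)))
      else QLCB k h s a
  muRef_upd : ∀ k ∈ Icc 1 K, ∀ h ∈ Icc 1 M.H, ∀ s a,
    muRef (k + 1) h s a =
      if s = st k h ∧ a = ac k h then
        (1 - 1 / (N k h s a : ℝ)) * muRef k h s a
          + (1 / (N k h s a : ℝ)) * VR k (h + 1) (st k (h + 1))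
      else muRef k h s a
  sigRef_upd : ∀ k ∈ Icc 1 K, ∀ h ∈ Icc 1 M.H, ∀ s a,
    sigRef (k + 1) h s a =
      if s = st k h ∧ a = ac k h then
        (1 - 1 / (N k h s a : ℝ)) * sigRef k h s a
          + (1 / (N k h s a : ℝ)) * (VR k (h + 1) (st k (h + 1))) ^ 2
      else sigRef k h s a
  muAdv_upd : ∀ k ∈ Icc 1 K, ∀ h ∈ Icc 1 M.H, ∀ s a,
    muAdv (k + 1) h s a =
      if s = st k h ∧ a = ac k h then
        (1 - lr M.H (N k h s a)) * muAdv k h s a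
          + lr M.H (N k h s a) * (V k (h + 1) (st k (h + 1)) - VR k (h + 1) (st k (h + 1)))
      else muAdv k h s a
  sigAdv_upd : ∀ k ∈ Icc 1 K, ∀ h ∈ Icc 1 M.H, ∀ s a,
    sigAdv (k + 1) h s a =
      if s = st k h ∧ a = ac k h then
        (1 - lr M.H (N k h s a)) * sigAdv k h s a
          + lr M.H (N k h s a) *
              (V k (h + 1) (st k (h + 1)) - VR k (h + 1) (st k (h + 1))) ^ 2
      else sigAdv k h s a
  BR_upd : ∀ k ∈ Icc 1 K, ∀ h ∈ Icc 1 M.H, ∀ s a,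
    BR (k + 1) h s a =
      if s = st k h ∧ a = ac k h then
        cb * Real.sqrt (iota S A K M.H δ / (N k h s a)) *
          (Real.sqrt (sigRef (k + 1) h s a - (muRef (k + 1) h s a) ^ 2)
            + Real.sqrt (M.H) * Real.sqrt (sigAdv (k + 1) h s a - (muAdv (k + 1) h s a) ^ 2))
      else BR k h s a
  dR_upd : ∀ k ∈ Icc 1 K, ∀ h ∈ Icc 1 M.H, ∀ s a,
    dR (k + 1) h s a =
      if s = st k h ∧ a = ac k h then BR (k + 1) h s a - BR k h s a else dR k h s a
  bR_def : ∀ k ∈ Icc 1 K, ∀ h ∈ Icc 1 M.H,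
    bR k h = BR (k + 1) h (st k h) (ac k h)
      + (1 - lr M.H (N k h (st k h) (ac k h))) * dR (k + 1) h (st k h) (ac k h)
          / lr M.H (N k h (st k h) (ac k h))
      + cb * (M.H : ℝ) ^ 2 * iota S A K M.H δ
          / (N k h (st k h) (ac k h) : ℝ) ^ ((3 : ℝ) / 4)
  QR_upd : ∀ k ∈ Icc 1 K, ∀ h ∈ Icc 1 M.H, ∀ s a,
    QR (k + 1) h s a =
      if s = st k h ∧ a = ac k h then
        (1 - lr M.H (N k h s a)) * QR k h s a
          + lr M.H (N k h s a) *
            (M.r h s a + V k (h + 1) (st k (h + 1)) - VR k (h + 1) (st k (h + 1))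
              + muRef (k + 1) h s a + bR k h)
      else QR k h s a
  Q_upd : ∀ k ∈ Icc 1 K, ∀ h ∈ Icc 1 M.H, ∀ s a,
    Q (k + 1) h s a =
      if s = st k h ∧ a = ac k h then
        min (QR (k + 1) h s a) (min (QUCB (k + 1) h s a) (Q k h s a))
      else Q k h s a
  V_upd : ∀ k ∈ Icc 1 K, ∀ h ∈ Icc 1 M.H, ∀ s,
    V (k + 1) h s =
      if s = st k h then Finset.univ.sup' Finset.univ_nonempty (fun a => Q (k + 1) h s a)
      else V k h s
  VLCB_upd : ∀ k ∈ Icc 1 K, ∀ h ∈ Icc 1 M.H, ∀ s,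
    VLCB (k + 1) h s =
      if s = st k h then
        max (Finset.univ.sup' Finset.univ_nonempty (fun a => QLCB (k + 1) h s a)) (VLCB k h s)
      else VLCB k h s
  VR_upd_pos : ∀ k ∈ Icc 1 K, ∀ h ∈ Icc 1 M.H,
    (1 < V (k + 1) h (st k h) - VLCB (k + 1) h (st k h) ∨ uref k h (st k h)) →
      VR (k + 1) h (st k h) = V (k + 1) h (st k h)
  VR_upd_neg : ∀ k ∈ Icc 1 K, ∀ h ∈ Icc 1 M.H,
    ¬(1 < V (k + 1) h (st k h) - VLCB (k + 1) h (st k h) ∨ uref k h (st k h)) →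
      VR (k + 1) h (st k h) = VR k h (st k h)
  VR_upd_other : ∀ k ∈ Icc 1 K, ∀ h ∈ Icc 1 M.H, ∀ s, s ≠ st k h →
    VR (k + 1) h s = VR k h s
  uref_upd_pos : ∀ k ∈ Icc 1 K, ∀ h ∈ Icc 1 M.H,
    1 < V (k + 1) h (st k h) - VLCB (k + 1) h (st k h) → uref (k + 1) h (st k h)
  uref_upd_neg : ∀ k ∈ Icc 1 K, ∀ h ∈ Icc 1 M.H,
    ¬(1 < V (k + 1) h (st k h) - VLCB (k + 1) h (st k h)) → ¬uref (k + 1) h (st k h)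
  uref_upd_other : ∀ k ∈ Icc 1 K, ∀ h ∈ Icc 1 M.H, ∀ s, s ≠ st k h →
    (uref (k + 1) h s ↔ uref k h s)
  kvis_spec : ∀ h ∈ Icc 1 M.H, ∀ s a n, 1 ≤ n → n ≤ N K h s a →
    kvis n h s a ∈ Icc 1 K ∧ N (kvis n h s a) h s a = n ∧
      st (kvis n h s a) h = s ∧ ac (kvis n h s a) h = a

section RegretTerms

variable {S A : Type} [Fintype S] [Fintype A] [Nonempty S] [Nonempty A]
  [DecidableEq S] [DecidableEq A]

/-- The term `R₁` of the regret decomposition (eq. (41a) of the paper):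
`R₁ = ∑_{h=1}^H (1+1/H)^{h-1} (HSA + 8 c_b H² (SA)^{3/4} K^{1/4} log(SAT/δ)
      + ∑_{k=1}^K (P_{h,s_h^k,a_h^k} - P_h^k)(V⋆_{h+1} - V^{π^k}_{h+1}))`. -/
noncomputable def regR1 (M : MDP S A) (K : ℕ) (cb δ : ℝ) (al : QLAlg M K cb δ) : ℝ :=
  ∑ h ∈ Icc 1 M.H, (1 + 1 / (M.H : ℝ)) ^ (h - 1) *
    ((M.H : ℝ) * (Fintype.card S) * (Fintype.card A)
      + 8 * cb * (M.H : ℝ) ^ 2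
          * ((Fintype.card S : ℝ) * (Fintype.card A : ℝ)) ^ ((3 : ℝ) / 4)
          * (K : ℝ) ^ ((1 : ℝ) / 4) * iota S A K M.H δ
      + ∑ k ∈ Icc 1 K,
          ((∑ s', M.P h (al.st k h) (al.ac k h) s'
              * (M.Vstar (h + 1) s' - M.Vpol (al.pol k) (h + 1) s'))
            - (M.Vstar (h + 1) (al.st k (h + 1))
                - M.Vpol (al.pol k) (h + 1) (al.st k (h + 1)))))

/-- The term `R₂` of the regret decomposition (eq. (41b) of the paper):
`R₂ = ∑_{h=1}^H (1+1/H)^{h-1} ∑_{k=1}^K B_h^{R,k}(s_h^k, a_h^k)`. -/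
noncomputable def regR2 (M : MDP S A) (K : ℕ) (cb δ : ℝ) (al : QLAlg M K cb δ) : ℝ :=
  ∑ h ∈ Icc 1 M.H, (1 + 1 / (M.H : ℝ)) ^ (h - 1) *
    ∑ k ∈ Icc 1 K, al.BR k h (al.st k h) (al.ac k h)

/-- The weight `λ_h^k = (1+1/H)^{h-1} ∑_{n=N_h^k(s_h^k,a_h^k)}^{N_h^{K-1}(s_h^k,a_h^k)}
η_{N_h^k(s_h^k,a_h^k)}^n` of the paper. -/
noncomputable def regLambda (M : MDP S A) (K : ℕ) (cb δ : ℝ) (al : QLAlg M K cb δ)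
    (h k : ℕ) : ℝ :=
  (1 + 1 / (M.H : ℝ)) ^ (h - 1) *
    ∑ n ∈ Icc (al.N k h (al.st k h) (al.ac k h)) (al.N (K - 1) h (al.st k h) (al.ac k h)),
      lrProd M.H (al.N k h (al.st k h) (al.ac k h)) n

/-- The term `R₃` of the regret decomposition (eq. (41c) of the paper):
`R₃ = ∑_{h=1}^H ∑_{k=1}^K λ_h^k ((P_h^k - P_{h,s_h^k,a_h^k})(V⋆_{h+1} - V^{R,k}_{h+1})
  + (1/N_h^k) ∑_{i=1}^{N_h^k} (V^{R,k_h^i}_{h+1}(s_{h+1}^{k_h^i}) - P_{h,s_h^k,a_h^k} V^{R,k}_{h+1}))`. -/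
noncomputable def regR3 (M : MDP S A) (K : ℕ) (cb δ : ℝ) (al : QLAlg M K cb δ) : ℝ :=
  ∑ h ∈ Icc 1 M.H, ∑ k ∈ Icc 1 K,
    regLambda M K cb δ al h k *
      (((M.Vstar (h + 1) (al.st k (h + 1)) - al.VR k (h + 1) (al.st k (h + 1)))
          - ∑ s', M.P h (al.st k h) (al.ac k h) s'
              * (M.Vstar (h + 1) s' - al.VR k (h + 1) s'))
        + (∑ i ∈ Icc 1 (al.N k h (al.st k h) (al.ac k h)),
            (al.VR (al.kvis i h (al.st k h) (al.ac k h)) (h + 1)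
                (al.st (al.kvis i h (al.st k h) (al.ac k h)) (h + 1))
              - ∑ s', M.P h (al.st k h) (al.ac k h) s' * al.VR k (h + 1) s'))
            / (al.N k h (al.st k h) (al.ac k h) : ℝ))

end RegretTerms

namespace QES

lemma lr_succ (H n : ℕ) : 1 - lr H (n + 1) = (n : ℝ) / (H + n + 1) := by
  unfold lr
  have : (H : ℝ) + n + 1 > 0 := by positivity
  push_cast
  rw [← add_assoc]
  field_simp
  ring

lemma lr_one (H : ℕ) : lr H 1 = 1 := by
  unfold lr
  have : (H : ℝ) + 1 > 0 := by positivity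
  push_cast
  field_simp

lemma lr_pos (H n : ℕ) (hn : 1 ≤ n) : 0 < lr H n := by
  unfold lr
  have : (1 : ℝ) ≤ n := by exact_mod_cast hn
  positivity

lemma lrProd_self (H n : ℕ) (hn : 1 ≤ n) : lrProd H n n = lr H n := by
  unfold lrProd
  have : n ≠ 0 := by omega
  simp [this]

lemma lrProd_zero_zero (H : ℕ) : lrProd H 0 0 = 1 := by
  unfold lrProd
  simp

lemma lrProd_gt (H n N : ℕ) (hn : N < n) : lrProd H n N = 0 := by
  unfold lrProd
  simp [hn]

lemma lrProd_succ (H n N : ℕ) (hn : n ≤ N) :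
    lrProd H n (N + 1) = (1 - lr H (N + 1)) * lrProd H n N := by
  unfold lrProd
  have h1 : ¬ (N + 1 < n) := by omega
  have h2 : ¬ (N < n) := by omega
  rw [if_neg h1, if_neg h2, Finset.prod_Icc_succ_top (by omega)]
  ring

lemma lrProd_zero_pos (H N : ℕ) (hN : 1 ≤ N) : lrProd H 0 N = 0 := by
  induction N, hN using Nat.le_induction with
  | base => rw [lrProd_succ H 0 0 le_rfl]; simp [lr_one]
  | succ N hN ih => rw [lrProd_succ H 0 N (by omega), ih, mul_zero]

lemma lrProd_nonneg (H n N : ℕ) : 0 ≤ lrProd H n N := by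
  by_cases h : N < n
  · rw [lrProd_gt _ _ _ h]
  · push Not at h
    induction N, h using Nat.le_induction with
    | base =>
      rcases Nat.eq_zero_or_pos n with rfl | hn
      · rw [lrProd_zero_zero]; norm_num
      · rw [lrProd_self _ _ hn]; exact (lr_pos _ _ hn).le
    | succ N hN ih =>
      rw [lrProd_succ _ _ _ hN, lr_succ]
      positivity

lemma lrProd_sum (H N : ℕ) (hN : 1 ≤ N) : ∑ n ∈ Icc 1 N, lrProd H n N = 1 := by
  induction N, hN using Nat.le_induction with
  | base => simp [lrProd_self, lr_one]
  | succ N hN ih =>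
    rw [Finset.sum_Icc_succ_top (by omega), lrProd_self _ _ (by omega)]
    rw [Finset.sum_congr rfl (fun n hn => lrProd_succ H n N (Finset.mem_Icc.1 hn).2),
      ← Finset.mul_sum, ih]
    ring

lemma lrProd_le (H n N : ℕ) (hH : 1 ≤ H) (hn : 1 ≤ n) (hnN : n ≤ N) :
    lrProd H n N ≤ 2 * H / N := by
  have hH' : (1 : ℝ) ≤ H := by exact_mod_cast hH
  induction N, hnN using Nat.le_induction with
  | base =>
    rw [lrProd_self _ _ hn]
    unfold lr
    have : (1 : ℝ) ≤ n := by exact_mod_cast hn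
    rw [div_le_div_iff₀ (by positivity) (by positivity)]
    nlinarith
  | succ N hN ih =>
    have h1 : (1 : ℝ) ≤ N := by exact_mod_cast (le_trans hn hN)
    rw [lrProd_succ _ _ _ hN, lr_succ]
    calc (N : ℝ) / (H + N + 1) * lrProd H n N ≤ (N : ℝ) / (H + N + 1) * (2 * H / N) := by
          gcongr
      _ = 2 * H / (H + N + 1) := by field_simp
      _ ≤ 2 * H / ((N + 1 : ℕ) : ℝ) := by
          push_cast
          apply div_le_div_of_nonneg_left <;> linarith

lemma lrProd_wsum_le (H N : ℕ) (hH : 1 ≤ H) (hN : 1 ≤ N) (b : ℕ → ℝ) (hb : ∀ n, 0 ≤ b n)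
    (hmono : ∀ n : ℕ, (n : ℝ) * b n ≤ (n + 1 : ℝ) * b (n + 1)) :
    ∑ n ∈ Icc 1 N, lrProd H n N * b n ≤ 2 * b N := by
  have hH' : (1 : ℝ) ≤ H := by exact_mod_cast hH
  induction N, hN using Nat.le_induction with
  | base => simp [lrProd_self, lr_one]; linarith [hb 1]
  | succ N hN ih =>
    rw [Finset.sum_Icc_succ_top (by omega), lrProd_self _ _ (by omega)]
    have e : ∑ n ∈ Icc 1 N, lrProd H n (N + 1) * b n
        = (1 - lr H (N + 1)) * ∑ n ∈ Icc 1 N, lrProd H n N * b n := by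
      rw [Finset.mul_sum]
      refine Finset.sum_congr rfl (fun n hn => ?_)
      rw [lrProd_succ H n N (Finset.mem_Icc.1 hn).2]; ring
    rw [e, lr_succ]
    have hp : (0 : ℝ) < H + N + 1 := by positivity
    have h1 : (N : ℝ) / (H + N + 1) * ∑ n ∈ Icc 1 N, lrProd H n N * b n
        ≤ (N : ℝ) / (H + N + 1) * (2 * b N) := by gcongr
    have h2 : (N : ℝ) / (H + N + 1) * (2 * b N) ≤ 2 * ((N + 1) * b (N + 1)) / (H + N + 1) := by
      rw [div_mul_eq_mul_div]
      exact div_le_div_of_nonneg_right (by linarith [hmono N]) hp.le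
    have h3 : lr H (N + 1) * b (N + 1) = (H + 1) * b (N + 1) / (H + N + 1) := by
      unfold lr; push_cast; rw [← add_assoc]; ring
    have h4 : 2 * ((N + 1 : ℝ) * b (N + 1)) / (H + N + 1) + (H + 1) * b (N + 1) / (H + N + 1)
        ≤ 2 * b (N + 1) := by
      rw [← add_div, div_le_iff₀ hp]
      nlinarith [hb (N + 1)]
    linarith

lemma lrProd_wsum_ge (H N : ℕ) (hN : 1 ≤ N) (b : ℕ → ℝ) 
    (hmono : ∀ n ∈ Icc 1 N, b N ≤ b n) :
    b N ≤ ∑ n ∈ Icc 1 N, lrProd H n N * b n := by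
  calc b N = ∑ n ∈ Icc 1 N, lrProd H n N * b N := by
        rw [← Finset.sum_mul, lrProd_sum _ _ hN, one_mul]
    _ ≤ _ := Finset.sum_le_sum (fun n hn =>
        mul_le_mul_of_nonneg_left (hmono n hn) (lrProd_nonneg _ _ _))

lemma lrProd_tail (H n M : ℕ) (hH : 1 ≤ H) (hn : 1 ≤ n) (hM : n ≤ M) :
    ∑ N ∈ Icc n M, lrProd H n N + lrProd H n M * (M / H) = 1 + 1 / (H : ℝ) := by
  have hH' : (0 : ℝ) < H := by exact_mod_cast hH
  induction M, hM using Nat.le_induction with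
  | base =>
    have : (0 : ℝ) < n := by exact_mod_cast hn
    simp only [Finset.Icc_self, Finset.sum_singleton]
    rw [lrProd_self _ _ hn]; unfold lr
    field_simp
  | succ M hM ih =>
    rw [Finset.sum_Icc_succ_top (by omega), ← ih, lrProd_succ _ _ _ hM, lr_succ]
    push_cast
    field_simp
    ring

lemma lrProd_tail_le (H n M : ℕ) (hH : 1 ≤ H) (hn : 1 ≤ n) :
    ∑ N ∈ Icc n M, lrProd H n N ≤ 1 + 1 / (H : ℝ) := by
  by_cases hM : n ≤ M
  · have := lrProd_tail H n M hH hn hM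
    have h2 : 0 ≤ lrProd H n M * ((M : ℝ) / H) := mul_nonneg (lrProd_nonneg _ _ _) (by positivity)
    linarith
  · rw [Finset.Icc_eq_empty hM]; simp; positivity

/-- `n^{-3/4}`. -/
noncomputable def b34 (n : ℕ) : ℝ := 1 / (n : ℝ) ^ ((3 : ℝ) / 4)

lemma b34_nonneg (n : ℕ) : 0 ≤ b34 n := by unfold b34; positivity

lemma n_mul_b34 (n : ℕ) : (n : ℝ) * b34 n = (n : ℝ) ^ ((1 : ℝ) / 4) := by
  unfold b34
  rcases Nat.eq_zero_or_pos n with rfl | hn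
  · simp
  · have : (0 : ℝ) < n := by exact_mod_cast hn
    rw [mul_one_div, div_eq_iff (by positivity), ← Real.rpow_add this]
    norm_num

lemma b34_mono (n : ℕ) : (n : ℝ) * b34 n ≤ (n + 1 : ℝ) * b34 (n + 1) := by
  have := n_mul_b34 (n + 1)
  push_cast at this
  rw [n_mul_b34, this]
  gcongr
  linarith

lemma b34_anti (n N : ℕ) (hn : 1 ≤ n) (hN : n ≤ N) : b34 N ≤ b34 n := by
  unfold b34
  have : (0 : ℝ) < n := by exact_mod_cast hn
  gcongr

lemma b34_sq (n : ℕ) : b34 n ^ 2 = 1 / (n : ℝ) * Real.sqrt (1 / n) := by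
  unfold b34
  rcases Nat.eq_zero_or_pos n with rfl | hn
  · simp
  · have : (0 : ℝ) < n := by exact_mod_cast hn
    rw [Real.sqrt_eq_rpow, Real.div_rpow (by norm_num) this.le, Real.one_rpow, div_pow, one_pow,
      div_mul_div_comm, one_mul, ← Real.rpow_natCast, ← Real.rpow_mul this.le]
    nth_rewrite 2 [← Real.rpow_one (n : ℝ)]
    rw [← Real.rpow_add this]
    norm_num

lemma sum_b34 (M : ℕ) (hM : 1 ≤ M) :
    ∑ m ∈ Icc 1 M, b34 m + 3 ≤ 4 * (M : ℝ) ^ ((1 : ℝ) / 4) := by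
  induction M, hM using Nat.le_induction with
  | base => simp [b34]; norm_num
  | succ M hM ih =>
    rw [Finset.sum_Icc_succ_top (by omega)]
    set u : ℝ := ((M + 1 : ℕ) : ℝ) ^ ((1 : ℝ) / 4) with hu
    set v : ℝ := (M : ℝ) ^ ((1 : ℝ) / 4) with hv
    have hu0 : 0 < u := by positivity
    have hv0 : 0 ≤ v := by positivity
    have hvu : v ≤ u := by rw [hu, hv]; gcongr; omega
    have hu4 : u ^ 4 = M + 1 := by
      rw [hu, ← Real.rpow_natCast, ← Real.rpow_mul (by positivity)]; norm_num
    have hv4 : v ^ 4 = M := by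
      rw [hv, ← Real.rpow_natCast, ← Real.rpow_mul (by positivity)]; norm_num
    have hb : b34 (M + 1) = 1 / u ^ 3 := by
      unfold b34
      rw [hu, ← Real.rpow_natCast, ← Real.rpow_mul (by positivity)]; norm_num
    have h1 : b34 (M + 1) ≤ 4 * (u - v) := by
      rw [hb, div_le_iff₀ (by positivity)]
      have : 1 = (u - v) * (u ^ 3 + u ^ 2 * v + u * v ^ 2 + v ^ 3) := by
        linear_combination hv4 - hu4
      rw [this]
      have h2 : u ^ 3 + u ^ 2 * v + u * v ^ 2 + v ^ 3 ≤ 4 * u ^ 3 := by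
        have a1 : u ^ 2 * v ≤ u ^ 2 * u := by gcongr
        have a2 : u * v ^ 2 ≤ u * u ^ 2 := by gcongr
        have a3 : v ^ 3 ≤ u ^ 3 := by gcongr
        nlinarith
      nlinarith [mul_le_mul_of_nonneg_left h2 (sub_nonneg.2 hvu)]
    linarith

lemma sum_b34' (N : ℕ) (hN : 1 ≤ N) :
    ∑ m ∈ Icc 1 (N - 1), b34 m + 3 ≤ 4 * (N : ℝ) ^ ((1 : ℝ) / 4) := by
  rcases Nat.lt_or_ge 1 N with h | h
  · have h1 := sum_b34 (N - 1) (by omega)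
    have h2 : (((N - 1 : ℕ)) : ℝ) ^ ((1 : ℝ) / 4) ≤ (N : ℝ) ^ ((1 : ℝ) / 4) := by
      gcongr; omega
    linarith
  · have : N = 1 := by omega
    subst this; simp; norm_num

lemma holder14 {ι : Type*} (s : Finset ι) (n : ι → ℝ) (hn : ∀ i, 0 ≤ n i) :
    ∑ i ∈ s, (n i) ^ ((1 : ℝ) / 4) ≤ (s.card : ℝ) ^ ((3 : ℝ) / 4) * (∑ i ∈ s, n i) ^ ((1 : ℝ) / 4) := by
  have h := Real.inner_le_Lp_mul_Lq s (fun _ => (1 : ℝ)) (fun i => (n i) ^ ((1 : ℝ) / 4))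
    (p := 4 / 3) (q := 4) (by constructor <;> norm_num)
  simp only [one_mul, abs_one, Real.one_rpow, Finset.sum_const, nsmul_eq_mul, mul_one] at h
  have e : ∀ i, |(n i) ^ ((1 : ℝ) / 4)| ^ (4 : ℝ) = n i := by
    intro i
    rw [abs_of_nonneg (Real.rpow_nonneg (hn i) _), ← Real.rpow_mul (hn i)]; norm_num
  simp only [e] at h
  convert h using 3
  norm_num

end QES

namespace QES

lemma conc_opt (K : ℕ) (H y v A : ℝ) (hH : 1 ≤ H) (hy : 0 < y) (hv : 0 ≤ v)
    (hv2 : v ≤ 4 * H ^ 2) (hK : 1 < 4 * K * y)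
    (hA : ∀ m ∈ Icc 1 K, A ≤ v / (4 * H * Real.sqrt m) + 4 * H * Real.sqrt m * y) :
    A ≤ 2 * Real.sqrt (v * y) + 4 * H * y := by
  set r : ℝ := v / (16 * H ^ 2 * y) with hr
  have hr0 : 0 ≤ r := by positivity
  have hrK : r < K := by
    rw [hr, div_lt_iff₀ (by positivity)]
    nlinarith [sq_nonneg H, mul_pos (show (0:ℝ) < H ^ 2 by positivity) (sub_pos.2 hK)]
  set m : ℕ := ⌊r⌋₊ + 1 with hm
  have hm1 : r ≤ m := by
    have := (Nat.lt_floor_add_one r).le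
    rw [hm]; push_cast; exact this
  have hm2 : (m : ℝ) ≤ r + 1 := by
    have := Nat.floor_le hr0
    rw [hm]; push_cast; linarith
  have hmK : m ∈ Icc 1 K := by
    rw [Finset.mem_Icc]
    have := (Nat.floor_lt hr0).2 hrK
    omega
  have hmpos : (0 : ℝ) < m := by rw [hm]; positivity
  have h := hA m hmK
  have hveq : v = 16 * H ^ 2 * y * r := by rw [hr]; field_simp
  have hsvy : Real.sqrt (v * y) = 4 * H * y * Real.sqrt r := by
    rw [hveq, show 16 * H ^ 2 * y * r * y = (4 * H * y) ^ 2 * r by ring,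
      Real.sqrt_mul (by positivity), Real.sqrt_sq (by positivity)]
  have h1 : v / (4 * H * Real.sqrt m) ≤ Real.sqrt (v * y) := by
    rw [div_le_iff₀ (by positivity), hsvy, hveq]
    have h3 : Real.sqrt r * Real.sqrt r = r := Real.mul_self_sqrt hr0
    have h4 : Real.sqrt r ≤ Real.sqrt m := Real.sqrt_le_sqrt hm1
    have h5 : Real.sqrt r * Real.sqrt r ≤ Real.sqrt r * Real.sqrt m := by gcongr
    have h6 : 16 * H ^ 2 * y * (Real.sqrt r * Real.sqrt r) ≤ 16 * H ^ 2 * y * (Real.sqrt r * Real.sqrt m) := by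
      gcongr
    rw [h3] at h6
    calc _ ≤ _ := h6
      _ = _ := by ring
  have h2 : Real.sqrt m ≤ Real.sqrt r + 1 := by
    rw [Real.sqrt_le_left (by positivity)]
    nlinarith [Real.sqrt_nonneg r, Real.sq_sqrt hr0]
  have h3 : 4 * H * Real.sqrt m * y ≤ Real.sqrt (v * y) + 4 * H * y := by
    rw [hsvy]
    have : 4 * H * y * Real.sqrt m ≤ 4 * H * y * (Real.sqrt r + 1) := by gcongr
    linarith
  linarith

/-- From the exponential-supermartingale events to a Freedman-type bound. -/
lemma conc_sum (K n : ℕ) (H x ω : ℝ) (w d : ℕ → ℝ) (hH : 1 ≤ H) (hω : 0 < ω) (hx : 1 < 4 * K * (ω * x))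
    (hx0 : 0 < x)
    (hw0 : ∀ i ∈ Icc 1 n, 0 ≤ w i) (hwω : ∀ i ∈ Icc 1 n, w i ≤ ω)
    (hw1 : ∑ i ∈ Icc 1 n, w i = 1)
    (hd : ∀ i ∈ Icc 1 n, |d i| ≤ 2 * H)
    (hA : ∀ m ∈ Icc 1 K, ∑ i ∈ Icc 1 n, 1 / (4 * H * ω * Real.sqrt m) * w i * d i
      ≤ ∑ i ∈ Icc 1 n, (1 / (4 * H * ω * Real.sqrt m) * w i * d i) ^ 2 + x) :
    ∑ i ∈ Icc 1 n, w i * d i ≤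
      2 * Real.sqrt ((∑ i ∈ Icc 1 n, w i * d i ^ 2) * (ω * x)) + 4 * H * (ω * x) := by
  have hd2 : ∀ i ∈ Icc 1 n, d i ^ 2 ≤ 4 * H ^ 2 := by
    intro i hi
    have := hd i hi
    rw [← sq_abs]; nlinarith [abs_nonneg (d i)]
  apply conc_opt K H (ω * x) _ _ hH (by positivity)
    (Finset.sum_nonneg (fun i hi => mul_nonneg (hw0 i hi) (sq_nonneg _))) _ hx
  · intro m hm
    have hm0 : (0 : ℝ) < m := by exact_mod_cast (Finset.mem_Icc.1 hm).1
    have hs : 0 < Real.sqrt m := Real.sqrt_pos.2 hm0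
    set l : ℝ := 1 / (4 * H * ω * Real.sqrt m) with hl
    have hl0 : 0 < l := by positivity
    have h := hA m hm
    have e1 : ∑ i ∈ Icc 1 n, l * w i * d i = l * ∑ i ∈ Icc 1 n, w i * d i := by
      rw [Finset.mul_sum]; exact Finset.sum_congr rfl (fun i _ => by ring)
    have e2 : ∑ i ∈ Icc 1 n, (l * w i * d i) ^ 2 ≤ l * (l * ω * ∑ i ∈ Icc 1 n, w i * d i ^ 2) := by
      rw [Finset.mul_sum, Finset.mul_sum]
      refine Finset.sum_le_sum (fun i hi => ?_)
      have : w i * (w i * d i ^ 2) ≤ ω * (w i * d i ^ 2) :=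
        mul_le_mul_of_nonneg_right (hwω i hi) (mul_nonneg (hw0 i hi) (sq_nonneg _))
      nlinarith [mul_le_mul_of_nonneg_left this (sq_nonneg l)]
    rw [e1] at h
    have e3 : x = l * (4 * H * Real.sqrt m * (ω * x)) := by rw [hl]; field_simp
    have e4 : (∑ i ∈ Icc 1 n, w i * d i ^ 2) / (4 * H * Real.sqrt m)
        = l * ω * ∑ i ∈ Icc 1 n, w i * d i ^ 2 := by rw [hl]; field_simp
    rw [e4]
    have h5 : l * ∑ i ∈ Icc 1 n, w i * d i ≤ l * (l * ω * ∑ i ∈ Icc 1 n, w i * d i ^ 2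
        + 4 * H * Real.sqrt m * (ω * x)) := by
      rw [mul_add, ← e3]; linarith
    exact le_of_mul_le_mul_left h5 hl0
  · calc ∑ i ∈ Icc 1 n, w i * d i ^ 2 ≤ ∑ i ∈ Icc 1 n, w i * (4 * H ^ 2) :=
        Finset.sum_le_sum (fun i hi => mul_le_mul_of_nonneg_left (hd2 i hi) (hw0 i hi))
      _ = 4 * H ^ 2 := by rw [← Finset.sum_mul, hw1, one_mul]

lemma wsum_abs_le (n : ℕ) (w d : ℕ → ℝ) (c : ℝ) (hw0 : ∀ i ∈ Icc 1 n, 0 ≤ w i)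
    (hw1 : ∑ i ∈ Icc 1 n, w i = 1) (hd : ∀ i ∈ Icc 1 n, |d i| ≤ c) :
    |∑ i ∈ Icc 1 n, w i * d i| ≤ c := by
  calc |∑ i ∈ Icc 1 n, w i * d i| ≤ ∑ i ∈ Icc 1 n, |w i * d i| := Finset.abs_sum_le_sum_abs _ _
    _ ≤ ∑ i ∈ Icc 1 n, w i * c := Finset.sum_le_sum (fun i hi => by
        rw [abs_mul, abs_of_nonneg (hw0 i hi)]
        exact mul_le_mul_of_nonneg_left (hd i hi) (hw0 i hi))
    _ = c := by rw [← Finset.sum_mul, hw1, one_mul]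

lemma wsum_jensen (n : ℕ) (w p : ℕ → ℝ) (hw0 : ∀ i ∈ Icc 1 n, 0 ≤ w i)
    (hw1 : ∑ i ∈ Icc 1 n, w i = 1) :
    (∑ i ∈ Icc 1 n, w i * p i) ^ 2 ≤ ∑ i ∈ Icc 1 n, w i * p i ^ 2 := by
  obtain ⟨q, hq⟩ : ∃ q, q = ∑ i ∈ Icc 1 n, w i * p i := ⟨_, rfl⟩
  have h : 0 ≤ ∑ i ∈ Icc 1 n, w i * (p i - q) ^ 2 :=
    Finset.sum_nonneg (fun i hi => mul_nonneg (hw0 i hi) (sq_nonneg _))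
  have e : ∑ i ∈ Icc 1 n, w i * (p i - q) ^ 2 = ∑ i ∈ Icc 1 n, w i * p i ^ 2
      - 2 * q * (∑ i ∈ Icc 1 n, w i * p i) + q ^ 2 * ∑ i ∈ Icc 1 n, w i := by
    rw [Finset.mul_sum, Finset.mul_sum, ← Finset.sum_sub_distrib, ← Finset.sum_add_distrib]
    exact Finset.sum_congr rfl (fun i _ => by ring)
  rw [e, hw1, ← hq] at h
  rw [← hq]
  linarith

/-- Hoeffding-type consequence. -/
lemma conc_hoeff (n : ℕ) (H y : ℝ) (w d : ℕ → ℝ) (hH : 1 ≤ H) (hy : 0 < y)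
    (hw0 : ∀ i ∈ Icc 1 n, 0 ≤ w i)
    (hw1 : ∑ i ∈ Icc 1 n, w i = 1)
    (hd : ∀ i ∈ Icc 1 n, |d i| ≤ 2 * H)
    (hA : ∑ i ∈ Icc 1 n, w i * d i ≤
      2 * Real.sqrt ((∑ i ∈ Icc 1 n, w i * d i ^ 2) * y) + 4 * H * y) :
    ∑ i ∈ Icc 1 n, w i * d i ≤ 8 * H * Real.sqrt y := by
  have hd2 : ∀ i ∈ Icc 1 n, d i ^ 2 ≤ 4 * H ^ 2 := by
    intro i hi
    have := hd i hi
    rw [← sq_abs]; nlinarith [abs_nonneg (d i)]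
  have hsy := Real.sqrt_nonneg y
  have hss := Real.mul_self_sqrt hy.le
  by_cases hy1 : y ≤ 1
  · have hv : ∑ i ∈ Icc 1 n, w i * d i ^ 2 ≤ 4 * H ^ 2 := by
      calc ∑ i ∈ Icc 1 n, w i * d i ^ 2 ≤ ∑ i ∈ Icc 1 n, w i * (4 * H ^ 2) :=
          Finset.sum_le_sum (fun i hi => mul_le_mul_of_nonneg_left (hd2 i hi) (hw0 i hi))
        _ = 4 * H ^ 2 := by rw [← Finset.sum_mul, hw1, one_mul]
    have h1 : Real.sqrt ((∑ i ∈ Icc 1 n, w i * d i ^ 2) * y) ≤ 2 * H * Real.sqrt y := by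
      rw [Real.sqrt_le_left (by positivity), mul_pow, Real.sq_sqrt hy.le]
      nlinarith
    have h2 : y ≤ Real.sqrt y := by
      have : Real.sqrt y ≤ 1 := by rw [Real.sqrt_le_left (by norm_num)]; linarith
      nlinarith
    nlinarith
  · have h1 := (abs_le.1 (wsum_abs_le n w d _ hw0 hw1 hd)).2
    have : 1 ≤ Real.sqrt y := by rw [Real.one_le_sqrt]; linarith
    nlinarith

/-- Freedman bound with empirical variance. -/
lemma conc_emp (n : ℕ) (H y : ℝ) (w X p : ℕ → ℝ) (hH : 1 ≤ H) (hy : 0 < y)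
    (hw0 : ∀ i ∈ Icc 1 n, 0 ≤ w i)
    (hw1 : ∑ i ∈ Icc 1 n, w i = 1)
    (hX : ∀ i ∈ Icc 1 n, |X i| ≤ H) (hp : ∀ i ∈ Icc 1 n, |p i| ≤ H)
    (hA : -∑ i ∈ Icc 1 n, w i * (X i - p i) ≤
      2 * Real.sqrt ((∑ i ∈ Icc 1 n, w i * (X i - p i) ^ 2) * y) + 4 * H * y)
    (hB1 : |∑ i ∈ Icc 1 n, w i * (X i - p i)| ≤ 8 * H * Real.sqrt y)
    (hB2 : -∑ i ∈ Icc 1 n, w i * (p i * (X i - p i)) ≤ H * (8 * H * Real.sqrt y)) :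
    -∑ i ∈ Icc 1 n, w i * (X i - p i) ≤
      2 * Real.sqrt (y * (∑ i ∈ Icc 1 n, w i * X i ^ 2 - (∑ i ∈ Icc 1 n, w i * X i) ^ 2))
        + 16 * H * Real.sqrt (y * Real.sqrt y) := by
  set E := ∑ i ∈ Icc 1 n, w i * X i ^ 2 - (∑ i ∈ Icc 1 n, w i * X i) ^ 2 with hE
  set B := ∑ i ∈ Icc 1 n, w i * (X i - p i) with hB
  set v := ∑ i ∈ Icc 1 n, w i * (X i - p i) ^ 2 with hv
  have hsy := Real.sqrt_nonneg y
  have hss := Real.mul_self_sqrt hy.le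
  have hXb := wsum_abs_le n w X _ hw0 hw1 hX
  set Xb := ∑ i ∈ Icc 1 n, w i * X i with hXbd
  have hpb : ∑ i ∈ Icc 1 n, w i * p i = Xb - B := by
    rw [hXbd, hB, ← Finset.sum_sub_distrib]; exact Finset.sum_congr rfl (fun i _ => by ring)
  have hjen : (∑ i ∈ Icc 1 n, w i * p i) ^ 2 ≤ ∑ i ∈ Icc 1 n, w i * p i ^ 2 :=
    wsum_jensen n w p hw0 hw1
  have hveq : v = ∑ i ∈ Icc 1 n, w i * X i ^ 2 - ∑ i ∈ Icc 1 n, w i * p i ^ 2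
      - 2 * ∑ i ∈ Icc 1 n, w i * (p i * (X i - p i)) := by
    rw [hv, Finset.mul_sum, ← Finset.sum_sub_distrib, ← Finset.sum_sub_distrib]
    exact Finset.sum_congr rfl (fun i _ => by ring)
  have hXB : Xb * B ≤ H * (8 * H * Real.sqrt y) := by
    calc Xb * B ≤ |Xb * B| := le_abs_self _
      _ = |Xb| * |B| := abs_mul _ _
      _ ≤ _ := by gcongr
  have hvle : v ≤ E + 32 * H ^ 2 * Real.sqrt y := by
    rw [hpb] at hjen
    nlinarith [sq_nonneg B]
  by_cases hy1 : y ≤ 1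
  · have h1 : Real.sqrt (v * y) ≤ Real.sqrt (y * E) + 6 * H * Real.sqrt (y * Real.sqrt y) := by
      have hE0 : 0 ≤ E := by
        have := wsum_jensen n w X hw0 hw1
        rw [hE]; linarith
      have a1 := Real.sqrt_nonneg (y * E)
      have a2 := Real.sqrt_nonneg (y * Real.sqrt y)
      rw [Real.sqrt_le_left (by positivity)]
      have b1 := Real.sq_sqrt (show 0 ≤ y * E by positivity)
      have b2 := Real.sq_sqrt (show 0 ≤ y * Real.sqrt y by positivity)
      have b3 : v * y ≤ (E + 32 * H ^ 2 * Real.sqrt y) * y := by gcongr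
      have b4 : 0 ≤ Real.sqrt (y * E) * (H * Real.sqrt (y * Real.sqrt y)) := by positivity
      have b5 : 0 ≤ H ^ 2 * (y * Real.sqrt y) := by positivity
      nlinarith
    have h2 : y ≤ Real.sqrt (y * Real.sqrt y) := by
      apply Real.le_sqrt_of_sq_le
      have : y ≤ Real.sqrt y := by
        have : Real.sqrt y ≤ 1 := by rw [Real.sqrt_le_left (by norm_num)]; linarith
        nlinarith
      nlinarith
    nlinarith
  · have h0 : ∀ i ∈ Icc 1 n, |X i - p i| ≤ 2 * H := fun i hi => by
      have := abs_sub (X i) (p i)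
      linarith [hX i hi, hp i hi]
    have h1 := (abs_le.1 (wsum_abs_le n w _ _ hw0 hw1 h0)).1
    have : 1 ≤ Real.sqrt y := by rw [Real.one_le_sqrt]; linarith
    have : 1 ≤ Real.sqrt (y * Real.sqrt y) := by rw [Real.one_le_sqrt]; nlinarith
    have := Real.sqrt_nonneg (y * E)
    nlinarith

end QES

namespace QES

set_option linter.unusedSectionVars false

section mdp
variable {S A : Type} [Fintype S] [Fintype A] [Nonempty S] [Nonempty A]

/-- one-step expectation `P_{h,s,a} f`. -/
noncomputable def ex (M : MDP S A) (h : ℕ) (s : S) (a : A) (f : S → ℝ) : ℝ :=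
  ∑ s', M.P h s a s' * f s'

lemma ex_const (M : MDP S A) (h : ℕ) (s : S) (a : A) (c : ℝ) : ex M h s a (fun _ => c) = c := by
  unfold ex; rw [← Finset.sum_mul, M.P_sum_one, one_mul]

lemma ex_mono (M : MDP S A) (h : ℕ) (s : S) (a : A) {f g : S → ℝ} (hfg : ∀ x, f x ≤ g x) :
    ex M h s a f ≤ ex M h s a g :=
  Finset.sum_le_sum (fun x _ => mul_le_mul_of_nonneg_left (hfg x) (M.P_nonneg _ _ _ _))

lemma ex_sub (M : MDP S A) (h : ℕ) (s : S) (a : A) (f g : S → ℝ) :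
    ex M h s a (fun x => f x - g x) = ex M h s a f - ex M h s a g := by
  unfold ex; rw [← Finset.sum_sub_distrib]; exact Finset.sum_congr rfl (fun _ _ => by ring)

lemma ex_neg (M : MDP S A) (h : ℕ) (s : S) (a : A) (f : S → ℝ) :
    ex M h s a (fun x => - f x) = - ex M h s a f := by
  unfold ex; rw [← Finset.sum_neg_distrib]; exact Finset.sum_congr rfl (fun _ _ => by ring)

lemma ex_smul (M : MDP S A) (h : ℕ) (s : S) (a : A) (c : ℝ) (f : S → ℝ) :
    ex M h s a (fun x => c * f x) = c * ex M h s a f := by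
  unfold ex; rw [Finset.mul_sum]; exact Finset.sum_congr rfl (fun _ _ => by ring)

lemma ex_abs_le (M : MDP S A) (h : ℕ) (s : S) (a : A) (f : S → ℝ) (c : ℝ) (hf : ∀ x, |f x| ≤ c) :
    |ex M h s a f| ≤ c := by
  rw [abs_le]
  constructor
  · have := ex_mono M h s a (f := fun _ => -c) (g := f) (fun x => (abs_le.1 (hf x)).1)
    rwa [ex_const] at this
  · have := ex_mono M h s a (g := fun _ => c) (f := f) (fun x => (abs_le.1 (hf x)).2)
    rwa [ex_const] at this

lemma ex_subsingleton [Subsingleton S] (M : MDP S A) (h : ℕ) (s : S) (a : A) (f : S → ℝ) (x : S) :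
    ex M h s a f = f x := by
  have : f = fun _ => f x := by ext y; rw [Subsingleton.elim y x]
  rw [this, ex_const]

lemma QstarAux_bd (M : MDP S A) : ∀ (n h : ℕ) (s : S) (a : A),
    0 ≤ M.QstarAux n h s a ∧ M.QstarAux n h s a ≤ n := by
  intro n
  induction n with
  | zero => intro h s a; simp [MDP.QstarAux]
  | succ n ih =>
    intro h s a
    have h0 : ∀ s' : S, 0 ≤ (Finset.univ.sup' Finset.univ_nonempty fun a' => M.QstarAux n (h + 1) s' a') :=
      fun s' => le_trans (ih (h + 1) s' (Classical.arbitrary A)).1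
        (Finset.le_sup' (fun a' => M.QstarAux n (h + 1) s' a') (Finset.mem_univ _))
    have h1 : ∀ s' : S, (Finset.univ.sup' Finset.univ_nonempty fun a' => M.QstarAux n (h + 1) s' a') ≤ n :=
      fun s' => Finset.sup'_le _ _ (fun a' _ => (ih (h + 1) s' a').2)
    have e0 := ex_mono M h s a (f := fun _ => (0 : ℝ)) h0
    have e1 := ex_mono M h s a (g := fun _ => (n : ℝ)) h1
    rw [ex_const] at e0 e1
    unfold ex at e0 e1
    simp only [MDP.QstarAux]
    have r0 := M.r_nonneg h s a
    have r1 := M.r_le_one h s a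
    push_cast
    constructor <;> linarith

lemma Qstar_bd (M : MDP S A) (h : ℕ) (hh : 1 ≤ h) (s : S) (a : A) :
    0 ≤ M.Qstar h s a ∧ M.Qstar h s a ≤ M.H := by
  unfold MDP.Qstar
  refine ⟨(QstarAux_bd M _ _ _ _).1, (QstarAux_bd M _ _ _ _).2.trans ?_⟩
  have : M.H + 1 - h ≤ M.H := by omega
  exact_mod_cast this

lemma Vstar_bd (M : MDP S A) (h : ℕ) (hh : 1 ≤ h) (s : S) :
    0 ≤ M.Vstar h s ∧ M.Vstar h s ≤ M.H := by
  unfold MDP.Vstar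
  constructor
  · exact le_trans (Qstar_bd M h hh s (Classical.arbitrary A)).1
      (Finset.le_sup' (fun a => M.Qstar h s a) (Finset.mem_univ _))
  · exact Finset.sup'_le _ _ (fun a _ => (Qstar_bd M h hh s a).2)

lemma Vstar_term (M : MDP S A) (s : S) : M.Vstar (M.H + 1) s = 0 := by
  unfold MDP.Vstar MDP.Qstar
  simp [MDP.QstarAux]

lemma Qstar_bellman (M : MDP S A) (h : ℕ) (hh : h ∈ Icc 1 M.H) (s : S) (a : A) :
    M.Qstar h s a = M.r h s a + ex M h s a (M.Vstar (h + 1)) := by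
  rw [Finset.mem_Icc] at hh
  unfold MDP.Vstar MDP.Qstar ex
  rw [show M.H + 1 - h = (M.H + 1 - (h + 1)) + 1 by omega]
  simp only [MDP.QstarAux]

lemma Vpol_bellman (M : MDP S A) (π : ℕ → S → A) (h : ℕ) (hh : h ∈ Icc 1 M.H) (s : S) :
    M.Vpol π h s = M.r h s (π h s) + ex M h s (π h s) (M.Vpol π (h + 1)) := by
  rw [Finset.mem_Icc] at hh
  unfold MDP.Vpol ex
  rw [show M.H + 1 - h = (M.H + 1 - (h + 1)) + 1 by omega]
  simp only [MDP.VpolAux]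

lemma Vpol_term (M : MDP S A) (π : ℕ → S → A) (s : S) : M.Vpol π (M.H + 1) s = 0 := by
  unfold MDP.Vpol
  simp [MDP.VpolAux]

lemma VpolAux_le (M : MDP S A) (π : ℕ → S → A) : ∀ (n h : ℕ) (s : S),
    M.VpolAux π n h s ≤ Finset.univ.sup' Finset.univ_nonempty fun a' => M.QstarAux n h s a' := by
  intro n
  induction n with
  | zero => intro h s; simp [MDP.QstarAux, MDP.VpolAux]
  | succ n ih =>
    intro h s
    refine le_trans ?_ (Finset.le_sup' (fun a' => M.QstarAux (n + 1) h s a') (Finset.mem_univ (π h s)))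
    simp only [MDP.QstarAux, MDP.VpolAux]
    have := ex_mono M h s (π h s) (fun x => ih (h + 1) x)
    unfold ex at this
    linarith

lemma Vpol_le (M : MDP S A) (π : ℕ → S → A) (h : ℕ) (s : S) : M.Vpol π h s ≤ M.Vstar h s :=
  VpolAux_le M π _ _ _

end mdp

section alg
variable {S A : Type} [Fintype S] [Fintype A] [Nonempty S] [Nonempty A]
  [DecidableEq S] [DecidableEq A] {M : MDP S A} {K : ℕ} {cb δ : ℝ} (al : QLAlg M K cb δ)

lemma N_mono {h : ℕ} (hh : h ∈ Icc 1 M.H) (s : S) (a : A) {j k : ℕ} (hjk : j ≤ k) (hk : k ≤ K) :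
    al.N j h s a ≤ al.N k h s a := by
  induction k, hjk using Nat.le_induction with
  | base => exact le_rfl
  | succ k hjk ih =>
    have := al.N_upd (k + 1) (Finset.mem_Icc.2 ⟨by omega, hk⟩) h hh s a
    rw [Nat.add_sub_cancel] at this
    have := ih (by omega)
    omega

lemma N_visit {h : ℕ} (hh : h ∈ Icc 1 M.H) {k : ℕ} (hk : k ∈ Icc 1 K) {s : S} {a : A}
    (hv : s = al.st k h ∧ a = al.ac k h) : al.N k h s a = al.N (k - 1) h s a + 1 := by
  rw [al.N_upd k hk h hh s a, if_pos hv]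

lemma N_novisit {h : ℕ} (hh : h ∈ Icc 1 M.H) {k : ℕ} (hk : k ∈ Icc 1 K) {s : S} {a : A}
    (hv : ¬ (s = al.st k h ∧ a = al.ac k h)) : al.N k h s a = al.N (k - 1) h s a := by
  rw [al.N_upd k hk h hh s a, if_neg hv, add_zero]

lemma N_lt_visit {h : ℕ} (hh : h ∈ Icc 1 M.H) {j k : ℕ} (hk : k ∈ Icc 1 K) {s : S} {a : A}
    (hv : s = al.st k h ∧ a = al.ac k h) (hj : j < k) : al.N j h s a < al.N k h s a := by
  rw [N_visit al hh hk hv]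
  rw [Finset.mem_Icc] at hk
  have := N_mono al hh s a (show j ≤ k - 1 by omega) (by omega)
  omega

lemma kvis_N {h : ℕ} (hh : h ∈ Icc 1 M.H) {k : ℕ} (hk : k ∈ Icc 1 K) {s : S} {a : A}
    (hv : s = al.st k h ∧ a = al.ac k h) : al.kvis (al.N k h s a) h s a = k := by
  have h1 := N_visit al hh hk hv
  have hk' := Finset.mem_Icc.1 hk
  obtain ⟨h2, h3, h4, h5⟩ := al.kvis_spec h hh s a (al.N k h s a) (by omega)
    (N_mono al hh s a hk'.2 le_rfl)
  rcases lt_trichotomy (al.kvis (al.N k h s a) h s a) k with h6 | h6 | h6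
  · have := N_lt_visit al hh hk hv h6
    omega
  · exact h6
  · have := N_lt_visit al hh h2 ⟨h4.symm, h5.symm⟩ h6
    omega

lemma kvis_le {h : ℕ} (hh : h ∈ Icc 1 M.H) {k : ℕ} (hk : k ≤ K) {s : S} {a : A} {n : ℕ}
    (hn : 1 ≤ n) (hnk : n ≤ al.N k h s a) : al.kvis n h s a ≤ k := by
  obtain ⟨h2, h3, h4, h5⟩ := al.kvis_spec h hh s a n hn (hnk.trans (N_mono al hh s a hk le_rfl))
  by_contra hc
  push Not at hc
  have := N_lt_visit al hh h2 ⟨h4.symm, h5.symm⟩ hc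
  omega

lemma kvis_mono {h : ℕ} (hh : h ∈ Icc 1 M.H) {s : S} {a : A} {i n : ℕ}
    (hi : 1 ≤ i) (hin : i ≤ n) (hn : n ≤ al.N K h s a) : al.kvis i h s a ≤ al.kvis n h s a := by
  obtain ⟨h2, h3, h4, h5⟩ := al.kvis_spec h hh s a n (by omega) hn
  exact kvis_le al hh (Finset.mem_Icc.1 h2).2 hi (by omega)

lemma reindex {h : ℕ} (hh : h ∈ Icc 1 M.H) (s : S) (a : A) (φ : ℕ → ℕ → ℝ) (k : ℕ) (hk : k ≤ K) :
    ∑ j ∈ Icc 1 k, (if s = al.st j h ∧ a = al.ac j h then φ (al.N j h s a) j else 0)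
      = ∑ n ∈ Icc 1 (al.N k h s a), φ n (al.kvis n h s a) := by
  induction k with
  | zero => simp [al.N_init]
  | succ k ih =>
    have hk1 : k + 1 ∈ Icc 1 K := Finset.mem_Icc.2 ⟨by omega, hk⟩
    rw [Finset.sum_Icc_succ_top (by omega), ih (by omega)]
    by_cases hv : s = al.st (k + 1) h ∧ a = al.ac (k + 1) h
    · have h1 := kvis_N al hh hk1 hv
      have h2 := N_visit al hh hk1 hv
      rw [Nat.add_sub_cancel] at h2
      rw [if_pos hv]
      rw [h2] at h1 ⊢
      rw [Finset.sum_Icc_succ_top (by omega), h1]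
    · have h2 := N_novisit al hh hk1 hv
      rw [Nat.add_sub_cancel] at h2
      rw [if_neg hv, h2, add_zero]

lemma rec_lr {h : ℕ} (hh : h ∈ Icc 1 M.H) (s : S) (a : A) (F X : ℕ → ℝ)
    (hF : ∀ k ∈ Icc 1 K, F (k + 1) = if s = al.st k h ∧ a = al.ac k h then
      (1 - lr M.H (al.N k h s a)) * F k + lr M.H (al.N k h s a) * X k else F k)
    (k : ℕ) (hk : k ≤ K) :
    F (k + 1) = lrProd M.H 0 (al.N k h s a) * F 1
      + ∑ n ∈ Icc 1 (al.N k h s a), lrProd M.H n (al.N k h s a) * X (al.kvis n h s a) := by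
  induction k with
  | zero => simp [al.N_init, lrProd_zero_zero]
  | succ k ih =>
    have hk1 : k + 1 ∈ Icc 1 K := Finset.mem_Icc.2 ⟨by omega, hk⟩
    rw [hF (k + 1) hk1, ih (by omega)]
    by_cases hv : s = al.st (k + 1) h ∧ a = al.ac (k + 1) h
    · have h1 := kvis_N al hh hk1 hv
      have h2 := N_visit al hh hk1 hv
      rw [Nat.add_sub_cancel] at h2
      rw [if_pos hv]
      rw [h2] at h1 ⊢
      have e : ∑ n ∈ Icc 1 (al.N k h s a), lrProd M.H n (al.N k h s a + 1) * X (al.kvis n h s a)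
          = (1 - lr M.H (al.N k h s a + 1)) *
            ∑ n ∈ Icc 1 (al.N k h s a), lrProd M.H n (al.N k h s a) * X (al.kvis n h s a) := by
        rw [Finset.mul_sum]
        refine Finset.sum_congr rfl (fun n hn => ?_)
        rw [lrProd_succ M.H n _ (Finset.mem_Icc.1 hn).2, mul_assoc]
      rw [Finset.sum_Icc_succ_top (by omega), h1, lrProd_succ _ _ _ (Nat.zero_le _),
        lrProd_self _ _ (by omega), e]
      ring
    · have h2 := N_novisit al hh hk1 hv
      rw [Nat.add_sub_cancel] at h2
      rw [if_neg hv, h2]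

lemma rec_mean {h : ℕ} (hh : h ∈ Icc 1 M.H) (s : S) (a : A) (F X : ℕ → ℝ) 
    (hF : ∀ k ∈ Icc 1 K, F (k + 1) = if s = al.st k h ∧ a = al.ac k h then
      (1 - 1 / (al.N k h s a : ℝ)) * F k + 1 / (al.N k h s a : ℝ) * X k else F k)
    (k : ℕ) (hk : k ≤ K) :
    (al.N k h s a : ℝ) * F (k + 1) = ∑ n ∈ Icc 1 (al.N k h s a), X (al.kvis n h s a) := by
  induction k with
  | zero => simp [al.N_init]
  | succ k ih =>
    have hk1 : k + 1 ∈ Icc 1 K := Finset.mem_Icc.2 ⟨by omega, hk⟩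
    rw [hF (k + 1) hk1]
    by_cases hv : s = al.st (k + 1) h ∧ a = al.ac (k + 1) h
    · have h1 := kvis_N al hh hk1 hv
      have h2 := N_visit al hh hk1 hv
      rw [Nat.add_sub_cancel] at h2
      rw [if_pos hv]
      rw [h2] at h1 ⊢
      rw [Finset.sum_Icc_succ_top (by omega), h1, ← ih (by omega)]
      have : ((al.N k h s a + 1 : ℕ) : ℝ) ≠ 0 := by positivity
      field_simp
      push_cast
      ring
    · have h2 := N_novisit al hh hk1 hv
      rw [Nat.add_sub_cancel] at h2
      rw [if_neg hv, h2, ih (by omega)]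

lemma Q_succ_le {h : ℕ} (hh : h ∈ Icc 1 M.H) (s : S) (a : A) {k : ℕ} (hk : k ∈ Icc 1 K) :
    al.Q (k + 1) h s a ≤ al.Q k h s a := by
  rw [al.Q_upd k hk h hh s a]
  split_ifs
  · exact (min_le_right _ _).trans (min_le_right _ _)
  · exact le_rfl

lemma Q_le_QR {h : ℕ} (hh : h ∈ Icc 1 M.H) (s : S) (a : A) {k : ℕ} (hk1 : 1 ≤ k) (hk : k ≤ K + 1) :
    al.Q k h s a ≤ al.QR k h s a := by
  induction k, hk1 using Nat.le_induction with
  | base => rw [al.Q_init h hh, al.QR_init h hh]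
  | succ k hk1 ih =>
    have hk' : k ∈ Icc 1 K := Finset.mem_Icc.2 ⟨hk1, by omega⟩
    rw [al.Q_upd k hk' h hh s a]
    split_ifs with hv
    · exact min_le_left _ _
    · rw [al.QR_upd k hk' h hh s a, if_neg hv]; exact ih (by omega)

lemma V_eq {h : ℕ} (hh : h ∈ Icc 1 M.H) (s : S) {k : ℕ} (hk1 : 1 ≤ k) (hk : k ≤ K + 1) :
    al.V k h s = Finset.univ.sup' Finset.univ_nonempty (fun a => al.Q k h s a) := by
  induction k, hk1 using Nat.le_induction with
  | base =>
    rw [al.V_init h hh]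
    simp [al.Q_init h hh]
  | succ k hk1 ih =>
    have hk' : k ∈ Icc 1 K := Finset.mem_Icc.2 ⟨hk1, by omega⟩
    rw [al.V_upd k hk' h hh s]
    split_ifs with hv
    · rfl
    · rw [ih (by omega)]
      congr 1
      ext a
      rw [al.Q_upd k hk' h hh s a, if_neg (fun h => hv h.1)]

lemma V_eq_ac {h : ℕ} (hh : h ∈ Icc 1 M.H) {k : ℕ} (hk1 : 1 ≤ k) (hk : k ≤ K + 1) :
    al.V k h (al.st k h) = al.Q k h (al.st k h) (al.ac k h) := by
  rw [V_eq al hh _ hk1 hk, al.act_eq]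
  apply le_antisymm
  · exact Finset.sup'_le _ _ (fun a _ => al.greedy k h _ a)
  · exact Finset.le_sup' (fun a => al.Q k h (al.st k h) a) (Finset.mem_univ _)

lemma V_succ_le {h : ℕ} (hh : h ∈ Icc 1 (M.H + 1)) (s : S) {k : ℕ} (hk : k ∈ Icc 1 K) :
    al.V (k + 1) h s ≤ al.V k h s := by
  have hk' := Finset.mem_Icc.1 hk
  have hh' := Finset.mem_Icc.1 hh
  rcases Nat.lt_or_ge M.H h with hH | hH
  · have : h = M.H + 1 := by omega
    subst this
    rw [(al.V_terminal _ s).1, (al.V_terminal _ s).1]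
  · have hh2 : h ∈ Icc 1 M.H := Finset.mem_Icc.2 ⟨hh'.1, hH⟩
    rw [V_eq al hh2 s hk'.1 (by omega), V_eq al hh2 s (by omega) (by omega)]
    exact Finset.sup'_le _ _ (fun a _ => (Q_succ_le al hh2 s a hk).trans
      (Finset.le_sup' (fun a => al.Q k h s a) (Finset.mem_univ a)))

lemma V_VR {h : ℕ} (hh : h ∈ Icc 1 (M.H + 1)) (s : S) {k : ℕ} (hk1 : 1 ≤ k) (hk : k ≤ K + 1) :
    al.V k h s ≤ al.VR k h s ∧ al.VR k h s ≤ M.H ∧ (2 ≤ k → al.VR k h s ≤ al.VR (k - 1) h s) := by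
  have hh' := Finset.mem_Icc.1 hh
  rcases Nat.lt_or_ge M.H h with hH | hH
  · have : h = M.H + 1 := by omega
    subst this
    simp [(al.V_terminal _ s).1, (al.V_terminal _ s).2.1]
  · have hh2 : h ∈ Icc 1 M.H := Finset.mem_Icc.2 ⟨hh'.1, hH⟩
    induction k, hk1 using Nat.le_induction with
    | base =>
      rw [al.V_init h hh2, al.VR_init h hh2]
      exact ⟨le_rfl, le_rfl, by omega⟩
    | succ k hk1 ih =>
      have hk' : k ∈ Icc 1 K := Finset.mem_Icc.2 ⟨hk1, by omega⟩
      obtain ⟨i1, i2, -⟩ := ih (by omega)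
      have hV := V_succ_le al hh s hk'
      rw [Nat.add_sub_cancel]
      have key : al.VR (k + 1) h s = al.VR k h s ∨ al.VR (k + 1) h s = al.V (k + 1) h s := by
        by_cases hs : s = al.st k h
        · subst hs
          by_cases hc : (1 < al.V (k + 1) h (al.st k h) - al.VLCB (k + 1) h (al.st k h)
              ∨ al.uref k h (al.st k h))
          · right; exact al.VR_upd_pos k hk' h hh2 hc
          · left; exact al.VR_upd_neg k hk' h hh2 hc
        · left; exact al.VR_upd_other k hk' h hh2 s hs
      rcases key with e | e <;> rw [e]
      · exact ⟨by linarith, i2, fun _ => le_rfl⟩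
      · exact ⟨le_rfl, by linarith, fun _ => by linarith⟩

lemma VR_anti {h : ℕ} (hh : h ∈ Icc 1 (M.H + 1)) (s : S) {j k : ℕ} (hj : 1 ≤ j) (hjk : j ≤ k)
    (hk : k ≤ K + 1) : al.VR k h s ≤ al.VR j h s := by
  induction k, hjk using Nat.le_induction with
  | base => exact le_rfl
  | succ k hjk ih =>
    have := (V_VR al hh s (k := k + 1) (by omega) hk).2.2 (by omega)
    rw [Nat.add_sub_cancel] at this
    exact this.trans (ih (by omega))

lemma BR_nonneg (hcb : 0 ≤ cb) {h : ℕ} (hh : h ∈ Icc 1 M.H) (s : S) (a : A) {k : ℕ} (hk1 : 1 ≤ k)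
    (hk : k ≤ K + 1) : 0 ≤ al.BR k h s a := by
  induction k, hk1 using Nat.le_induction with
  | base => rw [(al.mom_init h s a).2.2.2.2.1]
  | succ k hk1 ih =>
    have hk' : k ∈ Icc 1 K := Finset.mem_Icc.2 ⟨hk1, by omega⟩
    rw [al.BR_upd k hk' h hh s a]
    split_ifs with hv
    · positivity
    · exact ih (by omega)

end alg
end QES

namespace QES

set_option linter.unusedSectionVars false

section good
variable {S A : Type} [Fintype S] [Fintype A] [Nonempty S] [Nonempty A]
  [DecidableEq S] [DecidableEq A] {M : MDP S A} {K : ℕ} {cb δ : ℝ} (al : QLAlg M K cb δ)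

/-- clipped reference value at step `h+1` -/
noncomputable def VRc (h k : ℕ) (x : S) : ℝ := max (al.VR k (h + 1) x) 0

/-- clipped advantage at step `h+1` -/
noncomputable def Wc (h k : ℕ) (x : S) : ℝ := max (al.V k (h + 1) x) 0 - max (al.VR k (h + 1) x) 0

/-- the families of functions to which concentration is applied -/
noncomputable def fam (h : ℕ) (s : S) (a : A) (i : Fin 5) (k : ℕ) (x : S) : ℝ :=
  match i with
  | 0 => M.Vstar (h + 1) x
  | 1 => Wc al h k x
  | 2 => (ex M h s a (Wc al h k) / M.H) * Wc al h k x
  | 3 => VRc al h k x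
  | 4 => (ex M h s a (VRc al h k) / M.H) * VRc al h k x

/-- signed families -/
noncomputable def fams (h : ℕ) (s : S) (a : A) (i : Fin 5) (sg : Bool) (k : ℕ) (x : S) : ℝ :=
  if sg then fam al h s a i k x else - fam al h s a i k x

/-- weights -/
noncomputable def wt (H : ℕ) (t : Bool) (n j : ℕ) : ℝ :=
  if j ≤ n then (if t then lrProd H j n else 1 / (n : ℝ)) else 0

/-- weight bound -/
noncomputable def om (H : ℕ) (t : Bool) (n : ℕ) : ℝ := if t then 2 * H / n else 1 / n

/-- martingale difference -/
noncomputable def dev (h : ℕ) (s : S) (a : A) (f : ℕ → S → ℝ) (k : ℕ) : ℝ :=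
  f k (al.st k (h + 1)) - ex M h s a (f k)

/-- the scaled martingale difference in episode `k` -/
noncomputable def Yt (h : ℕ) (s : S) (a : A) (i : Fin 5) (sg t : Bool) (n m k : ℕ) : ℝ :=
  if s = al.st k h ∧ a = al.ac k h then
    1 / (4 * (M.H : ℝ) * om M.H t n * Real.sqrt m) * wt M.H t n (al.N k h s a)
      * dev al h s a (fams al h s a i sg) k
  else 0

/-- the good event -/
def Good : Prop :=
  ∀ h ∈ Icc 1 M.H, ∀ s a, ∀ n ∈ Icc 1 K, ∀ m ∈ Icc 1 K, ∀ i sg t,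
    ∑ k ∈ Icc 1 K, Yt al h s a i sg t n m k
      ≤ ∑ k ∈ Icc 1 K, (Yt al h s a i sg t n m k) ^ 2 + 7 * iota S A K M.H δ

lemma N_le {h : ℕ} (hh : h ∈ Icc 1 M.H) (s : S) (a : A) (k : ℕ) (hk : k ≤ K) :
    al.N k h s a ≤ k := by
  induction k with
  | zero => simp [al.N_init]
  | succ k ih =>
    have hk1 : k + 1 ∈ Icc 1 K := Finset.mem_Icc.2 ⟨by omega, hk⟩
    have := al.N_upd (k + 1) hk1 h hh s a
    rw [Nat.add_sub_cancel] at this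
    have := ih (by omega)
    split_ifs at * <;> omega

lemma abs_VRc {h : ℕ} (hh : h ∈ Icc 1 M.H) {k : ℕ} (hk1 : 1 ≤ k) (hk : k ≤ K + 1) (x : S) :
    |VRc al h k x| ≤ M.H := by
  have hh' := Finset.mem_Icc.1 hh
  have := V_VR al (h := h + 1) (Finset.mem_Icc.2 ⟨by omega, by omega⟩) x hk1 hk
  unfold VRc
  rw [abs_of_nonneg (le_max_right _ _)]
  exact max_le this.2.1 (by positivity)

lemma abs_Wc {h : ℕ} (hh : h ∈ Icc 1 M.H) {k : ℕ} (hk1 : 1 ≤ k) (hk : k ≤ K + 1) (x : S) :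
    |Wc al h k x| ≤ M.H := by
  have hh' := Finset.mem_Icc.1 hh
  have := V_VR al (h := h + 1) (Finset.mem_Icc.2 ⟨by omega, by omega⟩) x hk1 hk
  have h2 := abs_VRc al hh hk1 hk x
  unfold VRc at h2
  rw [abs_of_nonneg (le_max_right _ _)] at h2
  unfold Wc
  have h3 : max (al.V k (h + 1) x) 0 ≤ max (al.VR k (h + 1) x) 0 := max_le_max_right _ this.1
  have h4 := le_max_right (al.V k (h + 1) x) 0
  rw [abs_le]; constructor <;> linarith

lemma abs_fam {h : ℕ} (hh : h ∈ Icc 1 M.H) {k : ℕ} (hk1 : 1 ≤ k) (hk : k ≤ K + 1) (s : S) (a : A)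
    (i : Fin 5) (x : S) : |fam al h s a i k x| ≤ M.H := by
  have hH : (0 : ℝ) < M.H := by exact_mod_cast M.H_pos
  have aux : ∀ f : S → ℝ, (∀ x, |f x| ≤ M.H) → |(ex M h s a f / M.H) * f x| ≤ M.H := by
    intro f hf
    rw [abs_mul, abs_div, abs_of_pos hH]
    have h1 := ex_abs_le M h s a f _ hf
    have h2 : |ex M h s a f| / M.H ≤ 1 := by rw [div_le_one hH]; exact h1
    calc _ ≤ 1 * (M.H : ℝ) := mul_le_mul h2 (hf x) (abs_nonneg _) (by norm_num)
      _ = _ := one_mul _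
  fin_cases i
  · have := Vstar_bd M (h + 1) (by omega) x
    simp only [fam]; rw [abs_of_nonneg this.1]; exact this.2
  · exact abs_Wc al hh hk1 hk x
  · exact aux _ (abs_Wc al hh hk1 hk)
  · exact abs_VRc al hh hk1 hk x
  · exact aux _ (abs_VRc al hh hk1 hk)

lemma abs_fams {h : ℕ} (hh : h ∈ Icc 1 M.H) {k : ℕ} (hk1 : 1 ≤ k) (hk : k ≤ K + 1) (s : S) (a : A)
    (i : Fin 5) (sg : Bool) (x : S) : |fams al h s a i sg k x| ≤ M.H := by
  unfold fams
  split_ifs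
  · exact abs_fam al hh hk1 hk s a i x
  · rw [abs_neg]; exact abs_fam al hh hk1 hk s a i x

lemma abs_dev {h : ℕ} {k : ℕ} (s : S) (a : A) (f : ℕ → S → ℝ) (c : ℝ) (hf : ∀ x, |f k x| ≤ c) :
    |dev al h s a f k| ≤ 2 * c := by
  unfold dev
  have h1 := hf (al.st k (h + 1))
  have h2 := ex_abs_le M h s a (f k) c hf
  have := abs_sub (f k (al.st k (h + 1))) (ex M h s a (f k))
  linarith

lemma dev_subsingleton [Subsingleton S] {h : ℕ} {k : ℕ} (s : S) (a : A) (f : ℕ → S → ℝ) :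
    dev al h s a f k = 0 := by
  unfold dev
  rw [ex_subsingleton M h s a (f k) (al.st k (h + 1)), sub_self]

lemma iota_nonneg (hK : 1 ≤ K) {H : ℕ} (hH : 1 ≤ H) (h0 : 0 < δ) (h1 : δ < 1) : 0 ≤ iota S A K H δ := by
  unfold iota
  apply Real.log_nonneg
  rw [le_div_iff₀ h0]
  have a1 : (1 : ℝ) ≤ Fintype.card S := by exact_mod_cast Fintype.card_pos
  have a2 : (1 : ℝ) ≤ Fintype.card A := by exact_mod_cast Fintype.card_pos
  have a3 : (1 : ℝ) ≤ K := by exact_mod_cast hK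
  have a4 : (1 : ℝ) ≤ H := by exact_mod_cast hH
  have b1 : (1 : ℝ) ≤ (Fintype.card S : ℝ) * (Fintype.card A) := one_le_mul_of_one_le_of_one_le a1 a2
  have b2 : (1 : ℝ) ≤ (K : ℝ) * H := one_le_mul_of_one_le_of_one_le a3 a4
  have b3 := one_le_mul_of_one_le_of_one_le b1 b2
  linarith

lemma iota_ge [Nontrivial S] (hK : 1 ≤ K) {H : ℕ} (hH : 1 ≤ H) (h0 : 0 < δ) (h1 : δ < 1) :
    1 / 2 ≤ iota S A K H δ := by
  have : (1 : ℝ) / 2 ≤ Real.log 2 := by have := Real.log_two_gt_d9; linarith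
  refine this.trans ?_
  unfold iota
  apply Real.log_le_log (by norm_num)
  rw [le_div_iff₀ h0]
  have a1 : (2 : ℝ) ≤ Fintype.card S := by exact_mod_cast Fintype.one_lt_card
  have a2 : (1 : ℝ) ≤ Fintype.card A := by exact_mod_cast Fintype.card_pos
  have a3 : (1 : ℝ) ≤ K := by exact_mod_cast hK
  have a4 : (1 : ℝ) ≤ H := by exact_mod_cast hH
  have b1 : (2 : ℝ) ≤ (Fintype.card S : ℝ) * (Fintype.card A) := by nlinarith
  have b2 : (1 : ℝ) ≤ (K : ℝ) * H := one_le_mul_of_one_le_of_one_le a3 a4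
  have b3 : (2 : ℝ) ≤ (Fintype.card S : ℝ) * (Fintype.card A) * (K * H) := by nlinarith
  linarith

lemma wt_nonneg (H : ℕ) (t : Bool) (n j : ℕ) : 0 ≤ wt H t n j := by
  unfold wt
  split_ifs
  · exact lrProd_nonneg _ _ _
  · positivity
  · exact le_rfl

lemma wt_le (H : ℕ) (hH : 1 ≤ H) (t : Bool) (n j : ℕ) (hn : 1 ≤ n) (hj : 1 ≤ j) : wt H t n j ≤ om H t n := by
  unfold wt om
  split_ifs with h1 h2
  · exact lrProd_le _ _ _ hH hj h1
  · exact le_rfl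
  · positivity
  · positivity

lemma wt_sum (H : ℕ) (t : Bool) (n : ℕ) (hn : 1 ≤ n) : ∑ j ∈ Icc 1 n, wt H t n j = 1 := by
  have e : ∀ j ∈ Icc 1 n, wt H t n j = if t then lrProd H j n else 1 / (n : ℝ) := fun j hj => by
    unfold wt; rw [if_pos (Finset.mem_Icc.1 hj).2]
  rw [Finset.sum_congr rfl e]
  cases t
  · have : (n : ℝ) ≠ 0 := by positivity
    simp [this]
  · simpa using lrProd_sum H n hn

lemma om_pos (H : ℕ) (hH : 1 ≤ H) (t : Bool) (n : ℕ) (hn : 1 ≤ n) : 0 < om H t n := by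
  unfold om; split_ifs <;> positivity

lemma om_ge (H : ℕ) (hH : 1 ≤ H) (t : Bool) (n : ℕ) (hn : 1 ≤ n) : 1 / (n : ℝ) ≤ om H t n := by
  have : (1 : ℝ) ≤ H := by exact_mod_cast hH
  unfold om; split_ifs
  · gcongr; linarith
  · exact le_rfl

lemma good_conc [Nontrivial S] (hG : Good al) (hK : 1 ≤ K) (h0 : 0 < δ) (h1 : δ < 1) {h : ℕ}
    (hh : h ∈ Icc 1 M.H) (s : S) (a : A) (i : Fin 5) (sg t : Bool) {n : ℕ} (hn : 1 ≤ n)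
    (hnN : n ≤ al.N K h s a) :
    ∑ j ∈ Icc 1 n, wt M.H t n j * dev al h s a (fams al h s a i sg) (al.kvis j h s a) ≤
      2 * Real.sqrt ((∑ j ∈ Icc 1 n, wt M.H t n j *
        dev al h s a (fams al h s a i sg) (al.kvis j h s a) ^ 2) * (om M.H t n * (7 * iota S A K M.H δ)))
        + 4 * M.H * (om M.H t n * (7 * iota S A K M.H δ)) := by
  have hι := iota_ge (S := S) (A := A) hK M.H_pos h0 h1
  have hH : (1 : ℝ) ≤ M.H := by exact_mod_cast M.H_pos
  have hnK : n ≤ K := hnN.trans (N_le al hh s a K le_rfl)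
  have hn0 : (0 : ℝ) < n := by exact_mod_cast hn
  refine conc_sum K n M.H (7 * iota S A K M.H δ) (om M.H t n) (wt M.H t n)
    (fun j => dev al h s a (fams al h s a i sg) (al.kvis j h s a)) hH (om_pos _ M.H_pos t n hn) ?_
    (by linarith) (fun j _ => wt_nonneg _ _ _ _)
    (fun j hj => wt_le _ M.H_pos t n j hn (Finset.mem_Icc.1 hj).1) (wt_sum _ _ _ hn) ?_ ?_
  · have h2 := om_ge M.H M.H_pos t n hn
    have h3 : (1 : ℝ) ≤ K * om M.H t n := by
      have hnK' : (n : ℝ) ≤ K := by exact_mod_cast hnK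
      calc (1 : ℝ) = n * (1 / n) := by field_simp
        _ ≤ K * om M.H t n := by gcongr
    nlinarith
  · intro j hj
    rw [Finset.mem_Icc] at hj
    have hs := (al.kvis_spec h hh s a j hj.1 (hj.2.trans hnN)).1
    rw [Finset.mem_Icc] at hs
    exact abs_dev al s a _ _ (fun x => abs_fams al hh hs.1 (by omega) s a i sg x)
  · intro m hm
    have hg := hG h hh s a n (Finset.mem_Icc.2 ⟨hn, hnK⟩) m hm i sg t
    set c := 1 / (4 * (M.H : ℝ) * om M.H t n * Real.sqrt m) with hc
    have e1 : ∑ k ∈ Icc 1 K, Yt al h s a i sg t n m k = ∑ j ∈ Icc 1 n, c * wt M.H t n j *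
        dev al h s a (fams al h s a i sg) (al.kvis j h s a) := by
      have := reindex al hh s a (fun j k => c * wt M.H t n j *
        dev al h s a (fams al h s a i sg) k) K le_rfl
      unfold Yt
      rw [this]
      symm
      apply Finset.sum_subset
      · intro j hj; rw [Finset.mem_Icc] at *; omega
      · intro j hj hj2
        rw [Finset.mem_Icc] at *
        have : ¬ (j ≤ n) := by omega
        simp [wt, this]
    have e2 : ∑ k ∈ Icc 1 K, (Yt al h s a i sg t n m k) ^ 2 = ∑ j ∈ Icc 1 n, (c * wt M.H t n j *
        dev al h s a (fams al h s a i sg) (al.kvis j h s a)) ^ 2 := by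
      have := reindex al hh s a (fun j k => (c * wt M.H t n j *
        dev al h s a (fams al h s a i sg) k) ^ 2) K le_rfl
      unfold Yt
      simp only [ite_pow, ne_eq, OfNat.ofNat_ne_zero, not_false_eq_true, zero_pow]
      rw [this]
      symm
      apply Finset.sum_subset
      · intro j hj; rw [Finset.mem_Icc] at *; omega
      · intro j hj hj2
        rw [Finset.mem_Icc] at *
        have : ¬ (j ≤ n) := by omega
        simp [wt, this]
    rw [e1, e2] at hg
    exact hg

lemma dev_fams_true (h : ℕ) (s : S) (a : A) (i : Fin 5) (k : ℕ) :
    dev al h s a (fams al h s a i true) k = dev al h s a (fam al h s a i) k := by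
  have e : fams al h s a i true k = fam al h s a i k := by ext x; simp [fams]
  simp only [dev, e]

lemma dev_fams_false (h : ℕ) (s : S) (a : A) (i : Fin 5) (k : ℕ) :
    dev al h s a (fams al h s a i false) k = - dev al h s a (fam al h s a i) k := by
  have e : fams al h s a i false k = fun x => - fam al h s a i k x := by ext x; simp [fams]
  simp only [dev, e]
  rw [ex_neg]; ring

lemma good_hoeff [Nontrivial S] (hG : Good al) (hK : 1 ≤ K) (h0 : 0 < δ) (h1 : δ < 1) {h : ℕ}
    (hh : h ∈ Icc 1 M.H) (s : S) (a : A) (i : Fin 5) (t : Bool) {n : ℕ} (hn : 1 ≤ n)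
    (hnN : n ≤ al.N K h s a) :
    |∑ j ∈ Icc 1 n, wt M.H t n j * dev al h s a (fam al h s a i) (al.kvis j h s a)| ≤
      8 * M.H * Real.sqrt (om M.H t n * (7 * iota S A K M.H δ)) := by
  have hι := iota_ge (S := S) (A := A) hK M.H_pos h0 h1
  have hH : (1 : ℝ) ≤ M.H := by exact_mod_cast M.H_pos
  have hy : 0 < om M.H t n * (7 * iota S A K M.H δ) :=
    mul_pos (om_pos _ M.H_pos t n hn) (by linarith)
  have key : ∀ sg, ∑ j ∈ Icc 1 n, wt M.H t n j * dev al h s a (fams al h s a i sg) (al.kvis j h s a) ≤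
      8 * M.H * Real.sqrt (om M.H t n * (7 * iota S A K M.H δ)) := by
    intro sg
    refine conc_hoeff n M.H _ _ (fun j => dev al h s a (fams al h s a i sg) (al.kvis j h s a)) hH hy
      (fun j _ => wt_nonneg _ _ _ _) (wt_sum _ _ _ hn) ?_ (good_conc al hG hK h0 h1 hh s a i sg t hn hnN)
    intro j hj
    rw [Finset.mem_Icc] at hj
    have hs := (al.kvis_spec h hh s a j hj.1 (hj.2.trans hnN)).1
    rw [Finset.mem_Icc] at hs
    exact abs_dev al s a _ _ (fun x => abs_fams al hh hs.1 (by omega) s a i sg x)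
  have k1 := key true
  have k2 := key false
  simp only [dev_fams_true, dev_fams_false, mul_neg, Finset.sum_neg_distrib] at k1 k2
  rw [abs_le]
  constructor <;> linarith

/-- Empirical Bernstein bound on the good event, for the advantage (`i = 1`) and the
reference (`i = 3`). -/
lemma good_emp (hG : Good al) (hK : 1 ≤ K) (h0 : 0 < δ) (h1 : δ < 1) {h : ℕ}
    (hh : h ∈ Icc 1 M.H) (s : S) (a : A) (f : ℕ → S → ℝ) (i j' : Fin 5) 
    (hf : ∀ k x, fam al h s a i k x = f k x)
    (hj' : ∀ k x, fam al h s a j' k x = (ex M h s a (f k) / M.H) * f k x)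
    (t : Bool) {n : ℕ} (hn : 1 ≤ n)
    (hnN : n ≤ al.N K h s a) :
    -∑ j ∈ Icc 1 n, wt M.H t n j * dev al h s a f (al.kvis j h s a) ≤
      2 * Real.sqrt ((om M.H t n * (7 * iota S A K M.H δ)) *
        (∑ j ∈ Icc 1 n, wt M.H t n j * (f (al.kvis j h s a) (al.st (al.kvis j h s a) (h + 1))) ^ 2
          - (∑ j ∈ Icc 1 n, wt M.H t n j * f (al.kvis j h s a) (al.st (al.kvis j h s a) (h + 1))) ^ 2))
        + 16 * M.H * Real.sqrt ((om M.H t n * (7 * iota S A K M.H δ)) *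
          Real.sqrt (om M.H t n * (7 * iota S A K M.H δ))) := by
  have hH : (1 : ℝ) ≤ M.H := by exact_mod_cast M.H_pos
  rcases subsingleton_or_nontrivial S with hS | hS
  · simp only [dev_subsingleton, mul_zero, Finset.sum_const_zero, neg_zero]
    positivity
  have hfe : fam al h s a i = f := by ext k x; exact hf k x
  have hge : fam al h s a j' = fun k x => (ex M h s a (f k) / M.H) * f k x := by
    ext k x; exact hj' k x
  have hι := iota_ge (S := S) (A := A) hK M.H_pos h0 h1
  have hy : 0 < om M.H t n * (7 * iota S A K M.H δ) :=
    mul_pos (om_pos _ M.H_pos t n hn) (by linarith)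
  have hb : ∀ j ∈ Icc 1 n, ∀ x, |f (al.kvis j h s a) x| ≤ M.H := by
    intro j hj x
    rw [Finset.mem_Icc] at hj
    have hs := (al.kvis_spec h hh s a j hj.1 (hj.2.trans hnN)).1
    rw [Finset.mem_Icc] at hs
    rw [← hf]; exact abs_fam al hh hs.1 (by omega) s a i x
  refine conc_emp n M.H _ (wt M.H t n)
    (fun j => f (al.kvis j h s a) (al.st (al.kvis j h s a) (h + 1)))
    (fun j => ex M h s a (f (al.kvis j h s a))) hH hy (fun j _ => wt_nonneg _ _ _ _)
    (wt_sum _ _ _ hn) (fun j hj => hb j hj _) (fun j hj => ex_abs_le _ _ _ _ _ _ (hb j hj)) ?_ ?_ ?_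
  · have := good_conc al hG hK h0 h1 hh s a i false t hn hnN
    simp only [dev_fams_false, mul_neg, Finset.sum_neg_distrib, neg_sq, hfe] at this
    exact this
  · have := good_hoeff al hG hK h0 h1 hh s a i t hn hnN
    rw [hfe] at this
    exact this
  · have := (abs_le.1 (good_hoeff al hG hK h0 h1 hh s a j' t hn hnN)).1
    rw [hge] at this
    have e : ∀ k, dev al h s a (fun k x => (ex M h s a (f k) / M.H) * f k x) k
        = (1 / M.H) * (ex M h s a (f k) * (f k (al.st k (h + 1)) - ex M h s a (f k))) := by
      intro k
      unfold dev
      simp only []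
      rw [ex_smul]; ring
    simp only [e] at this
    have e2 : ∑ j ∈ Icc 1 n, wt M.H t n j * ((1 / (M.H : ℝ)) * (ex M h s a (f (al.kvis j h s a)) *
        (f (al.kvis j h s a) (al.st (al.kvis j h s a) (h + 1)) - ex M h s a (f (al.kvis j h s a)))))
        = (1 / (M.H : ℝ)) * ∑ j ∈ Icc 1 n, wt M.H t n j * (ex M h s a (f (al.kvis j h s a)) *
        (f (al.kvis j h s a) (al.st (al.kvis j h s a) (h + 1)) - ex M h s a (f (al.kvis j h s a)))) := by
      rw [Finset.mul_sum]; exact Finset.sum_congr rfl (fun _ _ => by ring)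
    rw [e2] at this
    have h3 := mul_le_mul_of_nonneg_left this (show (0 : ℝ) ≤ M.H by linarith)
    have hc : ∀ Z : ℝ, (M.H : ℝ) * (1 / (M.H : ℝ) * Z) = Z := by
      intro Z
      have : (M.H : ℝ) ≠ 0 := by positivity
      field_simp
    rw [hc] at h3
    linarith

end good
end QES

namespace QES

set_option linter.unusedSectionVars false

lemma sqrt_y (z : ℝ) (N : ℕ) (hz : 1 ≤ z) (hN : 1 ≤ N) :
    Real.sqrt (z / N * Real.sqrt (z / N)) ≤ z * b34 N := by
  have hN0 : (0 : ℝ) < N := by exact_mod_cast hN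
  have h0 := b34_nonneg N
  rw [Real.sqrt_le_left (by positivity), mul_pow, b34_sq]
  have e : Real.sqrt (z / N) = Real.sqrt z * Real.sqrt (1 / N) := by
    rw [← Real.sqrt_mul (by linarith)]; congr 1; ring
  rw [e]
  have h1 : Real.sqrt z ≤ z := by
    rw [Real.sqrt_le_left (by linarith)]; nlinarith
  have h2 : 0 ≤ Real.sqrt (1 / (N : ℝ)) := Real.sqrt_nonneg _
  calc z / N * (Real.sqrt z * Real.sqrt (1 / N)) = (z * Real.sqrt z) * (1 / N * Real.sqrt (1 / N)) := by ring
    _ ≤ (z * z) * (1 / N * Real.sqrt (1 / N)) := by gcongr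
    _ = _ := by ring

/-- total sum of squared deviations is nondecreasing -/
lemma dev_mono (x : ℕ → ℝ) (n N : ℕ) (hn : 1 ≤ n) (hnN : n ≤ N) :
    ∑ i ∈ Icc 1 n, x i ^ 2 - (∑ i ∈ Icc 1 n, x i) ^ 2 / n
      ≤ ∑ i ∈ Icc 1 N, x i ^ 2 - (∑ i ∈ Icc 1 N, x i) ^ 2 / N := by
  induction N, hnN using Nat.le_induction with
  | base => exact le_rfl
  | succ N hN ih =>
    refine ih.trans ?_
    rw [Finset.sum_Icc_succ_top (by omega), Finset.sum_Icc_succ_top (by omega)]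
    set Z := ∑ i ∈ Icc 1 N, x i
    set y := x (N + 1)
    have hN0 : (0 : ℝ) < N := by exact_mod_cast (by omega : 0 < N)
    have e : y ^ 2 + Z ^ 2 / N - (Z + y) ^ 2 / (N + 1) = (N * y - Z) ^ 2 / (N * (N + 1)) := by
      field_simp; ring
    have h2 : 0 ≤ (N * y - Z) ^ 2 / (N * ((N : ℝ) + 1)) := by positivity
    push_cast
    linarith

lemma emp_var (x : ℕ → ℝ) (n : ℕ) (hn : 1 ≤ n) :
    (n : ℝ) * (∑ i ∈ Icc 1 n, 1 / (n : ℝ) * x i ^ 2 - (∑ i ∈ Icc 1 n, 1 / (n : ℝ) * x i) ^ 2)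
      = ∑ i ∈ Icc 1 n, x i ^ 2 - (∑ i ∈ Icc 1 n, x i) ^ 2 / n := by
  have hN0 : (0 : ℝ) < n := by exact_mod_cast hn
  rw [← Finset.mul_sum, ← Finset.mul_sum]
  field_simp

/-- the weighted sum of the empirical-standard-deviation terms -/
lemma ref_sum (H N : ℕ) (hH : 1 ≤ H) (hN : 1 ≤ N) (x : ℕ → ℝ) (z : ℝ) (hz : 0 ≤ z) :
    ∑ n ∈ Icc 1 N, lrProd H n N * Real.sqrt (z / n *
      (∑ i ∈ Icc 1 n, 1 / (n : ℝ) * x i ^ 2 - (∑ i ∈ Icc 1 n, 1 / (n : ℝ) * x i) ^ 2))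
    ≤ 2 * Real.sqrt (z / N) *
      Real.sqrt (∑ i ∈ Icc 1 N, 1 / (N : ℝ) * x i ^ 2 - (∑ i ∈ Icc 1 N, 1 / (N : ℝ) * x i) ^ 2) := by
  set E : ℕ → ℝ := fun n =>
    ∑ i ∈ Icc 1 n, 1 / (n : ℝ) * x i ^ 2 - (∑ i ∈ Icc 1 n, 1 / (n : ℝ) * x i) ^ 2 with hE
  have hN0 : (0 : ℝ) < N := by exact_mod_cast hN
  have hb : ∀ n ∈ Icc 1 N, Real.sqrt (z / n * E n) ≤ 1 / n * (N * (Real.sqrt (z / N) * Real.sqrt (E N))) := by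
    intro n hn
    rw [Finset.mem_Icc] at hn
    have hn0 : (0 : ℝ) < n := by exact_mod_cast hn.1
    have h1 : (n : ℝ) * E n ≤ N * E N := by
      rw [hE]; simp only []
      rw [emp_var x n hn.1, emp_var x N hN]
      exact dev_mono x n N hn.1 hn.2
    have h2 : z / n * E n ≤ (N / n) ^ 2 * (z / N * E N) := by
      have e1 : z / n * E n = z / n ^ 2 * (n * E n) := by field_simp
      have e2 : (N / n) ^ 2 * (z / N * E N) = z / n ^ 2 * (N * E N) := by field_simp
      rw [e1, e2]; gcongr
    calc Real.sqrt (z / n * E n) ≤ Real.sqrt ((N / n) ^ 2 * (z / N * E N)) := Real.sqrt_le_sqrt h2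
      _ = (N / n) * Real.sqrt (z / N * E N) := by
          rw [Real.sqrt_mul (by positivity), Real.sqrt_sq (by positivity)]
      _ = _ := by rw [Real.sqrt_mul (by positivity)]; ring
  have hw := lrProd_wsum_le H N hH hN (fun n => 1 / (n : ℝ)) (fun n => by positivity) (by
    intro n
    rcases Nat.eq_zero_or_pos n with h | h
    · subst h; simp
    · have : (0 : ℝ) < n := by exact_mod_cast h
      push_cast
      rw [mul_one_div_cancel (by positivity), mul_one_div_cancel (by positivity)])
  have h0 : 0 ≤ N * (Real.sqrt (z / N) * Real.sqrt (E N)) := by positivity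
  calc ∑ n ∈ Icc 1 N, lrProd H n N * Real.sqrt (z / n * E n)
      ≤ ∑ n ∈ Icc 1 N, lrProd H n N * (1 / n * (N * (Real.sqrt (z / N) * Real.sqrt (E N)))) :=
        Finset.sum_le_sum (fun n hn => mul_le_mul_of_nonneg_left (hb n hn) (lrProd_nonneg _ _ _))
    _ = (∑ n ∈ Icc 1 N, lrProd H n N * (1 / n)) * (N * (Real.sqrt (z / N) * Real.sqrt (E N))) := by
        rw [Finset.sum_mul]; exact Finset.sum_congr rfl (fun _ _ => by ring)
    _ ≤ (2 * (1 / N)) * (N * (Real.sqrt (z / N) * Real.sqrt (E N))) := by gcongr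
    _ = 2 * Real.sqrt (z / N) * Real.sqrt (E N) := by
        have : 2 * (1 / (N : ℝ)) * N = 2 := by field_simp
        linear_combination (Real.sqrt (z / N) * Real.sqrt (E N)) * this

section opt
variable {S A : Type} [Fintype S] [Fintype A] [Nonempty S] [Nonempty A]
  [DecidableEq S] [DecidableEq A] {M : MDP S A} {K : ℕ} {cb δ : ℝ} (al : QLAlg M K cb δ)

lemma muRef_eq {h : ℕ} (hh : h ∈ Icc 1 M.H) (s : S) (a : A) (k : ℕ) (hk : k ≤ K) :
    (al.N k h s a : ℝ) * al.muRef (k + 1) h s a = ∑ n ∈ Icc 1 (al.N k h s a),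
      al.VR (al.kvis n h s a) (h + 1) (al.st (al.kvis n h s a) (h + 1)) :=
  rec_mean al hh s a (fun k => al.muRef k h s a) (fun k => al.VR k (h + 1) (al.st k (h + 1)))
    (fun k hk => al.muRef_upd k hk h hh s a) k hk

lemma sigRef_eq {h : ℕ} (hh : h ∈ Icc 1 M.H) (s : S) (a : A) (k : ℕ) (hk : k ≤ K) :
    (al.N k h s a : ℝ) * al.sigRef (k + 1) h s a = ∑ n ∈ Icc 1 (al.N k h s a),
      al.VR (al.kvis n h s a) (h + 1) (al.st (al.kvis n h s a) (h + 1)) ^ 2 :=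
  rec_mean al hh s a (fun k => al.sigRef k h s a) (fun k => al.VR k (h + 1) (al.st k (h + 1)) ^ 2)
    (fun k hk => al.sigRef_upd k hk h hh s a) k hk

lemma muAdv_eq {h : ℕ} (hh : h ∈ Icc 1 M.H) (s : S) (a : A) (k : ℕ) (hk : k ≤ K) :
    al.muAdv (k + 1) h s a = ∑ n ∈ Icc 1 (al.N k h s a), lrProd M.H n (al.N k h s a) *
      (al.V (al.kvis n h s a) (h + 1) (al.st (al.kvis n h s a) (h + 1))
        - al.VR (al.kvis n h s a) (h + 1) (al.st (al.kvis n h s a) (h + 1))) := by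
  have := rec_lr al hh s a (fun k => al.muAdv k h s a)
    (fun k => al.V k (h + 1) (al.st k (h + 1)) - al.VR k (h + 1) (al.st k (h + 1)))
    (fun k hk => al.muAdv_upd k hk h hh s a) k hk
  rw [this, (al.mom_init h s a).2.2.1, mul_zero, zero_add]

lemma sigAdv_eq {h : ℕ} (hh : h ∈ Icc 1 M.H) (s : S) (a : A) (k : ℕ) (hk : k ≤ K) :
    al.sigAdv (k + 1) h s a = ∑ n ∈ Icc 1 (al.N k h s a), lrProd M.H n (al.N k h s a) *
      (al.V (al.kvis n h s a) (h + 1) (al.st (al.kvis n h s a) (h + 1))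
        - al.VR (al.kvis n h s a) (h + 1) (al.st (al.kvis n h s a) (h + 1))) ^ 2 := by
  have := rec_lr al hh s a (fun k => al.sigAdv k h s a)
    (fun k => (al.V k (h + 1) (al.st k (h + 1)) - al.VR k (h + 1) (al.st k (h + 1))) ^ 2)
    (fun k hk => al.sigAdv_upd k hk h hh s a) k hk
  rw [this, (al.mom_init h s a).2.2.2.1, mul_zero, zero_add]

/-- total weight -/
lemma lrProd_total (H N : ℕ) : lrProd H 0 N + ∑ n ∈ Icc 1 N, lrProd H n N = 1 := by
  rcases Nat.eq_zero_or_pos N with h | h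
  · subst h; simp [lrProd_zero_zero]
  · rw [lrProd_zero_pos H N h, lrProd_sum H N h, zero_add]

lemma kvis_bd {h : ℕ} (hh : h ∈ Icc 1 M.H) (s : S) (a : A) {k : ℕ} (hk : k ≤ K) {n : ℕ}
    (hn : n ∈ Icc 1 (al.N k h s a)) :
    1 ≤ al.kvis n h s a ∧ al.kvis n h s a ≤ k ∧ al.N (al.kvis n h s a) h s a = n ∧
      al.st (al.kvis n h s a) h = s ∧ al.ac (al.kvis n h s a) h = a := by
  rw [Finset.mem_Icc] at hn
  have h1 := al.kvis_spec h hh s a n hn.1 (hn.2.trans (N_mono al hh s a hk le_rfl))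
  exact ⟨(Finset.mem_Icc.1 h1.1).1, kvis_le al hh hk hn.1 hn.2, h1.2⟩

/-- Expansion of the reference-advantage estimate. -/
lemma QR_expand {h : ℕ} (hh : h ∈ Icc 1 M.H) (s : S) (a : A) (k : ℕ) (hk : k ≤ K) :
    al.QR (k + 1) h s a - al.BR (k + 1) h s a - M.Qstar h s a =
      lrProd M.H 0 (al.N k h s a) * (M.H - M.Qstar h s a)
      + ∑ n ∈ Icc 1 (al.N k h s a), lrProd M.H n (al.N k h s a) *
        (al.V (al.kvis n h s a) (h + 1) (al.st (al.kvis n h s a) (h + 1))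
          - al.VR (al.kvis n h s a) (h + 1) (al.st (al.kvis n h s a) (h + 1))
          + (∑ i ∈ Icc 1 n, al.VR (al.kvis i h s a) (h + 1) (al.st (al.kvis i h s a) (h + 1))) / n
          - ex M h s a (M.Vstar (h + 1))
          + cb * (M.H : ℝ) ^ 2 * iota S A K M.H δ * b34 n) := by
  have key := rec_lr al hh s a (fun k => al.QR k h s a - al.BR k h s a)
    (fun k => M.r h s a + al.V k (h + 1) (al.st k (h + 1)) - al.VR k (h + 1) (al.st k (h + 1))
      + al.muRef (k + 1) h s a + cb * (M.H : ℝ) ^ 2 * iota S A K M.H δ * b34 (al.N k h s a)) (by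
      intro k hk
      rw [al.QR_upd k hk h hh s a]
      split_ifs with hv
      · have h1 := al.bR_def k hk h hh
        rw [← hv.1, ← hv.2] at h1
        have h2 := al.dR_upd k hk h hh s a
        rw [if_pos hv] at h2
        rw [h1, h2]
        have hl := lr_pos M.H (al.N k h s a) (by rw [N_visit al hh hk hv]; omega)
        unfold b34
        field_simp
        ring
      · rw [al.BR_upd k hk h hh s a, if_neg hv]) k hk
  rw [key, al.QR_init h hh, (al.mom_init h s a).2.2.2.2.1, sub_zero]
  have ht := lrProd_total M.H (al.N k h s a)
  have e1 : M.Qstar h s a = lrProd M.H 0 (al.N k h s a) * M.Qstar h s a +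
      ∑ n ∈ Icc 1 (al.N k h s a), lrProd M.H n (al.N k h s a) * M.Qstar h s a := by
    rw [← Finset.sum_mul, ← add_mul, ht, one_mul]
  have e2 : ∀ X : ℝ, X - M.Qstar h s a = X - (lrProd M.H 0 (al.N k h s a) * M.Qstar h s a +
      ∑ n ∈ Icc 1 (al.N k h s a), lrProd M.H n (al.N k h s a) * M.Qstar h s a) := by
    intro X; rw [← e1]
  rw [e2, mul_sub, add_sub_add_comm, ← Finset.sum_sub_distrib]
  congr 1
  refine Finset.sum_congr rfl (fun n hn => ?_)
  obtain ⟨hk1, hk2, hk3, -⟩ := kvis_bd al hh s a hk hn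
  have hm := muRef_eq al hh s a (al.kvis n h s a) (hk2.trans hk)
  rw [hk3] at hm ⊢
  have hn0 : (0 : ℝ) < n := by exact_mod_cast (Finset.mem_Icc.1 hn).1
  rw [← hm, Qstar_bellman M h hh s a]
  field_simp
  ring

end opt
end QES

namespace QES

set_option linter.unusedSectionVars false

section opt
variable {S A : Type} [Fintype S] [Fintype A] [Nonempty S] [Nonempty A]
  [DecidableEq S] [DecidableEq A] {M : MDP S A} {K : ℕ} {cb δ : ℝ} (al : QLAlg M K cb δ)

lemma UCB_opt (hG : Good al) (hK : 1 ≤ K) (h0 : 0 < δ) (h1 : δ < 1) (hcb : 1000 ≤ cb) {h : ℕ}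
    (hh : h ∈ Icc 1 M.H) (s : S) (a : A) (k : ℕ) (hk : k ≤ K) (hN : 1 ≤ al.N k h s a)
    (hV : ∀ j, 1 ≤ j → j ≤ k → ∀ x, M.Vstar (h + 1) x ≤ al.V j (h + 1) x) :
    M.Qstar h s a ≤ al.QUCB (k + 1) h s a := by
  have hH : (1 : ℝ) ≤ M.H := by exact_mod_cast M.H_pos
  have hι := iota_nonneg (S := S) (A := A) hK M.H_pos h0 h1
  have key := rec_lr al hh s a (fun k => al.QUCB k h s a)
    (fun k => M.r h s a + al.V k (h + 1) (al.st k (h + 1))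
              + cb * Real.sqrt ((M.H : ℝ) ^ 3 * iota S A K M.H δ / (al.N k h s a)))
    (fun k hk => al.QUCB_upd k hk h hh s a) k hk
  rw [lrProd_zero_pos _ _ hN, zero_mul, zero_add] at key
  rw [key]
  set N := al.N k h s a with hNdef
  set B : ℕ → ℝ := fun n => cb * Real.sqrt ((M.H : ℝ) ^ 3 * iota S A K M.H δ / n) with hB
  have hNK : N ≤ al.N K h s a := N_mono al hh s a hk le_rfl
  -- the concentration bound
  have hc : -(∑ n ∈ Icc 1 N, lrProd M.H n N * dev al h s a (fun _ => M.Vstar (h + 1)) (al.kvis n h s a))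
      ≤ B N := by
    have hB0 : 0 ≤ B N := by rw [hB]; positivity
    rcases subsingleton_or_nontrivial S with hS | hS
    · simp only [dev_subsingleton, mul_zero, Finset.sum_const_zero, neg_zero]
      exact hB0
    · have := (abs_le.1 (good_hoeff al hG hK h0 h1 hh s a 0 true hN hNK)).1
      have hf : fam al h s a 0 = fun _ => M.Vstar (h + 1) := by ext k x; simp [fam]
      have e : ∑ j ∈ Icc 1 N, wt M.H true N j * dev al h s a (fam al h s a 0) (al.kvis j h s a)
          = ∑ n ∈ Icc 1 N, lrProd M.H n N * dev al h s a (fun _ => M.Vstar (h + 1)) (al.kvis n h s a) := by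
        refine Finset.sum_congr rfl (fun j hj => ?_)
        rw [hf]; simp [wt, (Finset.mem_Icc.1 hj).2]
      rw [e] at this
      have hN0 : (0 : ℝ) < N := by exact_mod_cast hN
      have h3 : 8 * M.H * Real.sqrt (om M.H true N * (7 * iota S A K M.H δ)) ≤ B N := by
        have e1 : om M.H true N * (7 * iota S A K M.H δ) = 14 * (M.H * iota S A K M.H δ / N) := by
          simp [om]; ring
        have e2 : (M.H : ℝ) ^ 3 * iota S A K M.H δ / N = (M.H : ℝ) ^ 2 * (M.H * iota S A K M.H δ / N) := by ring
        rw [hB]; simp only []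
        rw [e1, e2, Real.sqrt_mul (by norm_num), Real.sqrt_mul (by positivity), Real.sqrt_sq (by positivity)]
        have h14 : Real.sqrt 14 ≤ 4 := by rw [Real.sqrt_le_left (by norm_num)]; norm_num
        have hp : 0 ≤ M.H * Real.sqrt (M.H * iota S A K M.H δ / N) := by positivity
        calc 8 * (M.H : ℝ) * (Real.sqrt 14 * Real.sqrt (M.H * iota S A K M.H δ / N))
            = (8 * Real.sqrt 14) * (M.H * Real.sqrt (M.H * iota S A K M.H δ / N)) := by ring
          _ ≤ cb * (M.H * Real.sqrt (M.H * iota S A K M.H δ / N)) := by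
              apply mul_le_mul_of_nonneg_right _ hp; linarith
      linarith
  have hb : B N ≤ ∑ n ∈ Icc 1 N, lrProd M.H n N * B n := by
    apply lrProd_wsum_ge _ _ hN
    intro n hn
    rw [Finset.mem_Icc] at hn
    have : (0 : ℝ) < n := by exact_mod_cast hn.1
    have h2 : (n : ℝ) ≤ N := by exact_mod_cast hn.2
    rw [hB]; simp only []
    gcongr
  have hQ : M.Qstar h s a = ∑ n ∈ Icc 1 N, lrProd M.H n N * M.Qstar h s a := by
    rw [← Finset.sum_mul, lrProd_sum _ _ hN, one_mul]
  have hpt : ∑ n ∈ Icc 1 N, lrProd M.H n N * M.Qstar h s a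
      + ∑ n ∈ Icc 1 N, lrProd M.H n N * dev al h s a (fun _ => M.Vstar (h + 1)) (al.kvis n h s a)
      + ∑ n ∈ Icc 1 N, lrProd M.H n N * B n
      ≤ ∑ n ∈ Icc 1 N, lrProd M.H n N * (M.r h s a + al.V (al.kvis n h s a) (h + 1) (al.st (al.kvis n h s a) (h + 1))
              + cb * Real.sqrt ((M.H : ℝ) ^ 3 * iota S A K M.H δ / (al.N (al.kvis n h s a) h s a))) := by
    rw [← Finset.sum_add_distrib, ← Finset.sum_add_distrib]
    refine Finset.sum_le_sum (fun n hn => ?_)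
    obtain ⟨hk1, hk2, hk3, -⟩ := kvis_bd al hh s a hk hn
    rw [hk3, ← mul_add, ← mul_add]
    apply mul_le_mul_of_nonneg_left _ (lrProd_nonneg _ _ _)
    have := hV _ hk1 hk2 (al.st (al.kvis n h s a) (h + 1))
    rw [Qstar_bellman M h hh, hB]
    unfold dev
    linarith
  linarith

set_option maxHeartbeats 2000000 in
lemma QR_opt (hG : Good al) (hK : 1 ≤ K) (h0 : 0 < δ) (h1 : δ < 1) (hcb : 1000 ≤ cb) {h : ℕ}
    (hh : h ∈ Icc 1 M.H) (s : S) (a : A) (k : ℕ) (hk : k ∈ Icc 1 K)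
    (hv : s = al.st k h ∧ a = al.ac k h)
    (hV : ∀ j, 1 ≤ j → j ≤ k → ∀ x, M.Vstar (h + 1) x ≤ al.V j (h + 1) x) :
    M.Qstar h s a ≤ al.QR (k + 1) h s a := by
  have hH : (1 : ℝ) ≤ M.H := by exact_mod_cast M.H_pos
  have hh' := Finset.mem_Icc.1 hh
  have hι := iota_nonneg (S := S) (A := A) hK M.H_pos h0 h1
  have hkK := (Finset.mem_Icc.1 hk).2
  have key := QR_expand al hh s a k hkK
  have hN : 1 ≤ al.N k h s a := by rw [N_visit al hh hk hv]; omega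
  have hBR := al.BR_upd k hk h hh s a
  rw [if_pos hv] at hBR
  rw [lrProd_zero_pos _ _ hN, zero_mul, zero_add] at key
  have hmuR := muRef_eq al hh s a k hkK
  have hsigR := sigRef_eq al hh s a k hkK
  have hmuA := muAdv_eq al hh s a k hkK
  have hsigA := sigAdv_eq al hh s a k hkK
  set N := al.N k h s a with hNdef
  have hN0 : (0 : ℝ) < N := by exact_mod_cast hN
  have hNK : N ≤ al.N K h s a := N_mono al hh s a hkK le_rfl
  set ι := iota S A K M.H δ with hιdef
  -- clipped versions coincide with the unclipped ones
  have hV0 : ∀ j, 1 ≤ j → j ≤ k → ∀ x, 0 ≤ al.V j (h + 1) x := fun j hj1 hj2 x =>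
    (Vstar_bd M (h + 1) (by omega) x).1.trans (hV j hj1 hj2 x)
  have hVR0 : ∀ j, 1 ≤ j → j ≤ k → ∀ x, 0 ≤ al.VR j (h + 1) x := fun j hj1 hj2 x =>
    (hV0 j hj1 hj2 x).trans (V_VR al (Finset.mem_Icc.2 ⟨by omega, by omega⟩) x hj1 (by omega)).1
  have hVRc : ∀ j, 1 ≤ j → j ≤ k → VRc al h j = al.VR j (h + 1) := fun j hj1 hj2 => by
    ext x; exact max_eq_left (hVR0 j hj1 hj2 x)
  have hWc : ∀ j, 1 ≤ j → j ≤ k → Wc al h j = fun x => al.V j (h + 1) x - al.VR j (h + 1) x :=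
    fun j hj1 hj2 => by
      ext x; unfold Wc; rw [max_eq_left (hVR0 j hj1 hj2 x), max_eq_left (hV0 j hj1 hj2 x)]
  -- advantage part
  have hA : -∑ n ∈ Icc 1 N, lrProd M.H n N * dev al h s a (Wc al h) (al.kvis n h s a) ≤
      cb * Real.sqrt (ι / N) * (Real.sqrt M.H * Real.sqrt (al.sigAdv (k + 1) h s a - al.muAdv (k + 1) h s a ^ 2))
      + 224 * M.H ^ 2 * ι * b34 N := by
    rcases subsingleton_or_nontrivial S with hS | hS
    · simp only [dev_subsingleton, mul_zero, Finset.sum_const_zero, neg_zero]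
      have := b34_nonneg N
      positivity
    have hι2 := iota_ge (S := S) (A := A) hK M.H_pos h0 h1
    have := good_emp al hG hK h0 h1 hh s a (Wc al h) 1 2 (fun k x => rfl) (fun k x => rfl) true hN hNK
    have e : ∀ g : ℕ → ℝ, ∑ j ∈ Icc 1 N, wt M.H true N j * g j = ∑ j ∈ Icc 1 N, lrProd M.H j N * g j := by
      intro g
      refine Finset.sum_congr rfl (fun j hj => ?_)
      simp [wt, (Finset.mem_Icc.1 hj).2]
    rw [e, e, e] at this
    have e1 : ∑ j ∈ Icc 1 N, lrProd M.H j N * Wc al h (al.kvis j h s a) (al.st (al.kvis j h s a) (h + 1)) ^ 2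
        = al.sigAdv (k + 1) h s a := by
      rw [hsigA]
      refine Finset.sum_congr rfl (fun j hj => ?_)
      obtain ⟨hk1, hk2, hk3, -⟩ := kvis_bd al hh s a hkK hj
      rw [hWc _ hk1 hk2]
    have e2 : ∑ j ∈ Icc 1 N, lrProd M.H j N * Wc al h (al.kvis j h s a) (al.st (al.kvis j h s a) (h + 1))
        = al.muAdv (k + 1) h s a := by
      rw [hmuA]
      refine Finset.sum_congr rfl (fun j hj => ?_)
      obtain ⟨hk1, hk2, hk3, -⟩ := kvis_bd al hh s a hkK hj
      rw [hWc _ hk1 hk2]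
    rw [e1, e2] at this
    have ey : om M.H true N * (7 * ι) = (14 * M.H * ι) / N := by simp [om]; ring
    rw [ey] at this
    have hz : 1 ≤ 14 * M.H * ι := by nlinarith
    have h3 := sqrt_y _ N hz hN
    set E := al.sigAdv (k + 1) h s a - al.muAdv (k + 1) h s a ^ 2
    have e3 : Real.sqrt (14 * M.H * ι / N * E) = Real.sqrt 14 * (Real.sqrt (ι / N) * (Real.sqrt M.H * Real.sqrt E)) := by
      rw [show 14 * M.H * ι / N * E = 14 * (ι / N * (M.H * E)) by ring, Real.sqrt_mul (by norm_num),
        Real.sqrt_mul (by positivity), Real.sqrt_mul (by positivity)]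
    rw [e3] at this
    have h14 : Real.sqrt 14 ≤ 4 := by rw [Real.sqrt_le_left (by norm_num)]; norm_num
    have hp : 0 ≤ Real.sqrt (ι / N) * (Real.sqrt M.H * Real.sqrt E) := by positivity
    have h5 : 2 * (Real.sqrt 14 * (Real.sqrt (ι / N) * (Real.sqrt M.H * Real.sqrt E)))
        ≤ cb * (Real.sqrt (ι / N) * (Real.sqrt M.H * Real.sqrt E)) := by
      rw [← mul_assoc]
      apply mul_le_mul_of_nonneg_right _ hp; linarith
    have h6 : 16 * (M.H : ℝ) * Real.sqrt (14 * M.H * ι / N * Real.sqrt (14 * M.H * ι / N))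
        ≤ 16 * M.H * (14 * M.H * ι * b34 N) := by gcongr
    nlinarith
  -- reference part
  have hR : -∑ n ∈ Icc 1 N, lrProd M.H n N *
      ((∑ i ∈ Icc 1 n, dev al h s a (VRc al h) (al.kvis i h s a)) / n) ≤
      cb * Real.sqrt (ι / N) * Real.sqrt (al.sigRef (k + 1) h s a - al.muRef (k + 1) h s a ^ 2)
      + 224 * M.H ^ 2 * ι * b34 N := by
    have hb0 := b34_nonneg N
    rcases subsingleton_or_nontrivial S with hS | hS
    · simp only [dev_subsingleton, mul_zero, Finset.sum_const_zero, neg_zero, zero_div]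
      positivity
    have hι2 := iota_ge (S := S) (A := A) hK M.H_pos h0 h1
    set x : ℕ → ℝ := fun i => al.VR (al.kvis i h s a) (h + 1) (al.st (al.kvis i h s a) (h + 1)) with hx
    have hper : ∀ n ∈ Icc 1 N, -((∑ i ∈ Icc 1 n, dev al h s a (VRc al h) (al.kvis i h s a)) / n) ≤
        2 * Real.sqrt (7 * ι / n * (∑ i ∈ Icc 1 n, 1 / (n : ℝ) * x i ^ 2 - (∑ i ∈ Icc 1 n, 1 / (n : ℝ) * x i) ^ 2))
          + 112 * M.H * ι * b34 n := by
      intro n hn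
      have hn' := Finset.mem_Icc.1 hn
      have := good_emp al hG hK h0 h1 hh s a (VRc al h) 3 4 (fun k x => rfl) (fun k x => rfl) false
        hn'.1 (hn'.2.trans hNK)
      have e : ∀ g : ℕ → ℝ, ∑ j ∈ Icc 1 n, wt M.H false n j * g j = ∑ j ∈ Icc 1 n, 1 / (n : ℝ) * g j := by
        intro g
        refine Finset.sum_congr rfl (fun j hj => ?_)
        simp [wt, (Finset.mem_Icc.1 hj).2]
      rw [e, e, e] at this
      have e1 : ∀ i ∈ Icc 1 n, VRc al h (al.kvis i h s a) (al.st (al.kvis i h s a) (h + 1)) = x i := by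
        intro i hi
        obtain ⟨hk1, hk2, hk3, -⟩ := kvis_bd al hh s a hkK (n := i) (by
          rw [Finset.mem_Icc] at *; omega)
        rw [hVRc _ hk1 hk2]
      have ea : ∑ j ∈ Icc 1 n, 1 / (n : ℝ) * VRc al h (al.kvis j h s a) (al.st (al.kvis j h s a) (h + 1)) ^ 2
          = ∑ j ∈ Icc 1 n, 1 / (n : ℝ) * x j ^ 2 :=
        Finset.sum_congr rfl (fun i hi => by rw [e1 i hi])
      have eb : ∑ j ∈ Icc 1 n, 1 / (n : ℝ) * VRc al h (al.kvis j h s a) (al.st (al.kvis j h s a) (h + 1))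
          = ∑ j ∈ Icc 1 n, 1 / (n : ℝ) * x j :=
        Finset.sum_congr rfl (fun i hi => by rw [e1 i hi])
      have ec : ∑ j ∈ Icc 1 n, 1 / (n : ℝ) * dev al h s a (VRc al h) (al.kvis j h s a)
          = 1 / (n : ℝ) * ∑ j ∈ Icc 1 n, dev al h s a (VRc al h) (al.kvis j h s a) := by
        rw [Finset.mul_sum]
      rw [ea, eb, ec] at this
      have ey : om M.H false n * (7 * ι) = (7 * ι) / n := by simp [om]; ring
      rw [ey] at this
      have h3 := sqrt_y (7 * ι) n (by linarith) hn'.1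
      have h6 : 16 * (M.H : ℝ) * Real.sqrt (7 * ι / n * Real.sqrt (7 * ι / n))
        ≤ 16 * M.H * (7 * ι * b34 n) := by gcongr
      rw [div_eq_mul_one_div, mul_comm (∑ i ∈ Icc 1 n, dev al h s a (VRc al h) (al.kvis i h s a))]
      linarith
    have hs1 := ref_sum M.H N M.H_pos hN x (7 * ι) (by linarith)
    have hs2 := lrProd_wsum_le M.H N M.H_pos hN b34 b34_nonneg b34_mono
    have hE : ∑ i ∈ Icc 1 N, 1 / (N : ℝ) * x i ^ 2 - (∑ i ∈ Icc 1 N, 1 / (N : ℝ) * x i) ^ 2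
        = al.sigRef (k + 1) h s a - al.muRef (k + 1) h s a ^ 2 := by
      rw [← Finset.mul_sum, ← Finset.mul_sum, ← hmuR, ← hsigR]
      field_simp
    rw [hE] at hs1
    set E := al.sigRef (k + 1) h s a - al.muRef (k + 1) h s a ^ 2
    have e3 : Real.sqrt (7 * ι / N) = Real.sqrt 7 * Real.sqrt (ι / N) := by
      rw [show 7 * ι / N = 7 * (ι / N) by ring, Real.sqrt_mul (by norm_num)]
    rw [e3] at hs1
    have h7 : Real.sqrt 7 ≤ 3 := by rw [Real.sqrt_le_left (by norm_num)]; norm_num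
    have hp : 0 ≤ Real.sqrt (ι / N) * Real.sqrt E := by positivity
    have hs3 : -∑ n ∈ Icc 1 N, lrProd M.H n N *
      ((∑ i ∈ Icc 1 n, dev al h s a (VRc al h) (al.kvis i h s a)) / n)
      ≤ 2 * (∑ n ∈ Icc 1 N, lrProd M.H n N * Real.sqrt (7 * ι / n *
      (∑ i ∈ Icc 1 n, 1 / (n : ℝ) * x i ^ 2 - (∑ i ∈ Icc 1 n, 1 / (n : ℝ) * x i) ^ 2)))
      + 112 * M.H * ι * ∑ n ∈ Icc 1 N, lrProd M.H n N * b34 n := by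
      rw [← Finset.sum_neg_distrib, Finset.mul_sum, Finset.mul_sum, ← Finset.sum_add_distrib]
      refine Finset.sum_le_sum (fun n hn => ?_)
      have := mul_le_mul_of_nonneg_left (hper n hn) (lrProd_nonneg M.H n N)
      linarith
    have hs4 : 112 * M.H * ι * ∑ n ∈ Icc 1 N, lrProd M.H n N * b34 n ≤ 112 * M.H * ι * (2 * b34 N) := by
      gcongr
    have hs5 : 2 * (2 * (Real.sqrt 7 * Real.sqrt (ι / N)) * Real.sqrt E) ≤ cb * (Real.sqrt (ι / N) * Real.sqrt E) := by
      have : (4 * Real.sqrt 7) * (Real.sqrt (ι / N) * Real.sqrt E) ≤ cb * (Real.sqrt (ι / N) * Real.sqrt E) := by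
        apply mul_le_mul_of_nonneg_right _ hp; linarith
      linarith
    have hs6 : (M.H : ℝ) * (ι * b34 N) ≤ M.H ^ 2 * (ι * b34 N) := by
      apply mul_le_mul_of_nonneg_right _ (by positivity)
      nlinarith
    linarith
  -- bonus part
  have hb : b34 N ≤ ∑ n ∈ Icc 1 N, lrProd M.H n N * b34 n :=
    lrProd_wsum_ge _ _ hN _ (fun n hn => b34_anti _ _ (Finset.mem_Icc.1 hn).1 (Finset.mem_Icc.1 hn).2)
  have hpt : ∑ n ∈ Icc 1 N, lrProd M.H n N * dev al h s a (Wc al h) (al.kvis n h s a)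
      + ∑ n ∈ Icc 1 N, lrProd M.H n N *
      ((∑ i ∈ Icc 1 n, dev al h s a (VRc al h) (al.kvis i h s a)) / n)
      + cb * M.H ^ 2 * ι * ∑ n ∈ Icc 1 N, lrProd M.H n N * b34 n
      ≤ al.QR (k + 1) h s a - al.BR (k + 1) h s a - M.Qstar h s a := by
    rw [key, Finset.mul_sum, ← Finset.sum_add_distrib, ← Finset.sum_add_distrib]
    refine Finset.sum_le_sum (fun n hn => ?_)
    obtain ⟨hk1, hk2, hk3, -⟩ := kvis_bd al hh s a hkK hn
    have hn' := Finset.mem_Icc.1 hn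
    have hn0 : (0 : ℝ) < n := by exact_mod_cast hn'.1
    suffices hsuf : dev al h s a (Wc al h) (al.kvis n h s a)
        + (∑ i ∈ Icc 1 n, dev al h s a (VRc al h) (al.kvis i h s a)) / n ≤
        al.V (al.kvis n h s a) (h + 1) (al.st (al.kvis n h s a) (h + 1))
          - al.VR (al.kvis n h s a) (h + 1) (al.st (al.kvis n h s a) (h + 1))
          + (∑ i ∈ Icc 1 n, al.VR (al.kvis i h s a) (h + 1) (al.st (al.kvis i h s a) (h + 1))) / n
          - ex M h s a (M.Vstar (h + 1)) by
      have := mul_le_mul_of_nonneg_left hsuf (lrProd_nonneg M.H n N)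
      linarith
    have hd : ∑ i ∈ Icc 1 n, dev al h s a (VRc al h) (al.kvis i h s a)
        ≤ ∑ i ∈ Icc 1 n, al.VR (al.kvis i h s a) (h + 1) (al.st (al.kvis i h s a) (h + 1))
          - n * ex M h s a (al.VR (al.kvis n h s a) (h + 1)) := by
      have : (n : ℝ) * ex M h s a (al.VR (al.kvis n h s a) (h + 1)) =
          ∑ i ∈ Icc 1 n, ex M h s a (al.VR (al.kvis n h s a) (h + 1)) := by simp
      rw [this, ← Finset.sum_sub_distrib]
      refine Finset.sum_le_sum (fun i hi => ?_)
      have hi' := Finset.mem_Icc.1 hi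
      obtain ⟨hj1, hj2, hj3, -⟩ := kvis_bd al hh s a hkK (n := i) (by
          rw [Finset.mem_Icc]; omega)
      unfold dev
      rw [hVRc _ hj1 hj2]
      have := ex_mono M h s a (fun x => VR_anti al (h := h + 1) (Finset.mem_Icc.2 ⟨by omega, by omega⟩) x hj1
        (kvis_mono al hh hi'.1 hi'.2 (hn'.2.trans hNK)) (by omega))
      linarith
    have hd2 := div_le_div_of_nonneg_right hd hn0.le
    rw [sub_div, mul_div_cancel_left₀ _ hn0.ne'] at hd2
    have hw : dev al h s a (Wc al h) (al.kvis n h s a) =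
        al.V (al.kvis n h s a) (h + 1) (al.st (al.kvis n h s a) (h + 1))
          - al.VR (al.kvis n h s a) (h + 1) (al.st (al.kvis n h s a) (h + 1))
          - (ex M h s a (al.V (al.kvis n h s a) (h + 1)) - ex M h s a (al.VR (al.kvis n h s a) (h + 1))) := by
      unfold dev; rw [hWc _ hk1 hk2, ex_sub]
    have hve := ex_mono M h s a (hV _ hk1 hk2)
    rw [hw]
    linarith
  have hbb : cb * M.H ^ 2 * ι * b34 N ≤ cb * M.H ^ 2 * ι * ∑ n ∈ Icc 1 N, lrProd M.H n N * b34 n := by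
    gcongr
  have hbp : 448 * ((M.H : ℝ) ^ 2 * ι * b34 N) ≤ cb * (M.H ^ 2 * ι * b34 N) := by
    have := b34_nonneg N
    apply mul_le_mul_of_nonneg_right (by linarith)
    positivity
  linarith

/-- Optimism. -/
lemma optimism (hG : Good al) (hK : 1 ≤ K) (h0 : 0 < δ) (h1 : δ < 1) (hcb : 1000 ≤ cb) (k : ℕ)
    (hk1 : 1 ≤ k) (hk : k ≤ K + 1) :
    ∀ h ∈ Icc 1 (M.H + 1), ∀ s, M.Vstar h s ≤ al.V k h s := by
  have toV : ∀ k, 1 ≤ k → k ≤ K + 1 → (∀ h ∈ Icc 1 M.H, ∀ s a, M.Qstar h s a ≤ al.Q k h s a) →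
      ∀ h ∈ Icc 1 (M.H + 1), ∀ s, M.Vstar h s ≤ al.V k h s := by
    intro k hk1 hk hQ h hh s
    rcases Nat.lt_or_ge M.H h with hH | hH
    · have : h = M.H + 1 := by have := Finset.mem_Icc.1 hh; omega
      subst this
      rw [Vstar_term, (al.V_terminal k s).1]
    · have hh' : h ∈ Icc 1 M.H := by have := Finset.mem_Icc.1 hh; exact Finset.mem_Icc.2 ⟨this.1, hH⟩
      rw [V_eq al hh' s hk1 hk]
      unfold MDP.Vstar
      exact Finset.sup'_mono_fun (fun a _ => hQ h hh' s a)
  have main : ∀ k, 1 ≤ k → k ≤ K + 1 → ∀ h ∈ Icc 1 M.H, ∀ s a, M.Qstar h s a ≤ al.Q k h s a := by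
    intro k
    induction k using Nat.strong_induction_on with
    | _ k ih =>
      intro hk1 hk h hh s a
      have hh' := Finset.mem_Icc.1 hh
      rcases Nat.lt_or_ge 1 k with h2 | h2
      · obtain ⟨k, rfl⟩ : ∃ j, k = j + 1 := ⟨k - 1, by omega⟩
        have hkm : k ∈ Icc 1 K := Finset.mem_Icc.2 ⟨by omega, by omega⟩
        have hQ := ih k (by omega) (by omega) (by omega) h hh s a
        rw [al.Q_upd k hkm h hh s a]
        split_ifs with hv
        · have hV : ∀ j, 1 ≤ j → j ≤ k → ∀ x, M.Vstar (h + 1) x ≤ al.V j (h + 1) x := fun j hj1 hj2 x =>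
            toV j hj1 (by omega) (ih j (by omega) hj1 (by omega)) (h + 1)
              (Finset.mem_Icc.2 ⟨by omega, by omega⟩) x
          have hN : 1 ≤ al.N k h s a := by rw [N_visit al hh hkm hv]; omega
          exact le_min (QR_opt al hG hK h0 h1 hcb hh s a k hkm hv hV)
            (le_min (UCB_opt al hG hK h0 h1 hcb hh s a k (by omega) hN hV) hQ)
        · exact hQ
      · have : k = 1 := by omega
        subst this
        rw [al.Q_init h hh]
        exact (Qstar_bd M h hh'.1 s a).2
  exact toV k hk1 hk (main k hk1 hk)

end opt
end QES

namespace QES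

set_option linter.unusedSectionVars false

lemma swap_sum (H N : ℕ) (g : ℕ → ℝ) :
    ∑ n ∈ Icc 1 N, ∑ i ∈ Icc 1 (n - 1), lrProd H i (n - 1) * g i
      = ∑ i ∈ Icc 1 N, (∑ m ∈ Icc i (N - 1), lrProd H i m) * g i := by
  induction N with
  | zero => simp
  | succ N ih =>
    rw [Finset.sum_Icc_succ_top (by omega), Finset.sum_Icc_succ_top (by omega), ih, Nat.add_sub_cancel,
      Finset.Icc_eq_empty (by omega : ¬ (N + 1 ≤ N)), Finset.sum_empty, zero_mul, add_zero,
      ← Finset.sum_add_distrib]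
    refine Finset.sum_congr rfl (fun i hi => ?_)
    rw [Finset.mem_Icc] at hi
    obtain ⟨N, rfl⟩ : ∃ j, N = j + 1 := ⟨N - 1, by omega⟩
    rw [Nat.add_sub_cancel, Finset.sum_Icc_succ_top hi.2]
    ring

section reg
variable {S A : Type} [Fintype S] [Fintype A] [Nonempty S] [Nonempty A]
  [DecidableEq S] [DecidableEq A] {M : MDP S A} {K : ℕ} {cb δ : ℝ} (al : QLAlg M K cb δ)

/-- summand of `R₃` -/
noncomputable def Xr (h k : ℕ) : ℝ :=
  M.Vstar (h + 1) (al.st k (h + 1)) - al.VR k (h + 1) (al.st k (h + 1))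
    - ex M h (al.st k h) (al.ac k h) (M.Vstar (h + 1))
    + (∑ i ∈ Icc 1 (al.N k h (al.st k h) (al.ac k h)),
        al.VR (al.kvis i h (al.st k h) (al.ac k h)) (h + 1)
                (al.st (al.kvis i h (al.st k h) (al.ac k h)) (h + 1)))
      / (al.N k h (al.st k h) (al.ac k h) : ℝ)

/-- weight of `R₃` without the power factor -/
noncomputable def Lam (h k : ℕ) : ℝ :=
  ∑ n ∈ Icc (al.N k h (al.st k h) (al.ac k h)) (al.N (K - 1) h (al.st k h) (al.ac k h)),
      lrProd M.H (al.N k h (al.st k h) (al.ac k h)) n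

lemma Xr_eq {h k : ℕ} (hh : h ∈ Icc 1 M.H) (hk : k ∈ Icc 1 K) :
    (((M.Vstar (h + 1) (al.st k (h + 1)) - al.VR k (h + 1) (al.st k (h + 1)))
          - ∑ s', M.P h (al.st k h) (al.ac k h) s'
              * (M.Vstar (h + 1) s' - al.VR k (h + 1) s'))
        + (∑ i ∈ Icc 1 (al.N k h (al.st k h) (al.ac k h)),
            (al.VR (al.kvis i h (al.st k h) (al.ac k h)) (h + 1)
                (al.st (al.kvis i h (al.st k h) (al.ac k h)) (h + 1))
              - ∑ s', M.P h (al.st k h) (al.ac k h) s' * al.VR k (h + 1) s'))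
            / (al.N k h (al.st k h) (al.ac k h) : ℝ)) = Xr al h k := by
  have hN : 1 ≤ al.N k h (al.st k h) (al.ac k h) := by rw [N_visit al hh hk ⟨rfl, rfl⟩]; omega
  have hN0 : (0 : ℝ) < al.N k h (al.st k h) (al.ac k h) := by exact_mod_cast hN
  have e1 := ex_sub M h (al.st k h) (al.ac k h) (M.Vstar (h + 1)) (al.VR k (h + 1))
  have e2 : ∀ f, ∑ s', M.P h (al.st k h) (al.ac k h) s' * f s' = ex M h (al.st k h) (al.ac k h) f :=
    fun f => rfl
  have e3 := e2 (fun s' => M.Vstar (h + 1) s' - al.VR k (h + 1) s')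
  have e4 := e2 (fun s' => al.VR k (h + 1) s')
  rw [e3, e4, e1, Finset.sum_sub_distrib, sub_div]
  simp only [Finset.sum_const, Nat.card_Icc, Nat.add_sub_cancel, nsmul_eq_mul]
  rw [mul_div_cancel_left₀ _ hN0.ne']
  unfold Xr
  ring

lemma Xr_ge (hK : 1 ≤ K) (h0 : 0 < δ) (h1 : δ < 1) 
    (hO : ∀ k, 1 ≤ k → k ≤ K + 1 → ∀ h ∈ Icc 1 (M.H + 1), ∀ s, M.Vstar h s ≤ al.V k h s)
    {h k : ℕ} (hh : h ∈ Icc 1 M.H) (hk : k ∈ Icc 1 K) :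
    -(8 * M.H * iota S A K M.H δ) ≤ Xr al h k := by
  have hι := iota_nonneg (S := S) (A := A) hK M.H_pos h0 h1
  have hh' := Finset.mem_Icc.1 hh
  have hk' := Finset.mem_Icc.1 hk
  have hhm : h + 1 ∈ Icc 1 (M.H + 1) := Finset.mem_Icc.2 ⟨by omega, by omega⟩
  have hN : 1 ≤ al.N k h (al.st k h) (al.ac k h) := by rw [N_visit al hh hk ⟨rfl, rfl⟩]; omega
  have hN0 : (0 : ℝ) < al.N k h (al.st k h) (al.ac k h) := by exact_mod_cast hN
  unfold Xr
  rcases subsingleton_or_nontrivial S with hS | hS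
  · rw [ex_subsingleton M _ _ _ _ (al.st k (h + 1))]
    have : al.VR k (h + 1) (al.st k (h + 1)) ≤ (∑ i ∈ Icc 1 (al.N k h (al.st k h) (al.ac k h)),
        al.VR (al.kvis i h (al.st k h) (al.ac k h)) (h + 1)
                (al.st (al.kvis i h (al.st k h) (al.ac k h)) (h + 1)))
      / (al.N k h (al.st k h) (al.ac k h) : ℝ) := by
      rw [le_div_iff₀ hN0]
      have e : al.VR k (h + 1) (al.st k (h + 1)) * (al.N k h (al.st k h) (al.ac k h) : ℝ) =
          ∑ i ∈ Icc 1 (al.N k h (al.st k h) (al.ac k h)), al.VR k (h + 1) (al.st k (h + 1)) := by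
        simp [mul_comm]
      rw [e]
      refine Finset.sum_le_sum (fun i hi => ?_)
      obtain ⟨hj1, hj2, hj3, -⟩ := kvis_bd al hh _ _ hk'.2 hi
      rw [Subsingleton.elim (al.st (al.kvis i h (al.st k h) (al.ac k h)) (h + 1)) (al.st k (h + 1))]
      exact VR_anti al hhm _ hj1 hj2 (by omega)
    have : 0 ≤ 8 * M.H * iota S A K M.H δ := by positivity
    linarith
  · have hι2 := iota_ge (S := S) (A := A) hK M.H_pos h0 h1
    have a1 := (Vstar_bd M (h + 1) (by omega) (al.st k (h + 1))).1
    have a2 := (V_VR al hhm (al.st k (h + 1)) hk'.1 (by omega)).2.1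
    have a3 := (abs_le.1 (ex_abs_le M h (al.st k h) (al.ac k h) (M.Vstar (h + 1)) M.H (fun x => by
      have := Vstar_bd M (h + 1) (by omega) x
      rw [abs_of_nonneg this.1]; exact this.2))).2
    have a4 : 0 ≤ (∑ i ∈ Icc 1 (al.N k h (al.st k h) (al.ac k h)),
        al.VR (al.kvis i h (al.st k h) (al.ac k h)) (h + 1)
                (al.st (al.kvis i h (al.st k h) (al.ac k h)) (h + 1)))
      / (al.N k h (al.st k h) (al.ac k h) : ℝ) := by
      apply div_nonneg _ hN0.le
      refine Finset.sum_nonneg (fun i hi => ?_)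
      obtain ⟨hj1, hj2, hj3, -⟩ := kvis_bd al hh _ _ hk'.2 hi
      exact ((Vstar_bd M (h + 1) (by omega) _).1.trans (hO _ hj1 (by omega) _ hhm _)).trans
        (V_VR al hhm _ hj1 (by omega)).1
    have hH : (0 : ℝ) ≤ M.H := by positivity
    have : 8 * (M.H : ℝ) * (1 / 2) ≤ 8 * M.H * iota S A K M.H δ := by gcongr
    linarith

/-- Decomposition of a sum over episodes by visited state-action pair. -/
lemma split_sa (h : ℕ) (F : ℕ → ℝ) :
    ∑ k ∈ Icc 1 K, F k = ∑ p : S × A, ∑ k ∈ Icc 1 K,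
      if p.1 = al.st k h ∧ p.2 = al.ac k h then F k else 0 := by
  rw [Finset.sum_comm]
  refine Finset.sum_congr rfl (fun k _ => ?_)
  have : ∀ p : S × A, (p.1 = al.st k h ∧ p.2 = al.ac k h) ↔ p = (al.st k h, al.ac k h) := by
    intro p; rw [Prod.ext_iff]
  simp only [this]
  simp

/-- gap of the reference-advantage estimate -/
noncomputable def Dg (h k : ℕ) : ℝ :=
  al.QR k h (al.st k h) (al.ac k h) - al.BR k h (al.st k h) (al.ac k h)
    - M.Qstar h (al.st k h) (al.ac k h)

lemma per_sa (hK : 1 ≤ K) (h0 : 0 < δ) (h1 : δ < 1) (hcb : 1000 ≤ cb)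
    (hO : ∀ k, 1 ≤ k → k ≤ K + 1 → ∀ h ∈ Icc 1 (M.H + 1), ∀ s, M.Vstar h s ≤ al.V k h s)
    {h : ℕ} (hh : h ∈ Icc 1 M.H) (s : S) (a : A) :
    ∑ k ∈ Icc 1 K, (if s = al.st k h ∧ a = al.ac k h then Dg al h k else 0)
      ≤ M.H + 8 * cb * M.H ^ 2 * iota S A K M.H δ * (al.N K h s a : ℝ) ^ ((1 : ℝ) / 4)
      + ∑ k ∈ Icc 1 K, (if s = al.st k h ∧ a = al.ac k h then
          (1 + 1 / (M.H : ℝ)) * (al.V k (h + 1) (al.st k (h + 1)) - M.Vstar (h + 1) (al.st k (h + 1)))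
            + Lam al h k * Xr al h k else 0) := by
  have hι := iota_nonneg (S := S) (A := A) hK M.H_pos h0 h1
  have hh' := Finset.mem_Icc.1 hh
  have hH : (1 : ℝ) ≤ M.H := by exact_mod_cast M.H_pos
  have hhm : h + 1 ∈ Icc 1 (M.H + 1) := Finset.mem_Icc.2 ⟨by omega, by omega⟩
  rw [reindex al hh s a (fun _ k => Dg al h k) K le_rfl,
    reindex al hh s a (fun _ k => (1 + 1 / (M.H : ℝ)) * (al.V k (h + 1) (al.st k (h + 1)) - M.Vstar (h + 1) (al.st k (h + 1)))
            + Lam al h k * Xr al h k) K le_rfl]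
  set N := al.N K h s a with hNdef
  set ι := iota S A K M.H δ with hιdef
  rcases Nat.eq_zero_or_pos N with hz | hN
  · rw [hz]; simp
  set U : ℕ → ℝ := fun i => al.V (al.kvis i h s a) (h + 1) (al.st (al.kvis i h s a) (h + 1)) -
    M.Vstar (h + 1) (al.st (al.kvis i h s a) (h + 1)) with hU
  set X : ℕ → ℝ := fun i => Xr al h (al.kvis i h s a) with hX
  have hU0 : ∀ i ∈ Icc 1 N, 0 ≤ U i := by
    intro i hi
    obtain ⟨hj1, hj2, hj3, -⟩ := kvis_bd al hh s a le_rfl hi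
    exact sub_nonneg.2 (hO _ hj1 (by omega) _ hhm _)
  -- expansion at each visit
  have hD : ∀ n ∈ Icc 1 N, Dg al h (al.kvis n h s a) ≤ (if n = 1 then (M.H : ℝ) else 0)
      + ∑ i ∈ Icc 1 (n - 1), lrProd M.H i (n - 1) * (U i + X i + cb * M.H ^ 2 * ι * b34 i) := by
    intro n hn
    obtain ⟨hj1, hj2, hj3, hj4, hj5⟩ := kvis_bd al hh s a le_rfl hn
    have hn' := Finset.mem_Icc.1 hn
    have hx := QR_expand al hh s a (al.kvis n h s a - 1) (by omega)
    rw [Nat.sub_add_cancel hj1] at hx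
    have hNn : al.N (al.kvis n h s a - 1) h s a = n - 1 := by
      have := N_visit al hh (Finset.mem_Icc.2 ⟨hj1, hj2⟩) ⟨hj4.symm, hj5.symm⟩
      omega
    rw [hNn] at hx
    unfold Dg
    rw [hj4, hj5, hx]
    apply add_le_add
    · split_ifs with h1
      · subst h1
        rw [lrProd_zero_zero, one_mul]
        have := (Qstar_bd M h hh'.1 s a).1
        linarith
      · rw [lrProd_zero_pos _ _ (by omega), zero_mul]
    · apply le_of_eq
      refine Finset.sum_congr rfl (fun i hi => ?_)
      rw [Finset.mem_Icc] at hi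
      obtain ⟨hi1, hi2, hi3, hi4, hi5⟩ := kvis_bd al hh s a le_rfl (n := i) (by rw [Finset.mem_Icc]; omega)
      simp only [hU, hX, Xr]
      rw [hi4, hi5, hi3]
      ring
  have hsum := Finset.sum_le_sum hD
  rw [Finset.sum_add_distrib, swap_sum] at hsum
  have hf : ∑ n ∈ Icc 1 N, (if n = 1 then (M.H : ℝ) else 0) = M.H := by
    rw [Finset.sum_ite_eq', if_pos (Finset.mem_Icc.2 ⟨le_rfl, hN⟩)]
  rw [hf] at hsum
  set W : ℕ → ℝ := fun i => ∑ m ∈ Icc i (N - 1), lrProd M.H i m with hW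
  have e1 : ∑ i ∈ Icc 1 N, W i * (U i + X i + cb * M.H ^ 2 * ι * b34 i) =
      ∑ i ∈ Icc 1 N, W i * U i + ∑ i ∈ Icc 1 N, W i * X i + cb * M.H ^ 2 * ι * ∑ i ∈ Icc 1 N, W i * b34 i := by
    rw [Finset.mul_sum, ← Finset.sum_add_distrib, ← Finset.sum_add_distrib]
    exact Finset.sum_congr rfl (fun _ _ => by ring)
  rw [e1] at hsum
  have hWle : ∀ i ∈ Icc 1 N, W i ≤ 1 + 1 / (M.H : ℝ) := fun i hi =>
    lrProd_tail_le _ _ _ M.H_pos (Finset.mem_Icc.1 hi).1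
  have b1 : ∑ i ∈ Icc 1 N, W i * U i ≤ ∑ i ∈ Icc 1 N, (1 + 1 / (M.H : ℝ)) * U i :=
    Finset.sum_le_sum (fun i hi => mul_le_mul_of_nonneg_right (hWle i hi) (hU0 i hi))
  have b2 : ∑ i ∈ Icc 1 N, W i * b34 i ≤ 8 * (N : ℝ) ^ ((1 : ℝ) / 4) - 6 := by
    have h3 := sum_b34' N hN
    have h4 : ∑ i ∈ Icc 1 N, W i * b34 i ≤ 2 * ∑ m ∈ Icc 1 (N - 1), b34 m := by
      obtain ⟨N', hN'⟩ : ∃ j, N = j + 1 := ⟨N - 1, by omega⟩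
      have hWN : W N = 0 := by
        simp only [hW]; rw [Finset.Icc_eq_empty (by omega), Finset.sum_empty]
      rw [hN'] at hWN hWle ⊢
      rw [Finset.sum_Icc_succ_top (by omega), hWN, zero_mul, add_zero, Nat.add_sub_cancel, Finset.mul_sum]
      refine Finset.sum_le_sum (fun i hi => mul_le_mul_of_nonneg_right ?_ (b34_nonneg i))
      refine (hWle i ?_).trans ?_
      · rw [Finset.mem_Icc] at *; omega
      · have : 1 / (M.H : ℝ) ≤ 1 := by rw [div_le_one (by linarith)]; exact hH
        linarith
    linarith
  have b3 : ∑ i ∈ Icc 1 N, W i * X i ≤ ∑ i ∈ Icc 1 N, Lam al h (al.kvis i h s a) * X i + 8 * M.H * ι := by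
    have hL : ∀ i ∈ Icc 1 N, Lam al h (al.kvis i h s a) =
        ∑ n ∈ Icc i (al.N (K - 1) h s a), lrProd M.H i n := by
      intro i hi
      obtain ⟨hi1, hi2, hi3, hi4, hi5⟩ := kvis_bd al hh s a le_rfl hi
      unfold Lam; rw [hi4, hi5, hi3]
    have e2 : ∑ i ∈ Icc 1 N, Lam al h (al.kvis i h s a) * X i = ∑ i ∈ Icc 1 N,
        (∑ n ∈ Icc i (al.N (K - 1) h s a), lrProd M.H i n) * X i :=
      Finset.sum_congr rfl (fun i hi => by rw [hL i hi])
    rw [e2]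
    have hKm : K ∈ Icc 1 K := Finset.mem_Icc.2 ⟨hK, le_rfl⟩
    have hp : 0 ≤ 8 * (M.H : ℝ) * ι := by positivity
    by_cases hv : s = al.st K h ∧ a = al.ac K h
    · have := N_visit al hh hKm hv
      have hq : al.N (K - 1) h s a = N - 1 := by omega
      rw [hq]
      linarith
    · have hq : al.N (K - 1) h s a = N := (N_novisit al hh hKm hv).symm
      rw [hq]
      have e3 : ∑ i ∈ Icc 1 N, (∑ n ∈ Icc i N, lrProd M.H i n) * X i =
          ∑ i ∈ Icc 1 N, W i * X i + ∑ i ∈ Icc 1 N, lrProd M.H i N * X i := by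
        rw [← Finset.sum_add_distrib]
        refine Finset.sum_congr rfl (fun i hi => ?_)
        rw [Finset.mem_Icc] at hi
        simp only [hW]
        obtain ⟨N', hN'⟩ : ∃ j, N = j + 1 := ⟨N - 1, by omega⟩
        rw [hN'] at hi ⊢
        rw [Nat.add_sub_cancel, Finset.sum_Icc_succ_top hi.2]
        ring
      rw [e3]
      have e4 : -(8 * (M.H : ℝ) * ι) ≤ ∑ i ∈ Icc 1 N, lrProd M.H i N * X i := by
        calc -(8 * (M.H : ℝ) * ι) = ∑ i ∈ Icc 1 N, lrProd M.H i N * (-(8 * M.H * ι)) := by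
              rw [← Finset.sum_mul, lrProd_sum _ _ hN, one_mul]
          _ ≤ _ := Finset.sum_le_sum (fun i hi => by
              apply mul_le_mul_of_nonneg_left _ (lrProd_nonneg _ _ _)
              obtain ⟨hi1, hi2, hi3, hi4, hi5⟩ := kvis_bd al hh s a le_rfl hi
              exact Xr_ge al hK h0 h1 hO hh (Finset.mem_Icc.2 ⟨hi1, hi2⟩))
      linarith
  have b4 : cb * M.H ^ 2 * ι * ∑ i ∈ Icc 1 N, W i * b34 i ≤
      cb * M.H ^ 2 * ι * (8 * (N : ℝ) ^ ((1 : ℝ) / 4) - 6) := by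
    gcongr
  have b5 : 8 * (M.H : ℝ) * ι ≤ cb * M.H ^ 2 * ι * 6 := by
    have : 8 * (M.H * ι) ≤ 6 * cb * M.H * (M.H * ι) := by
      apply mul_le_mul_of_nonneg_right _ (by positivity)
      nlinarith
    linarith
  have e5 : ∑ n ∈ Icc 1 N, ((1 + 1 / (M.H : ℝ)) * U n + Lam al h (al.kvis n h s a) * X n)
      = ∑ n ∈ Icc 1 N, (1 + 1 / (M.H : ℝ)) * U n + ∑ n ∈ Icc 1 N, Lam al h (al.kvis n h s a) * X n :=
    Finset.sum_add_distrib
  have e6 : ∑ n ∈ Icc 1 N, ((1 + 1 / (M.H : ℝ)) * (al.V (al.kvis n h s a) (h + 1) (al.st (al.kvis n h s a) (h + 1)) -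
    M.Vstar (h + 1) (al.st (al.kvis n h s a) (h + 1))) + Lam al h (al.kvis n h s a) * Xr al h (al.kvis n h s a))
    = ∑ n ∈ Icc 1 N, ((1 + 1 / (M.H : ℝ)) * U n + Lam al h (al.kvis n h s a) * X n) := rfl
  rw [e6, e5]
  linarith

end reg
end QES

namespace QES

set_option linter.unusedSectionVars false

lemma telescope (H : ℕ) (D T : ℕ → ℝ) (c : ℝ) (hc : 0 ≤ c)
    (hD : ∀ h ∈ Icc 1 H, D h ≤ c * D (h + 1) + T h) :
    D 1 ≤ c ^ H * D (H + 1) + ∑ h ∈ Icc 1 H, c ^ (h - 1) * T h := by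
  have main : ∀ j, j ≤ H → D 1 ≤ c ^ j * D (j + 1) + ∑ h ∈ Icc 1 j, c ^ (h - 1) * T h := by
    intro j
    induction j with
    | zero => intro _; simp
    | succ j ih =>
      intro hj
      have h1 := ih (by omega)
      have h2 := hD (j + 1) (Finset.mem_Icc.2 ⟨by omega, hj⟩)
      have h3 := mul_le_mul_of_nonneg_left h2 (pow_nonneg hc j)
      rw [Finset.sum_Icc_succ_top (by omega), Nat.add_sub_cancel, pow_succ]
      nlinarith [h1, h3]
  exact main H le_rfl

section alg
variable {S A : Type} [Fintype S] [Fintype A] [Nonempty S] [Nonempty A]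
  [DecidableEq S] [DecidableEq A] {M : MDP S A} {K : ℕ} {cb δ : ℝ} (al : QLAlg M K cb δ)

lemma sum_N {h : ℕ} (hh : h ∈ Icc 1 M.H) : ∑ p : S × A, (al.N K h p.1 p.2 : ℝ) = K := by
  have h1 := split_sa al h (fun _ => (1 : ℝ))
  simp only [Finset.sum_const, Nat.card_Icc, nsmul_eq_mul, mul_one, Nat.add_sub_cancel] at h1
  rw [h1]
  refine Finset.sum_congr rfl (fun p _ => ?_)
  rw [reindex al hh p.1 p.2 (fun _ _ => (1 : ℝ)) K le_rfl]
  simp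

lemma sum_Dg (hK : 1 ≤ K) (h0 : 0 < δ) (h1 : δ < 1) (hcb : 1000 ≤ cb)
    (hO : ∀ k, 1 ≤ k → k ≤ K + 1 → ∀ h ∈ Icc 1 (M.H + 1), ∀ s, M.Vstar h s ≤ al.V k h s)
    {h : ℕ} (hh : h ∈ Icc 1 M.H) :
    ∑ k ∈ Icc 1 K, Dg al h k ≤
      ((M.H : ℝ) * (Fintype.card S) * (Fintype.card A)
      + 8 * cb * (M.H : ℝ) ^ 2
          * ((Fintype.card S : ℝ) * (Fintype.card A : ℝ)) ^ ((3 : ℝ) / 4)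
          * (K : ℝ) ^ ((1 : ℝ) / 4) * iota S A K M.H δ)
      + ∑ k ∈ Icc 1 K, ((1 + 1 / (M.H : ℝ)) * (al.V k (h + 1) (al.st k (h + 1)) - M.Vstar (h + 1) (al.st k (h + 1)))
            + Lam al h k * Xr al h k) := by
  have hι := iota_nonneg (S := S) (A := A) hK M.H_pos h0 h1
  rw [split_sa al h (fun k => Dg al h k), split_sa al h (fun k => (1 + 1 / (M.H : ℝ)) * (al.V k (h + 1) (al.st k (h + 1)) - M.Vstar (h + 1) (al.st k (h + 1)))
            + Lam al h k * Xr al h k)]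
  refine (Finset.sum_le_sum (fun p _ => per_sa al hK h0 h1 hcb hO hh p.1 p.2)).trans ?_
  rw [Finset.sum_add_distrib, Finset.sum_add_distrib, ← Finset.mul_sum]
  have hol := holder14 (Finset.univ : Finset (S × A)) (fun p => (al.N K h p.1 p.2 : ℝ)) (fun p => by positivity)
  rw [sum_N al hh, Finset.card_univ, Fintype.card_prod] at hol
  have hc : 0 ≤ 8 * cb * (M.H : ℝ) ^ 2 * iota S A K M.H δ := by
    have : 0 ≤ cb := by linarith
    positivity
  have h3 := mul_le_mul_of_nonneg_left hol hc
  rw [Finset.sum_const, Finset.card_univ, Fintype.card_prod, nsmul_eq_mul]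
  push_cast at h3 ⊢
  linarith

lemma regret_good (hG : Good al) (hK : 1 ≤ K) (h0 : 0 < δ) (h1 : δ < 1) (hcb : 1000 ≤ cb) :
    ∑ k ∈ Icc 1 K, (al.V k 1 (al.st k 1) - M.Vpol (al.pol k) 1 (al.st k 1))
      ≤ regR1 M K cb δ al + regR2 M K cb δ al + regR3 M K cb δ al := by
  have hO : ∀ k, 1 ≤ k → k ≤ K + 1 → ∀ h ∈ Icc 1 (M.H + 1), ∀ s, M.Vstar h s ≤ al.V k h s :=
    fun k hk1 hk => optimism al hG hK h0 h1 hcb k hk1 hk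
  have hH : (1 : ℝ) ≤ M.H := by exact_mod_cast M.H_pos
  have hc : (0 : ℝ) ≤ 1 / (M.H : ℝ) := by positivity
  set C : ℝ := (M.H : ℝ) * (Fintype.card S) * (Fintype.card A)
      + 8 * cb * (M.H : ℝ) ^ 2
          * ((Fintype.card S : ℝ) * (Fintype.card A : ℝ)) ^ ((3 : ℝ) / 4)
          * (K : ℝ) ^ ((1 : ℝ) / 4) * iota S A K M.H δ with hC
  have step : ∀ h ∈ Icc 1 M.H,
      (∑ k ∈ Icc 1 K, (al.V k h (al.st k h) - M.Vpol (al.pol k) h (al.st k h)))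
      ≤ (1 + 1 / (M.H : ℝ)) *
        (∑ k ∈ Icc 1 K, (al.V k (h + 1) (al.st k (h + 1)) - M.Vpol (al.pol k) (h + 1) (al.st k (h + 1))))
      + ((C + ∑ k ∈ Icc 1 K,
          ((∑ s', M.P h (al.st k h) (al.ac k h) s'
              * (M.Vstar (h + 1) s' - M.Vpol (al.pol k) (h + 1) s'))
            - (M.Vstar (h + 1) (al.st k (h + 1))
                - M.Vpol (al.pol k) (h + 1) (al.st k (h + 1)))))
        + ∑ k ∈ Icc 1 K, al.BR k h (al.st k h) (al.ac k h)
        + ∑ k ∈ Icc 1 K, Lam al h k * Xr al h k) := by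
    intro h hh
    have hD := sum_Dg al hK h0 h1 hcb hO hh
    rw [← hC] at hD
    have hle : ∑ k ∈ Icc 1 K, (al.V k h (al.st k h) - M.Vpol (al.pol k) h (al.st k h))
        ≤ ∑ k ∈ Icc 1 K, (Dg al h k + (al.BR k h (al.st k h) (al.ac k h)
          + ((∑ s', M.P h (al.st k h) (al.ac k h) s'
              * (M.Vstar (h + 1) s' - M.Vpol (al.pol k) (h + 1) s'))
            - (M.Vstar (h + 1) (al.st k (h + 1))
                - M.Vpol (al.pol k) (h + 1) (al.st k (h + 1))))
          + (1 + 1 / (M.H : ℝ)) * (M.Vstar (h + 1) (al.st k (h + 1))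
                - M.Vpol (al.pol k) (h + 1) (al.st k (h + 1))))) := by
      refine Finset.sum_le_sum (fun k hk => ?_)
      have hk' := Finset.mem_Icc.1 hk
      have e1 := V_eq_ac al hh hk'.1 (by omega)
      have e2 := Q_le_QR al hh (al.st k h) (al.ac k h) hk'.1 (by omega)
      have e3 := Vpol_bellman M (al.pol k) h hh (al.st k h)
      rw [← al.act_eq k h] at e3
      have e4 := Qstar_bellman M h hh (al.st k h) (al.ac k h)
      have e5 := ex_sub M h (al.st k h) (al.ac k h) (M.Vstar (h + 1)) (M.Vpol (al.pol k) (h + 1))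
      have e6 : ∑ s', M.P h (al.st k h) (al.ac k h) s'
              * (M.Vstar (h + 1) s' - M.Vpol (al.pol k) (h + 1) s') =
          ex M h (al.st k h) (al.ac k h) (fun x => M.Vstar (h + 1) x - M.Vpol (al.pol k) (h + 1) x) := rfl
      have e7 := Vpol_le M (al.pol k) (h + 1) (al.st k (h + 1))
      have e8 := mul_nonneg hc (sub_nonneg.2 e7)
      rw [e6, e5, e3]
      unfold Dg
      rw [e4]
      nlinarith [e1, e2, e8]
    refine hle.trans ?_
    rw [Finset.sum_add_distrib, Finset.sum_add_distrib, Finset.sum_add_distrib]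
    rw [Finset.sum_add_distrib] at hD
    have e9 : (1 + 1 / (M.H : ℝ)) *
        (∑ k ∈ Icc 1 K, (al.V k (h + 1) (al.st k (h + 1)) - M.Vpol (al.pol k) (h + 1) (al.st k (h + 1))))
        = ∑ k ∈ Icc 1 K, (1 + 1 / (M.H : ℝ)) * (al.V k (h + 1) (al.st k (h + 1)) - M.Vstar (h + 1) (al.st k (h + 1)))
        + ∑ k ∈ Icc 1 K, (1 + 1 / (M.H : ℝ)) * (M.Vstar (h + 1) (al.st k (h + 1))
                - M.Vpol (al.pol k) (h + 1) (al.st k (h + 1))) := by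
      rw [Finset.mul_sum, ← Finset.sum_add_distrib]
      exact Finset.sum_congr rfl (fun _ _ => by ring)
    rw [e9]
    linarith
  have key := telescope M.H (fun h => ∑ k ∈ Icc 1 K, (al.V k h (al.st k h) - M.Vpol (al.pol k) h (al.st k h)))
    _ (1 + 1 / (M.H : ℝ)) (by linarith) step
  have z : ∑ k ∈ Icc 1 K, (al.V k (M.H + 1) (al.st k (M.H + 1)) - M.Vpol (al.pol k) (M.H + 1) (al.st k (M.H + 1))) = 0 := by
    refine Finset.sum_eq_zero (fun k _ => ?_)
    rw [(al.V_terminal k _).1, Vpol_term, sub_zero]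
  beta_reduce at key
  rw [z, mul_zero, zero_add] at key
  refine key.trans (le_of_eq ?_)
  unfold regR1 regR2 regR3
  rw [← Finset.sum_add_distrib, ← Finset.sum_add_distrib]
  refine Finset.sum_congr rfl (fun h hh => ?_)
  have : ∑ k ∈ Icc 1 K, regLambda M K cb δ al h k *
      (((M.Vstar (h + 1) (al.st k (h + 1)) - al.VR k (h + 1) (al.st k (h + 1)))
          - ∑ s', M.P h (al.st k h) (al.ac k h) s'
              * (M.Vstar (h + 1) s' - al.VR k (h + 1) s'))
        + (∑ i ∈ Icc 1 (al.N k h (al.st k h) (al.ac k h)),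
            (al.VR (al.kvis i h (al.st k h) (al.ac k h)) (h + 1)
                (al.st (al.kvis i h (al.st k h) (al.ac k h)) (h + 1))
              - ∑ s', M.P h (al.st k h) (al.ac k h) s' * al.VR k (h + 1) s'))
            / (al.N k h (al.st k h) (al.ac k h) : ℝ))
      = (1 + 1 / (M.H : ℝ)) ^ (h - 1) * ∑ k ∈ Icc 1 K, Lam al h k * Xr al h k := by
    rw [Finset.mul_sum]
    refine Finset.sum_congr rfl (fun k hk => ?_)
    rw [Xr_eq al hh hk, ← mul_assoc]
    rfl
  rw [this]
  ring

end alg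
end QES

namespace QES

set_option linter.unusedSectionVars false

section agree
variable {S A : Type} [Fintype S] [Fintype A] [Nonempty S] [Nonempty A]
  [DecidableEq S] [DecidableEq A] {M : MDP S A} {K : ℕ} {cb δ : ℝ}

/-- the two runs have the same trajectory in all episodes before `k` -/
def RelE (k : ℕ) (al al' : QLAlg M K cb δ) : Prop :=
  ∀ j, 1 ≤ j → j < k → (∀ h ∈ Icc 1 (M.H + 1), al.st j h = al'.st j h) ∧
    (∀ h ∈ Icc 1 M.H, al.ac j h = al'.ac j h)

/-- the internal state of the two runs agrees at the beginning of episode `k` -/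
structure Agr (k : ℕ) (al al' : QLAlg M K cb δ) : Prop where
  N : ∀ h ∈ Icc 1 M.H, ∀ s a, al.N (k - 1) h s a = al'.N (k - 1) h s a
  QUCB : ∀ h ∈ Icc 1 M.H, ∀ s a, al.QUCB k h s a = al'.QUCB k h s a
  QLCB : ∀ h ∈ Icc 1 M.H, ∀ s a, al.QLCB k h s a = al'.QLCB k h s a
  QR : ∀ h ∈ Icc 1 M.H, ∀ s a, al.QR k h s a = al'.QR k h s a
  Q : ∀ h ∈ Icc 1 M.H, ∀ s a, al.Q k h s a = al'.Q k h s a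
  muRef : ∀ h ∈ Icc 1 M.H, ∀ s a, al.muRef k h s a = al'.muRef k h s a
  sigRef : ∀ h ∈ Icc 1 M.H, ∀ s a, al.sigRef k h s a = al'.sigRef k h s a
  muAdv : ∀ h ∈ Icc 1 M.H, ∀ s a, al.muAdv k h s a = al'.muAdv k h s a
  sigAdv : ∀ h ∈ Icc 1 M.H, ∀ s a, al.sigAdv k h s a = al'.sigAdv k h s a
  BR : ∀ h ∈ Icc 1 M.H, ∀ s a, al.BR k h s a = al'.BR k h s a
  dR : ∀ h ∈ Icc 1 M.H, ∀ s a, al.dR k h s a = al'.dR k h s a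
  V : ∀ h ∈ Icc 1 (M.H + 1), ∀ s, al.V k h s = al'.V k h s
  VLCB : ∀ h ∈ Icc 1 (M.H + 1), ∀ s, al.VLCB k h s = al'.VLCB k h s
  VR : ∀ h ∈ Icc 1 (M.H + 1), ∀ s, al.VR k h s = al'.VR k h s
  uref : ∀ h ∈ Icc 1 M.H, ∀ s, al.uref k h s ↔ al'.uref k h s

lemma ext_top {f g : ℕ → S → ℝ} {H : ℕ} (h1 : ∀ h ∈ Icc 1 H, ∀ s, f h s = g h s)
    (h2 : ∀ s, f (H + 1) s = 0 ∧ g (H + 1) s = 0) : ∀ h ∈ Icc 1 (H + 1), ∀ s, f h s = g h s := by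
  intro h hh s
  rw [Finset.mem_Icc] at hh
  rcases Nat.lt_or_ge H h with h3 | h3
  · obtain rfl : h = H + 1 := by omega
    rw [(h2 s).1, (h2 s).2]
  · exact h1 h (Finset.mem_Icc.2 ⟨hh.1, h3⟩) s

lemma agr_init (al al' : QLAlg M K cb δ) : Agr 1 al al' where
  N := fun h hh s a => by simp [al.N_init, al'.N_init]
  QUCB := fun h hh s a => by rw [al.QUCB_init h hh, al'.QUCB_init h hh]
  QLCB := fun h hh s a => by rw [al.QLCB_init h hh, al'.QLCB_init h hh]
  QR := fun h hh s a => by rw [al.QR_init h hh, al'.QR_init h hh]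
  Q := fun h hh s a => by rw [al.Q_init h hh, al'.Q_init h hh]
  muRef := fun h hh s a => by rw [(al.mom_init h s a).1, (al'.mom_init h s a).1]
  sigRef := fun h hh s a => by rw [(al.mom_init h s a).2.1, (al'.mom_init h s a).2.1]
  muAdv := fun h hh s a => by rw [(al.mom_init h s a).2.2.1, (al'.mom_init h s a).2.2.1]
  sigAdv := fun h hh s a => by rw [(al.mom_init h s a).2.2.2.1, (al'.mom_init h s a).2.2.2.1]
  BR := fun h hh s a => by rw [(al.mom_init h s a).2.2.2.2.1, (al'.mom_init h s a).2.2.2.2.1]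
  dR := fun h hh s a => by rw [(al.mom_init h s a).2.2.2.2.2, (al'.mom_init h s a).2.2.2.2.2]
  V := ext_top (fun h hh s => by rw [al.V_init h hh, al'.V_init h hh])
    (fun s => ⟨(al.V_terminal 1 s).1, (al'.V_terminal 1 s).1⟩)
  VLCB := ext_top (fun h hh s => by rw [al.VLCB_init h hh, al'.VLCB_init h hh])
    (fun s => ⟨(al.V_terminal 1 s).2.2, (al'.V_terminal 1 s).2.2⟩)
  VR := ext_top (fun h hh s => by rw [al.VR_init h hh, al'.VR_init h hh])
    (fun s => ⟨(al.V_terminal 1 s).2.1, (al'.V_terminal 1 s).2.1⟩)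
  uref := fun h hh s => ⟨fun _ => al'.uref_init h s, fun _ => al.uref_init h s⟩

lemma agr_step {al al' : QLAlg M K cb δ} {k : ℕ} (hk : k ∈ Icc 1 K) (I : Agr k al al')
    (hst : ∀ h ∈ Icc 1 (M.H + 1), al.st k h = al'.st k h)
    (hac : ∀ h ∈ Icc 1 M.H, al.ac k h = al'.ac k h) : Agr (k + 1) al al' := by
  have m1 : ∀ h ∈ Icc 1 M.H, h ∈ Icc 1 (M.H + 1) := fun h hh => by
    rw [Finset.mem_Icc] at *; omega
  have m2 : ∀ h ∈ Icc 1 M.H, h + 1 ∈ Icc 1 (M.H + 1) := fun h hh => by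
    rw [Finset.mem_Icc] at *; omega
  have N : ∀ h ∈ Icc 1 M.H, ∀ s a, al.N k h s a = al'.N k h s a := fun h hh s a => by
    rw [al.N_upd k hk h hh, al'.N_upd k hk h hh, I.N h hh, hst h (m1 h hh), hac h hh]
  have QUCB : ∀ h ∈ Icc 1 M.H, ∀ s a, al.QUCB (k + 1) h s a = al'.QUCB (k + 1) h s a := fun h hh s a => by
    rw [al.QUCB_upd k hk h hh, al'.QUCB_upd k hk h hh, N h hh, hst h (m1 h hh), hac h hh, I.QUCB h hh,
      hst (h + 1) (m2 h hh), I.V (h + 1) (m2 h hh)]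
  have QLCB : ∀ h ∈ Icc 1 M.H, ∀ s a, al.QLCB (k + 1) h s a = al'.QLCB (k + 1) h s a := fun h hh s a => by
    rw [al.QLCB_upd k hk h hh, al'.QLCB_upd k hk h hh, N h hh, hst h (m1 h hh), hac h hh, I.QLCB h hh,
      hst (h + 1) (m2 h hh), I.VLCB (h + 1) (m2 h hh)]
  have muRef : ∀ h ∈ Icc 1 M.H, ∀ s a, al.muRef (k + 1) h s a = al'.muRef (k + 1) h s a := fun h hh s a => by
    rw [al.muRef_upd k hk h hh, al'.muRef_upd k hk h hh, N h hh, hst h (m1 h hh), hac h hh, I.muRef h hh,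
      hst (h + 1) (m2 h hh), I.VR (h + 1) (m2 h hh)]
  have sigRef : ∀ h ∈ Icc 1 M.H, ∀ s a, al.sigRef (k + 1) h s a = al'.sigRef (k + 1) h s a := fun h hh s a => by
    rw [al.sigRef_upd k hk h hh, al'.sigRef_upd k hk h hh, N h hh, hst h (m1 h hh), hac h hh, I.sigRef h hh,
      hst (h + 1) (m2 h hh), I.VR (h + 1) (m2 h hh)]
  have muAdv : ∀ h ∈ Icc 1 M.H, ∀ s a, al.muAdv (k + 1) h s a = al'.muAdv (k + 1) h s a := fun h hh s a => by
    rw [al.muAdv_upd k hk h hh, al'.muAdv_upd k hk h hh, N h hh, hst h (m1 h hh), hac h hh, I.muAdv h hh,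
      hst (h + 1) (m2 h hh), I.VR (h + 1) (m2 h hh), I.V (h + 1) (m2 h hh)]
  have sigAdv : ∀ h ∈ Icc 1 M.H, ∀ s a, al.sigAdv (k + 1) h s a = al'.sigAdv (k + 1) h s a := fun h hh s a => by
    rw [al.sigAdv_upd k hk h hh, al'.sigAdv_upd k hk h hh, N h hh, hst h (m1 h hh), hac h hh, I.sigAdv h hh,
      hst (h + 1) (m2 h hh), I.VR (h + 1) (m2 h hh), I.V (h + 1) (m2 h hh)]
  have BR : ∀ h ∈ Icc 1 M.H, ∀ s a, al.BR (k + 1) h s a = al'.BR (k + 1) h s a := fun h hh s a => by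
    rw [al.BR_upd k hk h hh, al'.BR_upd k hk h hh, N h hh, hst h (m1 h hh), hac h hh, I.BR h hh,
      muRef h hh, sigRef h hh, muAdv h hh, sigAdv h hh]
  have dR : ∀ h ∈ Icc 1 M.H, ∀ s a, al.dR (k + 1) h s a = al'.dR (k + 1) h s a := fun h hh s a => by
    rw [al.dR_upd k hk h hh, al'.dR_upd k hk h hh, hst h (m1 h hh), hac h hh, I.BR h hh,
      BR h hh, I.dR h hh]
  have bR : ∀ h ∈ Icc 1 M.H, al.bR k h = al'.bR k h := fun h hh => by
    rw [al.bR_def k hk h hh, al'.bR_def k hk h hh, hst h (m1 h hh), hac h hh, N h hh, BR h hh, dR h hh]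
  have QR : ∀ h ∈ Icc 1 M.H, ∀ s a, al.QR (k + 1) h s a = al'.QR (k + 1) h s a := fun h hh s a => by
    rw [al.QR_upd k hk h hh, al'.QR_upd k hk h hh, N h hh, hst h (m1 h hh), hac h hh, I.QR h hh,
      hst (h + 1) (m2 h hh), I.VR (h + 1) (m2 h hh), I.V (h + 1) (m2 h hh), muRef h hh, bR h hh]
  have Q : ∀ h ∈ Icc 1 M.H, ∀ s a, al.Q (k + 1) h s a = al'.Q (k + 1) h s a := fun h hh s a => by
    rw [al.Q_upd k hk h hh, al'.Q_upd k hk h hh, hst h (m1 h hh), hac h hh, I.Q h hh, QR h hh, QUCB h hh]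
  have V : ∀ h ∈ Icc 1 M.H, ∀ s, al.V (k + 1) h s = al'.V (k + 1) h s := fun h hh s => by
    rw [al.V_upd k hk h hh, al'.V_upd k hk h hh, hst h (m1 h hh), I.V h (m1 h hh)]
    simp only [Q h hh]
  have VLCB : ∀ h ∈ Icc 1 M.H, ∀ s, al.VLCB (k + 1) h s = al'.VLCB (k + 1) h s := fun h hh s => by
    rw [al.VLCB_upd k hk h hh, al'.VLCB_upd k hk h hh, hst h (m1 h hh), I.VLCB h (m1 h hh)]
    simp only [QLCB h hh]
  have VR : ∀ h ∈ Icc 1 M.H, ∀ s, al.VR (k + 1) h s = al'.VR (k + 1) h s := fun h hh s => by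
    have a1 := al.VR_upd_pos k hk h hh
    have a2 := al.VR_upd_neg k hk h hh
    have a3 := al.VR_upd_other k hk h hh s
    have b1 := al'.VR_upd_pos k hk h hh
    have b2 := al'.VR_upd_neg k hk h hh
    have b3 := al'.VR_upd_other k hk h hh s
    rw [hst h (m1 h hh)] at a1 a2 a3
    rw [V h hh, VLCB h hh, I.uref h hh] at a1 a2
    by_cases hs : s = al'.st k h
    · by_cases hc : 1 < al'.V (k + 1) h (al'.st k h) - al'.VLCB (k + 1) h (al'.st k h) ∨ al'.uref k h (al'.st k h)
      · rw [hs, a1 hc, b1 hc]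
      · rw [hs, a2 hc, b2 hc, I.VR h (m1 h hh)]
    · rw [a3 hs, b3 hs, I.VR h (m1 h hh)]
  have uref : ∀ h ∈ Icc 1 M.H, ∀ s, al.uref (k + 1) h s ↔ al'.uref (k + 1) h s := fun h hh s => by
    have a1 := al.uref_upd_pos k hk h hh
    have a2 := al.uref_upd_neg k hk h hh
    have a3 := al.uref_upd_other k hk h hh s
    have b1 := al'.uref_upd_pos k hk h hh
    have b2 := al'.uref_upd_neg k hk h hh
    have b3 := al'.uref_upd_other k hk h hh s
    rw [hst h (m1 h hh)] at a1 a2 a3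
    rw [V h hh, VLCB h hh] at a1 a2
    by_cases hs : s = al'.st k h
    · subst hs
      by_cases hc : 1 < al'.V (k + 1) h (al'.st k h) - al'.VLCB (k + 1) h (al'.st k h)
      · exact ⟨fun _ => b1 hc, fun _ => a1 hc⟩
      · exact ⟨fun hx => absurd hx (a2 hc), fun hx => absurd hx (b2 hc)⟩
    · rw [a3 hs, b3 hs, I.uref h hh]
  exact
  { N := N, QUCB := QUCB, QLCB := QLCB, QR := QR, Q := Q, muRef := muRef, sigRef := sigRef
    muAdv := muAdv, sigAdv := sigAdv, BR := BR, dR := dR, uref := uref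
    V := ext_top V (fun s => ⟨(al.V_terminal _ s).1, (al'.V_terminal _ s).1⟩)
    VLCB := ext_top VLCB (fun s => ⟨(al.V_terminal _ s).2.2, (al'.V_terminal _ s).2.2⟩)
    VR := ext_top VR (fun s => ⟨(al.V_terminal _ s).2.1, (al'.V_terminal _ s).2.1⟩) }

lemma agr_of_rel {al al' : QLAlg M K cb δ} {k : ℕ} (hk1 : 1 ≤ k) (hk : k ≤ K + 1)
    (hr : RelE k al al') : Agr k al al' := by
  induction k, hk1 using Nat.le_induction with
  | base => exact agr_init al al'
  | succ k hk1 ih =>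
    have h1 := hr k hk1 (by omega)
    exact agr_step (Finset.mem_Icc.2 ⟨hk1, by omega⟩)
      (ih (by omega) (fun j hj1 hj => hr j hj1 (by omega))) h1.1 h1.2

/-- the deterministic coefficient of `Yt` is determined by history and current state-action -/
lemma fams_agr {al al' : QLAlg M K cb δ} {k : ℕ} (I : Agr k al al') {h : ℕ} (hh : h ∈ Icc 1 M.H)
    (s : S) (a : A) (i : Fin 5) (sg : Bool) : fams al h s a i sg k = fams al' h s a i sg k := by
  have m2 : h + 1 ∈ Icc 1 (M.H + 1) := by rw [Finset.mem_Icc] at *; omega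
  have e1 : VRc al h k = VRc al' h k := by
    ext x; unfold VRc; rw [I.VR _ m2]
  have e2 : Wc al h k = Wc al' h k := by
    ext x; unfold Wc; rw [I.VR _ m2, I.V _ m2]
  ext x
  unfold fams fam
  rw [e1, e2]

lemma Yt_agr {al al' : QLAlg M K cb δ} {k : ℕ} (hr : RelE k al al') (hk : k ≤ K + 1)
    {h : ℕ} (hh : h ∈ Icc 1 M.H) (s : S) (a : A) (i : Fin 5) (sg t : Bool) (n m j : ℕ)
    (hj1 : 1 ≤ j) (hj : j < k) : Yt al h s a i sg t n m j = Yt al' h s a i sg t n m j := by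
  have m1 : h ∈ Icc 1 (M.H + 1) := by rw [Finset.mem_Icc] at *; omega
  have m2 : h + 1 ∈ Icc 1 (M.H + 1) := by rw [Finset.mem_Icc] at *; omega
  have I : Agr j al al' := agr_of_rel hj1 (by omega) (fun j' a1 a2 => hr j' a1 (by omega))
  have I' : Agr (j + 1) al al' := agr_of_rel (by omega) (by omega) (fun j' a1 a2 => hr j' a1 (by omega))
  have hN := I'.N h hh s a
  rw [Nat.add_sub_cancel] at hN
  have h1 := hr j hj1 hj
  unfold Yt dev
  rw [h1.1 h m1, h1.2 h hh, hN, h1.1 (h + 1) m2, fams_agr I hh]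

end agree
end QES

namespace QES

set_option linter.unusedSectionVars false

lemma fin_fact {Ω β : Type} [Finite β] [MeasurableSpace β] [MeasurableSingletonClass β]
    (m : MeasurableSpace Ω) (X : Ω → β) (hX : Measurable[m] X) (F : Ω → ℝ)
    (hF : ∀ ω ω', X ω = X ω' → F ω = F ω') : Measurable[m] F ∧ ∃ C, ∀ ω, |F ω| ≤ C := by
  have hfac : F = (Function.extend X F 0) ∘ X := by
    ext ω
    rw [Function.comp_apply, Function.FactorsThrough.extend_apply (fun a b h => hF a b h)]
  constructor
  · rw [hfac]
    exact (measurable_of_countable _).comp hX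
  · obtain ⟨C, hC⟩ := (Set.finite_range (fun b => |Function.extend X F 0 b|)).bddAbove
    refine ⟨C, fun ω => ?_⟩
    rw [hfac]
    exact hC ⟨X ω, rfl⟩

lemma exp_ineq (x : ℝ) (hx : |x| ≤ 1 / 2) : Real.exp (x - x ^ 2) ≤ 1 + x := by
  have hx' := abs_le.1 hx
  have h1 : 0 < 1 + x := by linarith
  rw [← Real.le_log_iff_exp_le h1]
  -- log(1+x) ≥ x - x²
  have h2 := Real.one_sub_inv_le_log_of_pos (x := 1 + x) h1
  rcases le_or_gt 0 x with h | h
  · have h3 : x - x ^ 2 ≤ 1 - (1 + x)⁻¹ := by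
      have : (1 + x)⁻¹ ≤ 1 - x + x ^ 2 := by
        rw [inv_eq_one_div, div_le_iff₀ h1]
        nlinarith [pow_nonneg h 3]
      linarith
    linarith
  · obtain ⟨u, rfl⟩ : ∃ u, x = -u := ⟨-x, by ring⟩
    have hu : 0 ≤ u := by linarith
    have hu2 : u ≤ 1 / 2 := by linarith
    have h4 := Real.abs_log_sub_add_sum_range_le (x := u) (by rw [abs_of_nonneg hu]; linarith) 5
    rw [abs_of_nonneg hu] at h4
    simp only [Finset.sum_range_succ, Finset.sum_range_zero] at h4
    have h5 := (abs_le.1 h4).1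
    have h6 : u ^ (5 + 1) / (1 - u) ≤ 2 * u ^ 6 := by
      rw [div_le_iff₀ (by linarith)]
      have := mul_nonneg (pow_nonneg hu 6) (by linarith : 0 ≤ 1 - 2 * u)
      norm_num
      linarith
    norm_num at h5 h6
    have q : 0 ≤ 1 / 2 - u / 3 - u ^ 2 / 4 - u ^ 3 / 5 - 2 * u ^ 4 := by
      have p2 : u ^ 2 ≤ u / 2 := by nlinarith
      have p3 : u ^ 3 ≤ u / 4 := by nlinarith
      have p4 : u ^ 4 ≤ u / 8 := by nlinarith
      linarith
    have q2 := mul_nonneg (sq_nonneg u) q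
    have h7 : 1 + -u = 1 - u := by ring
    rw [h7]
    have h8 : u ^ 2 * (1 / 2 - u / 3 - u ^ 2 / 4 - u ^ 3 / 5 - 2 * u ^ 4)
      = u ^ 2 / 2 - u ^ 3 / 3 - u ^ 4 / 4 - u ^ 5 / 5 - 2 * u ^ 6 := by ring
    rw [h8] at q2
    have h9 : (-u) ^ 2 = u ^ 2 := by ring
    rw [h9]
    linarith

lemma meas_pi2 {Ω ι κ β : Type} [MeasurableSpace β] (m : MeasurableSpace Ω) (f : Ω → ι → κ → β)
    (hf : ∀ i j, Measurable[m] (fun ω => f ω i j)) : Measurable[m] f :=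
  measurable_pi_lambda _ (fun i => measurable_pi_lambda _ (fun j => hf i j))

section meas
variable {S A : Type} [Fintype S] [Fintype A] [Nonempty S] [Nonempty A]
  [DecidableEq S] [DecidableEq A]
  [MeasurableSpace S] [MeasurableSingletonClass S]
  [MeasurableSpace A] [MeasurableSingletonClass A] {M : MDP S A} {K : ℕ} {cb δ : ℝ}
  {Ω : Type} {m0 : MeasurableSpace Ω} {μ : Measure Ω}
  {𝓕 : Filtration ℕ m0} (alg : Ω → QLAlg M K cb δ)

/-- history of the episodes before `k` -/
noncomputable def hist (k : ℕ) (ω : Ω) : (Fin k → Fin (M.H + 2) → S) × (Fin k → Fin (M.H + 1) → A) :=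
  (fun j h => if 1 ≤ (j : ℕ) ∧ 1 ≤ (h : ℕ) then (alg ω).st j h else Classical.arbitrary S,
   fun j h => if 1 ≤ (j : ℕ) ∧ 1 ≤ (h : ℕ) then (alg ω).ac j h else Classical.arbitrary A)

lemma hist_rel {k : ℕ} {ω ω' : Ω} (hX : hist alg k ω = hist alg k ω') : RelE k (alg ω) (alg ω') := by
  intro j hj1 hj
  constructor
  · intro h hh
    rw [Finset.mem_Icc] at hh
    have := congrFun (congrFun (congrArg Prod.fst hX) ⟨j, hj⟩) ⟨h, by omega⟩
    simpa [hist, hj1, hh.1] using this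
  · intro h hh
    rw [Finset.mem_Icc] at hh
    have := congrFun (congrFun (congrArg Prod.snd hX) ⟨j, hj⟩) ⟨h, by omega⟩
    simpa [hist, hj1, hh.1] using this

variable {alg} (hT : IsMDPTrajectory μ M K 𝓕 (fun k h ω => (alg ω).st k h)
          (fun k h ω => (alg ω).ac k h))
include hT

lemma hist_meas {k : ℕ} (hk : k ≤ K + 1) (τ : ℕ) (hτ : (k - 1) * M.H + 1 ≤ τ) :
    Measurable[𝓕 τ] (hist alg k) := by
  have tm : ∀ j h, 1 ≤ j → j < k → h ≤ M.H + 1 → (j - 1) * M.H + h ≤ τ := by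
    intro j h h1 h2 h3
    have : (j - 1 + 1) * M.H ≤ (k - 1) * M.H := Nat.mul_le_mul_right _ (by omega)
    rw [Nat.add_mul] at this
    omega
  have hs : Measurable[𝓕 τ] (fun ω => (hist alg k ω).1) := by
    refine meas_pi2 (𝓕 τ) _ (fun j h => ?_)
    simp only [hist]
    by_cases hc : 1 ≤ (j : ℕ) ∧ 1 ≤ (h : ℕ)
    · simp only [hc, and_self, if_true]
      exact (hT.1 j (Finset.mem_Icc.2 ⟨hc.1, by omega⟩) h (Finset.mem_Icc.2 ⟨hc.2, by omega⟩)).mono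
        (𝓕.mono (tm j h hc.1 j.2 (by omega))) le_rfl
    · simp only [hc, if_false]
      exact measurable_const
  have ha : Measurable[𝓕 τ] (fun ω => (hist alg k ω).2) := by
    refine meas_pi2 (𝓕 τ) _ (fun j h => ?_)
    simp only [hist]
    by_cases hc : 1 ≤ (j : ℕ) ∧ 1 ≤ (h : ℕ)
    · simp only [hc, and_self, if_true]
      exact (hT.2.1 j (Finset.mem_Icc.2 ⟨hc.1, by omega⟩) h (Finset.mem_Icc.2 ⟨hc.2, by omega⟩)).mono
        (𝓕.mono (tm j h hc.1 j.2 (by omega))) le_rfl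
    · simp only [hc, if_false]
      exact measurable_const
  exact Measurable.prodMk hs ha

lemma measE {k : ℕ} (hk : k ≤ K + 1) (F : Ω → ℝ)
    (hF : ∀ ω ω', RelE k (alg ω) (alg ω') → F ω = F ω') : Measurable F ∧ ∃ C, ∀ ω, |F ω| ≤ C := by
  have h1 := hist_meas hT hk _ le_rfl
  exact fin_fact m0 (hist alg k) (h1.mono (𝓕.le _) le_rfl) F (fun ω ω' h => hF ω ω' (hist_rel alg h))

lemma measC {k : ℕ} (hk : k ∈ Icc 1 K) {h : ℕ} (hh : h ∈ Icc 1 M.H) (F : Ω → ℝ)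
    (hF : ∀ ω ω', RelE k (alg ω) (alg ω') → (alg ω).st k h = (alg ω').st k h →
      (alg ω).ac k h = (alg ω').ac k h → F ω = F ω') :
    Measurable[𝓕 ((k - 1) * M.H + h)] F ∧ ∃ C, ∀ ω, |F ω| ≤ C := by
  have hh' := Finset.mem_Icc.1 hh
  have hk' := Finset.mem_Icc.1 hk
  have h1 := hist_meas hT (k := k) (by omega) ((k - 1) * M.H + h) (by omega)
  have h2 := hT.1 k hk h (Finset.mem_Icc.2 ⟨by omega, by omega⟩)
  have h3 := hT.2.1 k hk h hh
  refine fin_fact (𝓕 ((k - 1) * M.H + h)) (fun ω => (hist alg k ω, (alg ω).st k h, (alg ω).ac k h))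
    (h1.prodMk (h2.prodMk h3)) F (fun ω ω' e => ?_)
  simp only [Prod.mk.injEq] at e
  exact hF ω ω' (hist_rel alg e.1) e.2.1 e.2.2

lemma int_of_bdd [IsProbabilityMeasure μ] {F : Ω → ℝ} (h : Measurable F ∧ ∃ C, ∀ ω, |F ω| ≤ C) : Integrable F μ := by
  obtain ⟨h1, C, h2⟩ := h
  exact Integrable.of_bound h1.aestronglyMeasurable C (Filter.Eventually.of_forall h2)

lemma mart_zero [IsProbabilityMeasure μ] {k : ℕ} (hk : k ∈ Icc 1 K) {h : ℕ} (hh : h ∈ Icc 1 M.H) (s' : S) (G : Ω → ℝ)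
    (hG : Measurable[𝓕 ((k - 1) * M.H + h)] G) (hb : ∃ C, ∀ ω, |G ω| ≤ C) :
    ∫ ω, G ω * (if (alg ω).st k (h + 1) = s' then (1 : ℝ) else 0) ∂μ
      = ∫ ω, G ω * M.P h ((alg ω).st k h) ((alg ω).ac k h) s' ∂μ := by
  have hle := 𝓕.le ((k - 1) * M.H + h)
  have hX : Measurable (fun ω => if (alg ω).st k (h + 1) = s' then (1 : ℝ) else 0) := by
    have hh' := Finset.mem_Icc.1 hh
    have h2 := (hT.1 k hk (h + 1) (Finset.mem_Icc.2 ⟨by omega, by omega⟩)).mono (𝓕.le _) le_rfl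
    exact Measurable.ite (h2 (measurableSet_singleton s')) measurable_const measurable_const
  have hXi : Integrable (fun ω => if (alg ω).st k (h + 1) = s' then (1 : ℝ) else 0) μ := by
    refine Integrable.of_bound hX.aestronglyMeasurable 1 (Filter.Eventually.of_forall (fun ω => ?_))
    split_ifs <;> simp
  obtain ⟨C, hC⟩ := hb
  have hGX : Integrable (G * fun ω => if (alg ω).st k (h + 1) = s' then (1 : ℝ) else 0) μ :=
    hXi.bdd_mul (c := C) (hG.mono hle le_rfl).aestronglyMeasurable (Filter.Eventually.of_forall hC)
  have e1 := condExp_mul_of_stronglyMeasurable_left (μ := μ) hG.stronglyMeasurable hGX hXi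
  have e2 := hT.2.2 k hk h hh s'
  calc _ = ∫ ω, (μ[G * (fun ω => if (alg ω).st k (h + 1) = s' then (1 : ℝ) else 0)|𝓕 ((k - 1) * M.H + h)]) ω ∂μ :=
        (integral_condExp hle).symm
    _ = _ := by
      refine integral_congr_ae ?_
      filter_upwards [e1, e2] with ω h1 h2
      rw [h1, Pi.mul_apply, h2]

end meas
end QES

namespace QES

set_option linter.unusedSectionVars false

section alg
variable {S A : Type} [Fintype S] [Fintype A] [Nonempty S] [Nonempty A]
  [DecidableEq S] [DecidableEq A] {M : MDP S A} {K : ℕ} {cb δ : ℝ} (al : QLAlg M K cb δ)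

lemma abs_Yt {h : ℕ} (hh : h ∈ Icc 1 M.H) (s : S) (a : A) (i : Fin 5) (sg t : Bool) {n m : ℕ}
    (hn : n ∈ Icc 1 K) (hm : m ∈ Icc 1 K) {k : ℕ} (hk : k ∈ Icc 1 K) :
    |Yt al h s a i sg t n m k| ≤ 1 / 2 := by
  have hk' := Finset.mem_Icc.1 hk
  have hn' := (Finset.mem_Icc.1 hn).1
  have hm' : (1 : ℝ) ≤ m := by exact_mod_cast (Finset.mem_Icc.1 hm).1
  have hH : (1 : ℝ) ≤ M.H := by exact_mod_cast M.H_pos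
  unfold Yt
  split_ifs with hv
  · have hN : 1 ≤ al.N k h s a := by rw [N_visit al hh hk hv]; omega
    have w1 := wt_le M.H M.H_pos t n _ hn' hN
    have w0 := wt_nonneg M.H t n (al.N k h s a)
    have o0 := om_pos M.H M.H_pos t n hn'
    have d := abs_dev al (h := h) (k := k) s a (fams al h s a i sg) M.H
      (abs_fams al hh hk'.1 (by omega) s a i sg)
    have sm : 1 ≤ Real.sqrt m := by rw [Real.one_le_sqrt]; exact hm'
    have hden : 0 < 4 * (M.H : ℝ) * om M.H t n * Real.sqrt m := by positivity
    rw [abs_mul, abs_mul, abs_of_nonneg w0, abs_of_nonneg (by positivity)]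
    rw [div_mul_eq_mul_div, one_mul, div_mul_eq_mul_div, div_le_iff₀ hden]
    calc _ ≤ om M.H t n * (2 * M.H) := mul_le_mul w1 d (abs_nonneg _) o0.le
      _ ≤ (om M.H t n * (2 * M.H)) * Real.sqrt m := le_mul_of_one_le_right (by positivity) sm
      _ = _ := by ring
  · simp

end alg

section meas
variable {S A : Type} [Fintype S] [Fintype A] [Nonempty S] [Nonempty A]
  [DecidableEq S] [DecidableEq A]
  [MeasurableSpace S] [MeasurableSingletonClass S]
  [MeasurableSpace A] [MeasurableSingletonClass A] {M : MDP S A} {K : ℕ} {cb δ : ℝ}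
  {Ω : Type} {m0 : MeasurableSpace Ω} {μ : Measure Ω}
  {𝓕 : Filtration ℕ m0} {alg : Ω → QLAlg M K cb δ}
  (hT : IsMDPTrajectory μ M K 𝓕 (fun k h ω => (alg ω).st k h)
          (fun k h ω => (alg ω).ac k h))
include hT

lemma step_zero [IsProbabilityMeasure μ] {h : ℕ} (hh : h ∈ Icc 1 M.H) (s : S) (a : A) (i : Fin 5) (sg t : Bool) {n m : ℕ}
    {k : ℕ} (hk : k ∈ Icc 1 K)
    (E : Ω → ℝ) (hE : ∀ ω ω', RelE k (alg ω) (alg ω') → E ω = E ω') :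
    ∫ ω, E ω * Yt (alg ω) h s a i sg t n m k ∂μ = 0 := by
  have hk' := Finset.mem_Icc.1 hk
  set G : S → Ω → ℝ := fun s' ω => E ω * (if s = (alg ω).st k h ∧ a = (alg ω).ac k h then
    1 / (4 * (M.H : ℝ) * om M.H t n * Real.sqrt m) * wt M.H t n ((alg ω).N k h s a)
      * fams (alg ω) h s a i sg k s' else 0) with hGd
  have hG : ∀ s', Measurable[𝓕 ((k - 1) * M.H + h)] (G s') ∧ ∃ C, ∀ ω, |G s' ω| ≤ C := by
    intro s'
    refine measC hT hk hh _ (fun ω ω' r1 r2 r3 => ?_)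
    have I := agr_of_rel hk'.1 (by omega) r1
    simp only [hGd]
    rw [hE ω ω' r1, (alg ω).N_upd k hk h hh, (alg ω').N_upd k hk h hh, I.N h hh, r2, r3,
      fams_agr I hh]
  have hle := 𝓕.le ((k - 1) * M.H + h)
  have hh' := Finset.mem_Icc.1 hh
  have e0 : ∀ ω, E ω * Yt (alg ω) h s a i sg t n m k
      = ∑ s', (G s' ω * (if (alg ω).st k (h + 1) = s' then (1 : ℝ) else 0)
          - G s' ω * M.P h ((alg ω).st k h) ((alg ω).ac k h) s') := by
    intro ω
    rw [Finset.sum_sub_distrib]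
    simp only [hGd, Yt]
    split_ifs with hv
    · simp only [mul_ite, mul_one, mul_zero, Finset.sum_ite_eq, Finset.mem_univ, if_true]
      rw [← hv.1, ← hv.2]
      unfold dev ex
      rw [mul_sub, mul_sub, Finset.mul_sum, Finset.mul_sum]
      congr 1
      exact Finset.sum_congr rfl (fun _ _ => by ring)
    · simp
  simp_rw [e0]
  have i1 : ∀ s', Integrable (fun ω => G s' ω * (if (alg ω).st k (h + 1) = s' then (1 : ℝ) else 0)) μ := by
    intro s'
    refine int_of_bdd hT ⟨?_, ?_⟩
    · have h2 := (hT.1 k hk (h + 1) (Finset.mem_Icc.2 ⟨by omega, by omega⟩)).mono (𝓕.le _) le_rfl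
      exact ((hG s').1.mono hle le_rfl).mul
        (Measurable.ite (h2 (measurableSet_singleton s')) measurable_const measurable_const)
    · obtain ⟨C, hC⟩ := (hG s').2
      refine ⟨C, fun ω => ?_⟩
      have := hC ω
      split_ifs
      · simpa using this
      · simpa using (abs_nonneg _).trans this
  have i2 : ∀ s', Integrable (fun ω => G s' ω * M.P h ((alg ω).st k h) ((alg ω).ac k h) s') μ := by
    intro s'
    have := measC hT hk hh (fun ω => G s' ω * M.P h ((alg ω).st k h) ((alg ω).ac k h) s')
      (fun ω ω' r1 r2 r3 => by
        have I := agr_of_rel hk'.1 (by omega) r1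
        simp only [hGd]
        rw [hE ω ω' r1, (alg ω).N_upd k hk h hh, (alg ω').N_upd k hk h hh, I.N h hh, r2, r3,
          fams_agr I hh])
    exact int_of_bdd hT ⟨this.1.mono hle le_rfl, this.2⟩
  have i3 : ∀ s', Integrable (fun ω => G s' ω * (if (alg ω).st k (h + 1) = s' then (1 : ℝ) else 0)
      - G s' ω * M.P h ((alg ω).st k h) ((alg ω).ac k h) s') μ := fun s' => (i1 s').sub (i2 s')
  rw [integral_finsetSum _ (fun s' _ => i3 s')]
  refine Finset.sum_eq_zero (fun s' _ => ?_)
  rw [integral_sub (i1 s') (i2 s'), mart_zero hT hk hh s' (G s') (hG s').1 (hG s').2, sub_self]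

lemma mgf [IsProbabilityMeasure μ] {h : ℕ} (hh : h ∈ Icc 1 M.H) (s : S) (a : A) (i : Fin 5) (sg t : Bool) {n m : ℕ}
    (hn : n ∈ Icc 1 K) (hm : m ∈ Icc 1 K) (k : ℕ) (hk : k ≤ K) :
    Integrable (fun ω => Real.exp (∑ j ∈ Icc 1 k, (Yt (alg ω) h s a i sg t n m j - (Yt (alg ω) h s a i sg t n m j) ^ 2))) μ ∧
    ∫ ω, Real.exp (∑ j ∈ Icc 1 k, (Yt (alg ω) h s a i sg t n m j - (Yt (alg ω) h s a i sg t n m j) ^ 2)) ∂μ ≤ 1 := by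
  have det : ∀ k, k ≤ K → ∀ ω ω', RelE (k + 1) (alg ω) (alg ω') →
    Real.exp (∑ j ∈ Icc 1 k, (Yt (alg ω) h s a i sg t n m j - (Yt (alg ω) h s a i sg t n m j) ^ 2))
     = Real.exp (∑ j ∈ Icc 1 k, (Yt (alg ω') h s a i sg t n m j - (Yt (alg ω') h s a i sg t n m j) ^ 2)) := by
    intro k hk ω ω' hr
    congr 1
    refine Finset.sum_congr rfl (fun j hj => ?_)
    rw [Finset.mem_Icc] at hj
    rw [Yt_agr hr (by omega) hh s a i sg t n m j hj.1 (by omega)]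
  have int : ∀ k, k ≤ K → Integrable (fun ω => Real.exp (∑ j ∈ Icc 1 k, (Yt (alg ω) h s a i sg t n m j - (Yt (alg ω) h s a i sg t n m j) ^ 2))) μ :=
    fun k hk => int_of_bdd hT (measE hT (k := k + 1) (by omega) _ (det k hk))
  refine ⟨int k hk, ?_⟩
  induction k with
  | zero => simp
  | succ k ih =>
    have hk1 : k + 1 ∈ Icc 1 K := Finset.mem_Icc.2 ⟨by omega, hk⟩
    have ih' := ih (by omega)
    have iEY : Integrable (fun ω => Real.exp (∑ j ∈ Icc 1 k, (Yt (alg ω) h s a i sg t n m j - (Yt (alg ω) h s a i sg t n m j) ^ 2))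
        * Yt (alg ω) h s a i sg t n m (k + 1)) μ := by
      refine int_of_bdd hT (measE hT (k := k + 2) (by omega) _ (fun ω ω' hr => ?_))
      rw [det k (by omega) ω ω' (fun j a1 a2 => hr j a1 (by omega)),
        Yt_agr hr (by omega) hh s a i sg t n m (k + 1) (by omega) (by omega)]
    have z := step_zero hT hh s a i sg t (n := n) (m := m) hk1
      (fun ω => Real.exp (∑ j ∈ Icc 1 k, (Yt (alg ω) h s a i sg t n m j - (Yt (alg ω) h s a i sg t n m j) ^ 2)))
      (det k (by omega))
    calc _ ≤ ∫ ω, (Real.exp (∑ j ∈ Icc 1 k, (Yt (alg ω) h s a i sg t n m j - (Yt (alg ω) h s a i sg t n m j) ^ 2))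
          + Real.exp (∑ j ∈ Icc 1 k, (Yt (alg ω) h s a i sg t n m j - (Yt (alg ω) h s a i sg t n m j) ^ 2))
        * Yt (alg ω) h s a i sg t n m (k + 1)) ∂μ := by
          refine integral_mono (int (k + 1) hk) ((int k (by omega)).add iEY) (fun ω => ?_)
          have e := exp_ineq _ (abs_Yt (alg ω) hh s a i sg t hn hm hk1)
          have e2 := mul_le_mul_of_nonneg_left e (Real.exp_pos (∑ j ∈ Icc 1 k, (Yt (alg ω) h s a i sg t n m j - (Yt (alg ω) h s a i sg t n m j) ^ 2))).le
          beta_reduce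
          rw [Finset.sum_Icc_succ_top (by omega), Real.exp_add]
          linarith
      _ = _ := integral_add (int k (by omega)) iEY
      _ ≤ 1 := by rw [z, add_zero]; exact ih'

lemma tail [IsProbabilityMeasure μ] {h : ℕ} (hh : h ∈ Icc 1 M.H) (s : S) (a : A) (i : Fin 5) (sg t : Bool) {n m : ℕ}
    (hn : n ∈ Icc 1 K) (hm : m ∈ Icc 1 K) (x : ℝ) :
    μ.real {ω | ¬ (∑ k ∈ Icc 1 K, Yt (alg ω) h s a i sg t n m k
      ≤ ∑ k ∈ Icc 1 K, (Yt (alg ω) h s a i sg t n m k) ^ 2 + x)} ≤ Real.exp (-x) := by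
  obtain ⟨h1, h2⟩ := mgf hT hh s a i sg t hn hm K le_rfl
  have h3 := mul_meas_ge_le_integral_of_nonneg (Filter.Eventually.of_forall (fun ω => (Real.exp_pos _).le)) h1 (Real.exp x)
  have h4 : μ.real {ω | ¬ (∑ k ∈ Icc 1 K, Yt (alg ω) h s a i sg t n m k
      ≤ ∑ k ∈ Icc 1 K, (Yt (alg ω) h s a i sg t n m k) ^ 2 + x)} ≤
      μ.real {ω | Real.exp x ≤ Real.exp (∑ j ∈ Icc 1 K, (Yt (alg ω) h s a i sg t n m j - (Yt (alg ω) h s a i sg t n m j) ^ 2))} := by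
    refine measureReal_mono (fun ω hω => ?_)
    simp only [Set.mem_setOf_eq, not_le] at hω ⊢
    rw [Real.exp_le_exp, Finset.sum_sub_distrib]
    linarith
  refine h4.trans ?_
  rw [Real.exp_neg, ← one_div, le_div_iff₀ (Real.exp_pos _)]
  linarith

lemma good_prob [IsProbabilityMeasure μ] (h0 : 0 < δ) (h1 : δ < 1) (hK : 1 ≤ K) :
    μ.real {ω | ¬ Good (alg ω)} ≤ δ := by
  rcases subsingleton_or_nontrivial S with hS | hS
  · have : {ω | ¬ Good (alg ω)} = ∅ := by
      ext ω
      simp only [Set.mem_setOf_eq, Set.mem_empty_iff_false, iff_false, not_not]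
      intro h hh s a n hn m hm i sg t
      have hι := iota_nonneg (S := S) (A := A) hK M.H_pos h0 h1
      have z : ∀ k, Yt (alg ω) h s a i sg t n m k = 0 := by
        intro k; unfold Yt; rw [dev_subsingleton]; simp
      simp only [z]
      simp [hι]
    rw [this]; simp [h0.le]
  · set I : Finset (ℕ × (S × A) × ℕ × ℕ × Fin 5 × Bool × Bool) :=
      Icc 1 M.H ×ˢ univ ×ˢ Icc 1 K ×ˢ Icc 1 K ×ˢ univ with hI
    set B : (ℕ × (S × A) × ℕ × ℕ × Fin 5 × Bool × Bool) → Set Ω := fun p =>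
      {ω | ¬ (∑ k ∈ Icc 1 K, Yt (alg ω) p.1 p.2.1.1 p.2.1.2 p.2.2.2.2.1 p.2.2.2.2.2.1 p.2.2.2.2.2.2 p.2.2.1 p.2.2.2.1 k
      ≤ ∑ k ∈ Icc 1 K, (Yt (alg ω) p.1 p.2.1.1 p.2.1.2 p.2.2.2.2.1 p.2.2.2.2.2.1 p.2.2.2.2.2.2 p.2.2.1 p.2.2.2.1 k) ^ 2
        + 7 * iota S A K M.H δ)} with hB
    have sub : {ω | ¬ Good (alg ω)} ⊆ ⋃ p ∈ I, B p := by
      intro ω hω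
      simp only [Set.mem_setOf_eq, Good] at hω
      push Not at hω
      obtain ⟨h, hh, s, a, n, hn, m, hm, i, sg, t, hlt⟩ := hω
      simp only [Set.mem_iUnion]
      refine ⟨(h, (s, a), n, m, i, sg, t), ?_, ?_⟩
      · simp only [hI, Finset.mem_product, Finset.mem_univ, true_and, and_true]
        exact ⟨hh, hn, hm⟩
      · simp only [hB, Set.mem_setOf_eq, not_le]
        exact hlt
    have b1 : μ.real {ω | ¬ Good (alg ω)} ≤ ∑ p ∈ I, Real.exp (-(7 * iota S A K M.H δ)) := by
      refine (measureReal_mono sub (measure_ne_top _ _)).trans ((measureReal_biUnion_finset_le I B).trans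
        (Finset.sum_le_sum (fun p hp => ?_)))
      simp only [hI, Finset.mem_product, Finset.mem_univ, true_and, and_true] at hp
      exact tail hT hp.1 _ _ _ _ _ hp.2.1 hp.2.2 _
    refine b1.trans ?_
    rw [Finset.sum_const, nsmul_eq_mul]
    have hcard : (I.card : ℝ) = M.H * ((Fintype.card S * Fintype.card A) * (K * (K * 20))) := by
      rw [hI]
      simp only [Finset.card_product, Nat.card_Icc, Finset.card_univ, Fintype.card_prod, Fintype.card_fin,
        Fintype.card_bool, Nat.add_sub_cancel]
      push_cast
      ring
    rw [hcard]
    have a1 : (2 : ℝ) ≤ Fintype.card S := by exact_mod_cast Fintype.one_lt_card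
    have a2 : (1 : ℝ) ≤ Fintype.card A := by exact_mod_cast Fintype.card_pos
    have a3 : (1 : ℝ) ≤ K := by exact_mod_cast hK
    have a4 : (1 : ℝ) ≤ M.H := by exact_mod_cast M.H_pos
    set c : ℝ := (Fintype.card S : ℝ) * (Fintype.card A) with hc
    have c2 : 2 ≤ c := by nlinarith
    set y : ℝ := c * (K * M.H) with hy
    have kh : 1 ≤ (K : ℝ) * M.H := one_le_mul_of_one_le_of_one_le a3 a4
    have y2 : 2 ≤ y := by nlinarith
    have hx : 0 < y / δ := by positivity
    have e1 : Real.exp (-(7 * iota S A K M.H δ)) = (δ / y) ^ 7 := by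
      unfold iota
      rw [← hc, ← hy, show -(7 * Real.log (y / δ)) = ((7 : ℕ) : ℝ) * (- Real.log (y / δ)) by push_cast; ring,
        Real.exp_nat_mul, ← Real.log_inv, Real.exp_log (by positivity), inv_div]
    rw [e1]
    have e2 : (M.H : ℝ) * (c * (K * (K * 20))) ≤ 20 * y ^ 2 := by
      have : (1 : ℝ) ≤ c * M.H := by nlinarith
      have p : 0 ≤ c * K ^ 2 * M.H := by positivity
      rw [hy]
      nlinarith [mul_le_mul_of_nonneg_left this p]
    have yp : 0 < y := by linarith
    calc _ ≤ 20 * y ^ 2 * (δ / y) ^ 7 := mul_le_mul_of_nonneg_right e2 (by positivity)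
      _ = 20 * δ ^ 7 / y ^ 5 := by field_simp
      _ ≤ δ := by
        rw [div_le_iff₀ (by positivity)]
        have y5 : (2 : ℝ) ^ 5 ≤ y ^ 5 := pow_le_pow_left₀ (by norm_num) y2 5
        have d6 : δ ^ 6 ≤ 1 := pow_le_one₀ h0.le h1.le
        have : δ ^ 7 ≤ δ := by
          calc δ ^ 7 = δ * δ ^ 6 := by ring
            _ ≤ δ * 1 := mul_le_mul_of_nonneg_left d6 h0.le
            _ = δ := mul_one _
        norm_num at y5
        nlinarith [mul_le_mul_of_nonneg_left y5 h0.le]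

end meas
end QES

/-- **Regret decomposition** (Lemma 5 of the paper).
There is a universal constant `c₀ > 0` such that for any MDP, any `δ ∈ (0,1)` and any
bonus constant `cb ≥ c₀`, with probability at least `1 - δ` over the trajectories,
`∑_{k=1}^K (V_1^k(s_1^k) - V_1^{π^k}(s_1^k)) ≤ R₁ + R₂ + R₃`. -/
theorem regret_decomposition_of_QEarlySettledAdvantage :
    ∃ c₀ : ℝ, 0 < c₀ ∧
      ∀ (S A : Type) [Fintype S] [Fintype A] [Nonempty S] [Nonempty A]
        [DecidableEq S] [DecidableEq A]
        [MeasurableSpace S] [MeasurableSingletonClass S]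
        [MeasurableSpace A] [MeasurableSingletonClass A]
        (M : MDP S A) (K : ℕ) (cb δ : ℝ)
        (Ω : Type) (m0 : MeasurableSpace Ω) (μ : Measure Ω)
        (𝓕 : Filtration ℕ m0) (alg : Ω → QLAlg M K cb δ),
        IsProbabilityMeasure μ → 0 < δ → δ < 1 → 1 ≤ K → c₀ ≤ cb →
        IsMDPTrajectory μ M K 𝓕 (fun k h ω => (alg ω).st k h)
          (fun k h ω => (alg ω).ac k h) →
        1 - δ ≤ (μ {ω |
            ∑ k ∈ Icc 1 K,
                ((alg ω).V k 1 ((alg ω).st k 1)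
                  - M.Vpol ((alg ω).pol k) 1 ((alg ω).st k 1))
              ≤ regR1 M K cb δ (alg ω) + regR2 M K cb δ (alg ω)
                  + regR3 M K cb δ (alg ω)}).toReal := by
  refine ⟨1000, by norm_num, ?_⟩
  intro S A _ _ _ _ _ _ _ _ _ _ M K cb δ Ω m0 μ 𝓕 alg hμ h0 h1 hK hcb hT
  have hb := QES.good_prob hT h0 h1 hK
  set T : Set Ω := {ω | ∑ k ∈ Icc 1 K,
                ((alg ω).V k 1 ((alg ω).st k 1)
                  - M.Vpol ((alg ω).pol k) 1 ((alg ω).st k 1))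
              ≤ regR1 M K cb δ (alg ω) + regR2 M K cb δ (alg ω)
                  + regR3 M K cb δ (alg ω)} with hTd
  change 1 - δ ≤ μ.real T
  have hsub : (Set.univ : Set Ω) ⊆ T ∪ {ω | ¬ QES.Good (alg ω)} := by
    intro ω _
    by_cases hg : QES.Good (alg ω)
    · left; exact QES.regret_good (alg ω) hg hK h0 h1 hcb
    · right; exact hg
  have h2 : μ.real Set.univ ≤ μ.real T + μ.real {ω | ¬ QES.Good (alg ω)} :=
    (measureReal_mono hsub).trans (measureReal_union_le _ _)
  rw [probReal_univ] at h2
  linarith
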